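/- Fix a prime p and an integer n ≥ 1, set e_n = p^n − 1, and fix an algebraic closure Ω of ℚ_p. Let K ⊆ Ω be a finite extension of ℚ_p of degree d = [K : ℚ_p], let K_n = K(ζ) where ζ ∈ Ω is a primitive e_n-th root of unity, let L_n ⊆ Ω be the field generated over K_n by all x ∈ Ω with x^{e_n} ∈ K_n, and let G_n = Gal(L_n / K). Then there is an isomorphism of F_p[G_n]-modules between the quotient group L_n^× / (L_n^×)^p (with the G_n-action induced by the Galois action) and the direct sum μ_p(L_n) ⊕ F_p[G_n]^d ⊕ F_p, where μ_p(L_n) is the group of p-th roots of unity in L_n with its natural G_n-action, F_p[G_n] is the group algebra with G_n acting by left multiplication, and G_n acts trivially on the last summand F_p. -/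

import Mathlib

/-! ### Part 1: finite modules -/

theorem LF_homDecomp {R X A : Type} [Ring R] [AddCommGroup X] [Module R X] [Finite X]
    [AddCommGroup A] [Module R A] [Finite A] [Fintype (Submodule R X)] :
    Nat.card (X →ₗ[R] A) =
      ∑ N : Submodule R X, Nat.card {g : (X ⧸ N) →ₗ[R] A // Function.Injective g} := by
  classical
  have : Finite (X →ₗ[R] A) := Finite.of_injective _ DFunLike.coe_injective
  have hf : ∀ N : Submodule R X, Finite ((X ⧸ N) →ₗ[R] A) := fun N => by
    have : Finite (X ⧸ N) := Finite.of_surjective _ N.mkQ_surjective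
    exact Finite.of_injective _ DFunLike.coe_injective
  rw [← Nat.card_sigma]
  refine Nat.card_congr
    { toFun := fun f => ⟨LinearMap.ker f, (LinearMap.ker f).liftQ f le_rfl, ?_⟩
      invFun := fun g => g.2.1.comp g.1.mkQ
      left_inv := ?_
      right_inv := ?_ }
  · rw [← LinearMap.ker_eq_bot]
    exact Submodule.ker_liftQ_eq_bot _ _ _ le_rfl
  · intro f
    exact Submodule.liftQ_mkQ _ _ _
  · rintro ⟨N, g, hg⟩
    have hN : LinearMap.ker (g.comp N.mkQ) = N := by
      rw [LinearMap.ker_comp, LinearMap.ker_eq_bot.mpr hg]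
      simp
    have key : ∀ (N' : Submodule R X) (h : N' = N) (h1 : N' ≤ LinearMap.ker (g.comp N.mkQ))
        (h2 : Function.Injective (N'.liftQ (g.comp N.mkQ) h1)),
        (⟨N', ⟨N'.liftQ (g.comp N.mkQ) h1, h2⟩⟩ :
          Σ N : Submodule R X, {g : (X ⧸ N) →ₗ[R] A // Function.Injective g}) = ⟨N, g, hg⟩ := by
      rintro N' rfl h1 h2
      congr 2
      ext x
      simp
    exact key _ hN _ _

theorem LF_injCard {R A B : Type} [Ring R]
    [AddCommGroup A] [Module R A] [Finite A] [AddCommGroup B] [Module R B] [Finite B]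
    (h : ∀ (X : Type) [AddCommGroup X] [Module R X] [Finite X],
      Nat.card (X →ₗ[R] A) = Nat.card (X →ₗ[R] B)) (n : ℕ) :
    ∀ (X : Type) [AddCommGroup X] [Module R X] [Finite X], Nat.card X = n →
      Nat.card {g : X →ₗ[R] A // Function.Injective g} =
        Nat.card {g : X →ₗ[R] B // Function.Injective g} := by
  induction n using Nat.strong_induction_on with
  | _ n ih =>
    intro X _ _ _ hX
    classical
    have : Finite (Submodule R X) := Finite.of_injective _ SetLike.coe_injective
    have : Fintype (Submodule R X) := Fintype.ofFinite _
    have h0 := h X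
    rw [LF_homDecomp, LF_homDecomp, ← Finset.add_sum_erase _ _ (Finset.mem_univ ⊥),
      ← Finset.add_sum_erase _ _ (Finset.mem_univ ⊥)] at h0
    rw [Finset.sum_congr rfl (g := fun N : Submodule R X =>
      Nat.card {g : (X ⧸ N) →ₗ[R] B // Function.Injective g})] at h0
    · have h1 := Nat.add_right_cancel h0
      have tr : ∀ (C : Type) [AddCommGroup C] [Module R C],
          Nat.card {g : (X ⧸ (⊥ : Submodule R X)) →ₗ[R] C // Function.Injective g} =
          Nat.card {g : X →ₗ[R] C // Function.Injective g} := by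
        intro C _ _
        let e := Submodule.quotEquivOfEqBot (⊥ : Submodule R X) rfl
        refine Nat.card_congr
          { toFun := fun g => ⟨g.1.comp e.symm.toLinearMap, g.2.comp e.symm.injective⟩
            invFun := fun g => ⟨g.1.comp e.toLinearMap, g.2.comp e.injective⟩
            left_inv := fun g => by
              apply Subtype.ext
              apply LinearMap.ext
              intro x
              exact congrArg g.1 (e.symm_apply_apply x)
            right_inv := fun g => by
              apply Subtype.ext
              apply LinearMap.ext
              intro x
              exact congrArg g.1 (e.apply_symm_apply x) }
      rw [tr, tr] at h1
      exact h1
    · intro N hN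
      have : Finite (X ⧸ N) := Finite.of_surjective _ N.mkQ_surjective
      have hN0 : N ≠ ⊥ := (Finset.mem_erase.mp hN).1
      refine ih (Nat.card (X ⧸ N)) ?_ _ rfl
      rw [← hX, Submodule.card_eq_card_quotient_mul_card N]
      have h1 : 1 < Nat.card N := by
        rw [Finite.one_lt_card_iff_nontrivial]
        exact (Submodule.nontrivial_iff_ne_bot).mpr hN0
      have h2 : 0 < Nat.card (X ⧸ N) := Nat.card_pos
      nlinarith

/-- Lovász: finite modules are determined by hom counts. -/
theorem LF_lovasz {R A B : Type} [Ring R]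
    [AddCommGroup A] [Module R A] [Finite A] [AddCommGroup B] [Module R B] [Finite B]
    (h : ∀ (X : Type) [AddCommGroup X] [Module R X] [Finite X],
      Nat.card (X →ₗ[R] A) = Nat.card (X →ₗ[R] B)) : Nonempty (A ≃ₗ[R] B) := by
  have fin : ∀ (C D : Type) [AddCommGroup C] [Module R C] [AddCommGroup D] [Module R D]
    [Finite C] [Finite D], Finite {g : C →ₗ[R] D // Function.Injective g} := by
    intro C D _ _ _ _ _ _
    have : Finite (C →ₗ[R] D) := Finite.of_injective _ DFunLike.coe_injective
    infer_instance
  have h1 := LF_injCard h _ A rfl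
  have h2 := LF_injCard h _ B rfl
  have f1 : Nonempty {g : A →ₗ[R] B // Function.Injective g} := by
    have := fin A A
    have := fin A B
    have : Nonempty {g : A →ₗ[R] A // Function.Injective g} :=
      ⟨LinearMap.id, Function.injective_id⟩
    rw [← Finite.card_pos_iff, ← h1]
    exact Nat.card_pos
  have f2 : Nonempty {g : B →ₗ[R] A // Function.Injective g} := by
    have := fin B B
    have := fin B A
    have : Nonempty {g : B →ₗ[R] B // Function.Injective g} :=
      ⟨LinearMap.id, Function.injective_id⟩
    rw [← Finite.card_pos_iff, h2]
    exact Nat.card_pos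
  obtain ⟨f, hf⟩ := f1
  obtain ⟨g, hg⟩ := f2
  have hc : Nat.card A = Nat.card B :=
    le_antisymm (Nat.card_le_card_of_injective f hf) (Nat.card_le_card_of_injective g hg)
  exact ⟨LinearEquiv.ofBijective f ((Nat.bijective_iff_injective_and_card f).mpr ⟨hf, hc⟩)⟩

theorem LF_split {R M V : Type} [Ring R] [AddCommGroup M] [Module R M] [AddCommGroup V]
    [Module R V] [Module.Projective R V] (F F' : Submodule R M) (hle : F' ≤ F)
    (q : F →ₗ[R] V) (hq : Function.Surjective q) (hker : ∀ x : F, q x = 0 ↔ (x : M) ∈ F') :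
    Nonempty (F ≃ₗ[R] F' × V) := by
  obtain ⟨s, hs⟩ := Module.projective_lifting_property q LinearMap.id hq
  have hs' : ∀ v, q (s v) = v := fun v => LinearMap.congr_fun hs v
  let f : (F' × V) →ₗ[R] F := (Submodule.inclusion hle).coprod s
  refine ⟨(LinearEquiv.ofBijective f ⟨?_, ?_⟩).symm⟩
  · rw [injective_iff_map_eq_zero]
    rintro ⟨a, v⟩ h
    have h0 : q (f (a, v)) = 0 := by rw [h, map_zero]
    have ha : q (Submodule.inclusion hle a) = 0 := (hker _).mpr a.2
    have hv : v = 0 := by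
      simpa [f, ha, hs'] using h0
    subst hv
    have h3 : Submodule.inclusion hle a = 0 := by simpa [f] using h
    have h4 : a = 0 := Submodule.inclusion_injective hle (by simpa using h3)
    rw [h4]; rfl
  · intro x
    have : ((x - s (q x) : F) : M) ∈ F' := (hker _).mp (by simp [hs'])
    refine ⟨(⟨_, this⟩, q x), ?_⟩
    apply Subtype.ext
    simp [f]

theorem LF_cardHom_prod {R X A B : Type} [Ring R] [AddCommGroup X] [Module R X]
    [AddCommGroup A] [Module R A] [AddCommGroup B] [Module R B] :
    Nat.card (X →ₗ[R] A × B) = Nat.card (X →ₗ[R] A) * Nat.card (X →ₗ[R] B) := by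
  rw [← Nat.card_prod]
  exact Nat.card_congr (LinearMap.prodEquiv ℕ).toEquiv.symm

theorem LF_cardHom_pi {R X ι : Type} [Fintype ι] [Ring R] [AddCommGroup X] [Module R X]
    (A : ι → Type) [∀ i, AddCommGroup (A i)] [∀ i, Module R (A i)] :
    Nat.card (X →ₗ[R] ((i : ι) → A i)) = ∏ i, Nat.card (X →ₗ[R] A i) := by
  rw [← Nat.card_pi]
  exact Nat.card_congr
    { toFun := fun f i => (LinearMap.proj i).comp f
      invFun := fun f => LinearMap.pi f
      left_inv := fun f => rfl
      right_inv := fun f => rfl }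

theorem LF_cardHom_congr {R X A B : Type} [Ring R] [AddCommGroup X] [Module R X]
    [AddCommGroup A] [Module R A] [AddCommGroup B] [Module R B] (e : A ≃ₗ[R] B) :
    Nat.card (X →ₗ[R] A) = Nat.card (X →ₗ[R] B) := 
  Nat.card_congr
    { toFun := fun g => e.toLinearMap.comp g
      invFun := fun g => e.symm.toLinearMap.comp g
      left_inv := fun g => LinearMap.ext fun x => e.symm_apply_apply _
      right_inv := fun g => LinearMap.ext fun x => e.apply_symm_apply _ }

/-- chain of submodules -/
theorem LF_chain {R M : Type} [Ring R] [AddCommGroup M] [Module R M] 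
    (F : ℕ → Submodule R M) (V : ℕ → Type) [∀ i, AddCommGroup (V i)] [∀ i, Module R (V i)]
    (S : ℕ → Prop) [DecidablePred S] (N : ℕ) 
    (h0 : ∀ i < N, ¬ S i → F i = F (i + 1))
    (h1 : ∀ i < N, S i → Nonempty (F i ≃ₗ[R] F (i + 1) × V i))
    (X : Type) [AddCommGroup X] [Module R X] :
    Nat.card (X →ₗ[R] F 0) = Nat.card (X →ₗ[R] F N) *
      ∏ i ∈ (Finset.range N).filter S, Nat.card (X →ₗ[R] V i) := by
  induction N with
  | zero => simp
  | succ N ih =>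
    rw [ih (fun i hi => h0 i (by omega)) (fun i hi => h1 i (by omega)), Finset.range_add_one,
      Finset.filter_insert]
    by_cases hS : S N
    · obtain ⟨e⟩ := h1 N (by omega) hS
      rw [if_pos hS, Finset.prod_insert (by simp), LF_cardHom_congr e, LF_cardHom_prod]
      ring
    · rw [if_neg hS, h0 N (by omega) hS]

/-! ### Part 2: semilinear counting -/

theorem LF_dual (C k : Type) [Group C] [Fintype C] [DecidableEq C] [Field k]
    [MulSemiringAction C k] [FaithfulSMul C k] :
    ∃ b b' : C → k, (∀ i j, ∑ s : C, s • (b' i * b j) = if i = j then 1 else 0) ∧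
      (∀ s : C, ∑ j, b j * s • b' j = if s = 1 then 1 else 0) := by
  have hfin : FiniteDimensional (FixedPoints.subfield C k) k := inferInstance
  have hgal : IsGalois (FixedPoints.subfield C k) k := IsGalois.of_fixed_field k C
  have hrank := FixedPoints.finrank_eq_card C k
  let B : Module.Basis C (FixedPoints.subfield C k) k :=
    (Module.finBasisOfFinrankEq _ _ hrank).reindex (Fintype.equivFin C).symm
  let D := (Algebra.traceForm (FixedPoints.subfield C k) k).dualBasis
    (traceForm_nondegenerate _ _) B
  have h1 : ∀ i j, ∑ s : C, s • (D i * B j) = if i = j then 1 else 0 := by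
    intro i j
    have h := LinearMap.BilinForm.apply_dualBasis_left
      (traceForm_nondegenerate (FixedPoints.subfield C k) k) B i j
    have h2 := congrArg (algebraMap (FixedPoints.subfield C k) k) h
    rw [Algebra.traceForm_apply, trace_eq_sum_automorphisms] at h2
    rw [← Equiv.sum_comp (FixedPoints.toAlgAutMulEquiv C k).toEquiv] at h2
    have h3 : (∑ s : C, s • (D i * B j)) = _ := h2
    rw [h3]
    by_cases hij : i = j
    · simp [hij]
    · rw [if_neg hij, if_neg (Ne.symm hij), map_zero]
  refine ⟨B, D, h1, ?_⟩
  let N : Matrix C C k := fun i s => s • D i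
  let M : Matrix C C k := fun s j => s • B j
  have hNM : N * M = 1 := by
    ext i j
    rw [Matrix.mul_apply, Matrix.one_apply, ← h1 i j]
    exact Finset.sum_congr rfl fun s _ => (smul_mul' s _ _).symm
  have hMN : M * N = 1 := mul_eq_one_comm.mp hNM
  intro s
  have h4 := congrFun (congrFun hMN 1) s
  rw [Matrix.mul_apply, Matrix.one_apply] at h4
  have h5 : (∑ j, M 1 j * N j s) = ∑ j, B j * s • D j :=
    Finset.sum_congr rfl fun j _ => by simp [M, N]
  rw [← h5, h4]
  by_cases hs : s = 1
  · simp [hs]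
  · rw [if_neg hs, if_neg (Ne.symm hs)]

theorem LF_speiser0 (C k Y : Type) [Group C] [Finite C] [Field k] [MulSemiringAction C k]
    [FaithfulSMul C k] [AddCommGroup Y] [Module k Y] [DistribMulAction C Y]
    (hs : ∀ (c : C) (a : k) (y : Y), c • (a • y) = (c • a) • (c • y)) :
    Nat.card {y : Y // ∀ c : C, c • y = y} ^ Nat.card C = Nat.card Y := by
  classical
  have : Fintype C := Fintype.ofFinite C
  obtain ⟨b, b', h1, h2⟩ := LF_dual C k
  rw [Nat.card_eq_fintype_card (α := C)]
  have e : (C → {y : Y // ∀ c : C, c • y = y}) ≃ Y :=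
    { toFun := fun f => ∑ j, b j • (f j : Y)
      invFun := fun y j => ⟨∑ c : C, c • (b' j • y), fun c => by
        rw [Finset.smul_sum]
        exact Fintype.sum_equiv (Equiv.mulLeft c) _ _ fun x => by simp [mul_smul]⟩
      left_inv := by
        intro f
        funext i
        apply Subtype.ext
        simp only
        simp_rw [Finset.smul_sum, smul_smul]
        rw [Finset.sum_comm]
        have : ∀ j, ∑ c : C, c • ((b' i * b j) • (f j : Y)) =
            (∑ c : C, c • (b' i * b j)) • (f j : Y) := by
          intro j
          rw [Finset.sum_smul]
          exact Finset.sum_congr rfl fun c _ => by rw [hs, (f j).2]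
        simp_rw [this, h1]
        simp
      right_inv := by
        intro y
        simp only
        simp_rw [hs, Finset.smul_sum, smul_smul]
        rw [Finset.sum_comm]
        simp_rw [← Finset.sum_smul, h2]
        simp }
  rw [← Nat.card_congr e, Nat.card_fun, Nat.card_eq_fintype_card (α := C)]

/-- The submodule of vectors fixed by the kernel. -/
def LF_fixI {G k Y : Type} [Group G] [Field k] [AddCommGroup Y] [Module k Y]
    (a : G →* (k ≃+* k)) (T : G →* AddMonoid.End Y)
    (hs : ∀ (c : G) (x : k) (y : Y), T c (x • y) = (a c x) • (T c y)) : Submodule k Y where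
  carrier := {y | ∀ g ∈ a.ker, T g y = y}
  zero_mem' := fun g _ => map_zero _
  add_mem' := fun {y z} hy hz g hg => by rw [map_add, hy g hg, hz g hg]
  smul_mem' := fun c y hy g hg => by
    have : a g = 1 := hg
    rw [hs, hy g hg, this]
    rfl

theorem LF_speiser {G k Y : Type} [Group G] [Finite G] [Field k] [AddCommGroup Y] [Module k Y]
    (a : G →* (k ≃+* k)) (T : G →* AddMonoid.End Y)
    (hs : ∀ (c : G) (x : k) (y : Y), T c (x • y) = (a c x) • (T c y)) :
    Nat.card {y : Y // ∀ c : G, T c y = y} ^ a.ker.index = Nat.card (LF_fixI a T hs) := by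
  have hmul : ∀ g h y, T (g * h) y = T g (T h y) := fun g h y => by rw [map_mul]; rfl
  have hst : ∀ g, ∀ y ∈ LF_fixI a T hs, T g y ∈ LF_fixI a T hs := by
    intro g y hy h hh
    have h1 := hy (g⁻¹ * h * g) (Subgroup.Normal.conj_mem' inferInstance h hh g)
    rw [← hmul]
    conv_rhs => rw [← h1]
    rw [← hmul]
    congr 2
    group
  let TI : G →* AddMonoid.End (LF_fixI a T hs) :=
    { toFun := fun g =>
        { toFun := fun y => ⟨T g y, hst g y y.2⟩
          map_zero' := by ext; simp
          map_add' := fun y z => by ext; simp }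
      map_one' := by
        apply AddMonoidHom.ext
        intro y
        apply Subtype.ext
        change T 1 y = y
        rw [map_one]; rfl
      map_mul' := fun g h => by
        apply AddMonoidHom.ext
        intro y
        apply Subtype.ext
        exact hmul g h y }
  let TQ : (G ⧸ a.ker) →* AddMonoid.End (LF_fixI a T hs) := QuotientGroup.lift a.ker TI (by
    intro g hg
    apply AddMonoidHom.ext
    intro y
    apply Subtype.ext
    exact y.2 g hg)
  let aQ : (G ⧸ a.ker) →* (k ≃+* k) := QuotientGroup.kerLift a
  letI i1 : MulSemiringAction (G ⧸ a.ker) k := MulSemiringAction.compHom k aQ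
  letI i2 : DistribMulAction (G ⧸ a.ker) (LF_fixI a T hs) := DistribMulAction.compHom _ TQ
  haveI i3 : FaithfulSMul (G ⧸ a.ker) k := ⟨fun {x y} hxy => by
    apply QuotientGroup.kerLift_injective a
    ext z
    exact hxy z⟩
  have key := LF_speiser0 (G ⧸ a.ker) k (LF_fixI a T hs) (by
    intro c x y
    obtain ⟨g, rfl⟩ := QuotientGroup.mk_surjective c
    apply Subtype.ext
    exact hs g x y)
  rw [← key]
  have e : {y : Y // ∀ c : G, T c y = y} ≃
      {y : LF_fixI a T hs // ∀ c : G ⧸ a.ker, c • y = y} :=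
    { toFun := fun y => ⟨⟨y.1, fun g _ => y.2 g⟩, fun c => by
        obtain ⟨g, rfl⟩ := QuotientGroup.mk_surjective c
        apply Subtype.ext
        exact y.2 g⟩
      invFun := fun y => ⟨y.1.1, fun g => congrArg Subtype.val (y.2 (QuotientGroup.mk g))⟩
      left_inv := fun _ => rfl
      right_inv := fun _ => rfl }
  rw [Nat.card_congr e]
  rfl

theorem LF_eigen {k Y : Type} [Field k] [AddCommGroup Y] [Module k Y] [FiniteDimensional k Y]
    (T : Module.End k Y) (s : Finset k) :
    Module.finrank k (LinearMap.ker (Polynomial.aeval T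
      (∏ c ∈ s, (Polynomial.X - Polynomial.C c)))) =
    ∑ c ∈ s, Module.finrank k (LinearMap.ker (T - algebraMap k (Module.End k Y) c)) := by
  classical
  induction s using Finset.induction_on with
  | empty =>
    rw [Finset.prod_empty, map_one, Module.End.one_eq_id, LinearMap.ker_id, finrank_bot,
      Finset.sum_empty]
  | insert c s hc ih =>
    rw [Finset.prod_insert hc, Finset.sum_insert hc, ← ih]
    have hcop : IsCoprime (Polynomial.X - Polynomial.C c)
        (∏ c ∈ s, (Polynomial.X - Polynomial.C c)) := by
      apply IsCoprime.prod_right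
      intro d hd
      apply Polynomial.isCoprime_X_sub_C_of_isUnit_sub
      rw [isUnit_iff_ne_zero, sub_ne_zero]
      rintro rfl
      exact hc hd
    rw [← Polynomial.sup_ker_aeval_eq_ker_aeval_mul_of_coprime T hcop]
    have h := Submodule.finrank_sup_add_finrank_inf_eq
      (LinearMap.ker (Polynomial.aeval T (Polynomial.X - Polynomial.C c)))
      (LinearMap.ker (Polynomial.aeval T (∏ c ∈ s, (Polynomial.X - Polynomial.C c))))
    rw [(Polynomial.disjoint_ker_aeval_of_isCoprime T hcop).eq_bot, finrank_bot, add_zero] at h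
    rw [h]
    have h2 : Polynomial.aeval T (Polynomial.X - Polynomial.C c) =
        T - algebraMap k (Module.End k Y) c := by simp
    rw [h2]

theorem LF_eigen_root {k Y : Type} [Field k] [AddCommGroup Y] [Module k Y]
    [FiniteDimensional k Y] (T : Module.End k Y) (t : ℕ) (ht : 0 < t) (w : k)
    (hw : IsPrimitiveRoot w t) (hT : T ^ t = 1) :
    ∑ i ∈ Finset.range t, Module.finrank k
      (LinearMap.ker (T - algebraMap k (Module.End k Y) (w ^ i))) = Module.finrank k Y := by
  classical
  have hinj : Set.InjOn (fun i => w ^ i) (Finset.range t : Set ℕ) := by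
    intro i hi j hj hij
    exact hw.pow_inj (by simpa using hi) (by simpa using hj) hij
  have him : (Finset.range t).image (fun i => w ^ i) = Polynomial.nthRootsFinset t 1 := by
    apply Finset.eq_of_subset_of_card_le
    · intro x hx
      obtain ⟨i, -, rfl⟩ := Finset.mem_image.mp hx
      rw [Polynomial.mem_nthRootsFinset ht]
      rw [← pow_mul, mul_comm, pow_mul, hw.pow_eq_one, one_pow]
    · rw [Finset.card_image_of_injOn hinj, hw.card_nthRootsFinset, Finset.card_range]
  have h := LF_eigen T (Polynomial.nthRootsFinset t (1 : k))
  rw [← Polynomial.X_pow_sub_one_eq_prod ht hw, ← him, Finset.sum_image hinj] at h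
  rw [← h]
  have h2 : Polynomial.aeval T (Polynomial.X ^ t - 1 : Polynomial k) = 0 := by simp [hT]
  rw [h2, LinearMap.ker_zero, finrank_top]

theorem LF_periodic (t : ℕ) (h : ℕ → ℕ) (hper : ∀ i, h (i + t) = h i) (a m : ℕ) :
    ∑ i ∈ Finset.range (t * m), h (a + i) = m * ∑ i ∈ Finset.range t, h i := by
  have h1 : ∀ a, ∑ i ∈ Finset.range t, h (a + i) = ∑ i ∈ Finset.range t, h i := by
    intro a
    induction a with
    | zero => simp
    | succ a ih =>
      rw [← ih]
      have e1 := Finset.sum_range_succ' (fun i => h (a + i)) t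
      have e2 := Finset.sum_range_succ (fun i => h (a + i)) t
      rw [e2, hper, add_zero] at e1
      have e3 := Nat.add_right_cancel e1
      rw [e3]
      exact Finset.sum_congr rfl fun i _ => by congr 1; ring
  induction m with
  | zero => simp
  | succ m ih =>
    rw [Nat.mul_succ, Finset.sum_range_add, ih]
    simp_rw [← add_assoc]
    rw [h1 (a + t * m)]
    ring

/-! ### Part 3: modules over the group algebra -/

/-- Build a module over the group algebra from an action by additive endomorphisms. -/
@[reducible] noncomputable def LF_mod (p : ℕ) [Fact p.Prime] (G M : Type) [Group G] [AddCommGroup M]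
    (φ : G →* AddMonoid.End M) (h : ∀ x : M, p • x = 0) :
    Module (MonoidAlgebra (ZMod p) G) M :=
  letI : Module (ZMod p) M := AddCommGroup.zmodModule h
  Module.compHom M (MonoidAlgebra.liftNCRingHom (Module.toAddMonoidEnd (ZMod p) M) φ (by
    intro x g
    apply AddMonoidHom.ext
    intro m
    change x • φ g m = φ g (x • m)
    exact ((φ g).toZModLinearMap p).map_smul x m |>.symm))

theorem LF_mod_smul (p : ℕ) [Fact p.Prime] (G M : Type) [Group G] [AddCommGroup M]
    (φ : G →* AddMonoid.End M) (h : ∀ x : M, p • x = 0) (g : G) (x : M) :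
    letI := LF_mod p G M φ h
    (MonoidAlgebra.single g (1 : ZMod p)) • x = φ g x := by
  letI : Module (ZMod p) M := AddCommGroup.zmodModule h
  change (MonoidAlgebra.liftNC ((Module.toAddMonoidEnd (ZMod p) M : ZMod p →+* AddMonoid.End M) :
    ZMod p →+ AddMonoid.End M) φ (MonoidAlgebra.single g (1 : ZMod p)) : AddMonoid.End M) x = φ g x
  rw [MonoidAlgebra.liftNC_single]
  change (1 : ZMod p) • φ g x = φ g x
  rw [one_smul]

theorem LF_p_smul (p : ℕ) [Fact p.Prime] {G M : Type} [Group G] [AddCommGroup M]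
    [Module (MonoidAlgebra (ZMod p) G) M] (x : M) : p • x = 0 := by
  have h : ((p : MonoidAlgebra (ZMod p) G)) • x = 0 := by
    rw [← map_natCast (algebraMap (ZMod p) (MonoidAlgebra (ZMod p) G)) p]
    simp
  rwa [Nat.cast_smul_eq_nsmul] at h

theorem LF_single_smul (p : ℕ) [Fact p.Prime] {G M : Type} [Group G] [AddCommGroup M]
    [Module (MonoidAlgebra (ZMod p) G) M] (g : G) (a : ZMod p) (x : M) :
    (MonoidAlgebra.single g a) • x = a.val • (MonoidAlgebra.single g (1 : ZMod p)) • x := by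
  rw [← Nat.cast_smul_eq_nsmul (MonoidAlgebra (ZMod p) G), smul_smul]
  congr 1
  rw [← nsmul_eq_mul, MonoidAlgebra.smul_single]
  simp

/-- equivariant additive maps are linear. -/
def LF_lin (p : ℕ) [Fact p.Prime] {G M N : Type} [Group G] [AddCommGroup M] [AddCommGroup N]
    [Module (MonoidAlgebra (ZMod p) G) M] [Module (MonoidAlgebra (ZMod p) G) N]
    (f : M →+ N) (h : ∀ (g : G) (x : M), f (MonoidAlgebra.single g (1 : ZMod p) • x) =
      MonoidAlgebra.single g (1 : ZMod p) • f x) : M →ₗ[MonoidAlgebra (ZMod p) G] N where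
  toFun := f
  map_add' := f.map_add
  map_smul' := by
    intro r x
    rw [RingHom.id_apply]
    induction r using MonoidAlgebra.induction_linear with
    | zero => simp
    | add r s hr hs => rw [add_smul, add_smul, map_add, hr, hs]
    | single g a => rw [LF_single_smul, LF_single_smul p g a (f x), map_nsmul, h]

theorem LF_lin_apply (p : ℕ) [Fact p.Prime] {G M N : Type} [Group G] [AddCommGroup M]
    [AddCommGroup N]
    [Module (MonoidAlgebra (ZMod p) G) M] [Module (MonoidAlgebra (ZMod p) G) N]
    (f : M →+ N) (h : ∀ (g : G) (x : M), f (MonoidAlgebra.single g (1 : ZMod p) • x) =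
      MonoidAlgebra.single g (1 : ZMod p) • f x) (x : M) : LF_lin p f h x = f x := rfl

theorem LF_single_mul_smul (p : ℕ) [Fact p.Prime] {G M : Type} [Group G] [AddCommGroup M]
    [Module (MonoidAlgebra (ZMod p) G) M] (g h : G) (x : M) :
    (MonoidAlgebra.single (g * h) (1 : ZMod p)) • x =
      MonoidAlgebra.single g (1 : ZMod p) • MonoidAlgebra.single h (1 : ZMod p) • x := by
  rw [smul_smul, MonoidAlgebra.single_mul_single, one_mul]

theorem LF_single_one_smul (p : ℕ) [Fact p.Prime] {G M : Type} [Group G] [AddCommGroup M]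
    [Module (MonoidAlgebra (ZMod p) G) M] (x : M) :
    (MonoidAlgebra.single (1 : G) (1 : ZMod p)) • x = x := by
  rw [← MonoidAlgebra.one_def, one_smul]

theorem LF_card_addHom0 (p : ℕ) [Fact p.Prime] (X k : Type) [AddCommGroup X] [Module (ZMod p) X]
    [Finite X] [Field k] [Algebra (ZMod p) k] [Finite k] :
    ∃ m, Nat.card X = p ^ m ∧ Nat.card (X →+ k) = Nat.card k ^ m := by
  have : Module.Finite (ZMod p) X := Module.Finite.of_finite
  have : Module.Finite (ZMod p) k := Module.Finite.of_finite
  have e2 : (X →+ k) ≃ (X →ₗ[ZMod p] k) :=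
    { toFun := fun f => f.toZModLinearMap p
      invFun := fun f => f.toAddMonoidHom
      left_inv := fun f => rfl
      right_inv := fun f => rfl }
  refine ⟨Module.finrank (ZMod p) X, ?_, ?_⟩
  · rw [Module.natCard_eq_pow_finrank (K := ZMod p) (V := X), Nat.card_zmod]
  · rw [Nat.card_congr e2, Module.natCard_eq_pow_finrank (K := ZMod p) (V := X →ₗ[ZMod p] k),
      Module.natCard_eq_pow_finrank (K := ZMod p) (V := k), Module.finrank_linearMap, ← pow_mul,
      mul_comm]

theorem LF_card_addHom (p : ℕ) [Fact p.Prime] (X k : Type) [AddCommGroup X]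
    (hX : ∀ x : X, p • x = 0) [Finite X] [Field k] [CharP k p] [Finite k] :
    ∃ m, Nat.card X = p ^ m ∧ Nat.card (X →+ k) = Nat.card k ^ m := by
  let iX : Module (ZMod p) X := AddCommGroup.zmodModule hX
  let ik : Algebra (ZMod p) k := ZMod.algebra k p
  exact LF_card_addHom0 p X k

theorem LF_cardHom_self (p : ℕ) [Fact p.Prime] {G X : Type} [Group G] [Finite G] [AddCommGroup X]
    [Module (MonoidAlgebra (ZMod p) G) X] [Finite X] :
    Nat.card (X →ₗ[MonoidAlgebra (ZMod p) G] MonoidAlgebra (ZMod p) G) = Nat.card X := by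
  classical
  have : Fintype G := Fintype.ofFinite G
  have e : (X →ₗ[MonoidAlgebra (ZMod p) G] MonoidAlgebra (ZMod p) G) ≃ (X →+ ZMod p) :=
    { toFun := fun f =>
        { toFun := fun x => (f x).coeff 1
          map_zero' := by simp
          map_add' := by intro x y; simp }
      invFun := fun φ => LF_lin p
        { toFun := fun x => ∑ g : G, MonoidAlgebra.single g
            (φ (MonoidAlgebra.single g⁻¹ (1 : ZMod p) • x))
          map_zero' := by simp
          map_add' := by intro x y; simp [smul_add, MonoidAlgebra.single_add, Finset.sum_add_distrib] } (by
          intro h x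
          simp only [AddMonoidHom.coe_mk, ZeroHom.coe_mk, smul_eq_mul, Finset.mul_sum]
          symm
          refine Fintype.sum_equiv (Equiv.mulLeft h) _ _ fun g => ?_
          rw [MonoidAlgebra.single_mul_single, one_mul, ← LF_single_mul_smul]
          simp)
      left_inv := by
        intro f
        apply LinearMap.ext
        intro x
        rw [LF_lin_apply]
        simp only [AddMonoidHom.coe_mk, ZeroHom.coe_mk, map_smul, smul_eq_mul]
        ext g
        simp [MonoidAlgebra.coeff_sum, Finsupp.single_apply]
      right_inv := by
        intro φ
        ext x
        simp [LF_lin_apply, MonoidAlgebra.coeff_sum, Finsupp.single_apply,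
          LF_single_one_smul] }
  rw [Nat.card_congr e]
  obtain ⟨m, h1, h2⟩ := LF_card_addHom p X (ZMod p) (LF_p_smul p (G := G))
  rw [h1, h2, Nat.card_zmod]

/-- Twisting data. -/
structure LF_Tw (G k : Type) [Group G] [Field k] where
  a : G →* (k ≃+* k)
  th : G → k
  th_ne : ∀ g, th g ≠ 0
  th_mul : ∀ g h, th (g * h) = th g * a g (th h)

theorem LF_Tw.th_one {G k : Type} [Group G] [Field k] (D : LF_Tw G k) : D.th 1 = 1 := by
  have h := D.th_mul 1 1
  rw [mul_one, map_one] at h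
  have h2 : D.th 1 * 1 = D.th 1 * D.th 1 := by rw [mul_one]; exact h
  exact (mul_left_cancel₀ (D.th_ne 1) h2).symm

/-- The twisted action. -/
def LF_Tw.act {G k : Type} [Group G] [Field k] (D : LF_Tw G k) (i : ℕ) :
    G →* AddMonoid.End k where
  toFun := fun g => (AddMonoidHom.mulLeft (D.th g ^ i)).comp (D.a g : k →+ k)
  map_one' := by
    apply AddMonoidHom.ext
    intro x
    change D.th 1 ^ i * D.a 1 x = x
    rw [D.th_one, map_one, one_pow, one_mul]
    rfl
  map_mul' := by
    intro g h
    apply AddMonoidHom.ext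
    intro x
    change D.th (g * h) ^ i * D.a (g * h) x = D.th g ^ i * D.a g (D.th h ^ i * D.a h x)
    rw [D.th_mul, map_mul, map_mul, map_pow, mul_pow, mul_assoc]
    rfl

/-- The twisted module. -/
def LF_Tw.V {G k : Type} [Group G] [Field k] (_D : LF_Tw G k) (_i : ℕ) : Type := k

instance {G k : Type} [Group G] [Field k] (D : LF_Tw G k) (i : ℕ) : AddCommGroup (D.V i) :=
  inferInstanceAs (AddCommGroup k)

instance {G k : Type} [Group G] [Field k] [h : Finite k] (D : LF_Tw G k) (i : ℕ) :
    Finite (D.V i) := h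

noncomputable instance {p : ℕ} [Fact p.Prime] {G k : Type} [Group G] [Field k] [CharP k p]
    (D : LF_Tw G k) (i : ℕ) :
    Module (MonoidAlgebra (ZMod p) G) (D.V i) :=
  LF_mod p G (D.V i) (D.act i) (fun x => by
    change p • (show k from x) = 0
    rw [nsmul_eq_mul, CharP.cast_eq_zero, zero_mul])

theorem LF_Tw.smul_def {p : ℕ} [Fact p.Prime] {G k : Type} [Group G] [Field k] [CharP k p]
    (D : LF_Tw G k) (i : ℕ) (g : G) (x : k) :
    (MonoidAlgebra.single g (1 : ZMod p)) • (show D.V i from x) =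
      (show D.V i from D.th g ^ i * D.a g x) :=
  LF_mod_smul p G (D.V i) (D.act i) _ g x

/-- The semilinear action on the dual. -/
noncomputable def LF_Tw.T (p : ℕ) [Fact p.Prime] {G k : Type} [Group G] [Field k] 
    (D : LF_Tw G k) (i : ℕ) (X : Type) [AddCommGroup X] [Module (MonoidAlgebra (ZMod p) G) X] :
    G →* AddMonoid.End (X →+ k) where
  toFun := fun g =>
    { toFun := fun φ => (D.act i g).comp (φ.comp
        (DistribSMul.toAddMonoidHom X (MonoidAlgebra.single g⁻¹ (1 : ZMod p))))
      map_zero' := by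
        ext x
        exact map_zero (D.act i g)
      map_add' := by
        intro φ ψ
        ext x
        exact map_add (D.act i g) _ _ }
  map_one' := by
    apply AddMonoidHom.ext
    intro φ
    ext x
    change D.act i 1 (φ (MonoidAlgebra.single (1 : G)⁻¹ (1 : ZMod p) • x)) = φ x
    rw [inv_one, LF_single_one_smul, map_one]
    rfl
  map_mul' := by
    intro g h
    apply AddMonoidHom.ext
    intro φ
    ext x
    change D.act i (g * h) (φ (MonoidAlgebra.single (g * h)⁻¹ (1 : ZMod p) • x)) =
      D.act i g (D.act i h (φ (MonoidAlgebra.single h⁻¹ (1 : ZMod p) • 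
        MonoidAlgebra.single g⁻¹ (1 : ZMod p) • x)))
    rw [mul_inv_rev, LF_single_mul_smul, map_mul]
    rfl

theorem LF_Tw.T_apply (p : ℕ) [Fact p.Prime] {G k : Type} [Group G] [Field k] 
    (D : LF_Tw G k) (i : ℕ) (X : Type) [AddCommGroup X] [Module (MonoidAlgebra (ZMod p) G) X]
    (g : G) (φ : X →+ k) (x : X) :
    D.T p i X g φ x = D.th g ^ i * D.a g (φ (MonoidAlgebra.single g⁻¹ (1 : ZMod p) • x)) := rfl

theorem LF_Tw.homCard {p : ℕ} [Fact p.Prime] {G k : Type} [Group G] [Field k] [CharP k p]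
    (D : LF_Tw G k) (i : ℕ) (X : Type) [AddCommGroup X] [Module (MonoidAlgebra (ZMod p) G) X] :
    Nat.card (X →ₗ[MonoidAlgebra (ZMod p) G] D.V i) =
      Nat.card {φ : X →+ k // ∀ g, D.T p i X g φ = φ} := by
  refine Nat.card_congr
    { toFun := fun f => ⟨f.toAddMonoidHom, fun g => ?_⟩
      invFun := fun φ => LF_lin p (φ.1 : X →+ D.V i) (fun g x => ?_)
      left_inv := fun f => rfl
      right_inv := fun φ => rfl }
  · ext x
    have h := D.smul_def (p := p) i g (f (MonoidAlgebra.single g⁻¹ (1 : ZMod p) • x))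
    refine Eq.trans (D.T_apply p i X g f.toAddMonoidHom x) (Eq.trans h.symm ?_)
    change MonoidAlgebra.single g (1 : ZMod p) • f (MonoidAlgebra.single g⁻¹ (1 : ZMod p) • x) = f x
    rw [← map_smul, ← LF_single_mul_smul, mul_inv_cancel, LF_single_one_smul]
  · have h := DFunLike.congr_fun (φ.2 g) (MonoidAlgebra.single g (1 : ZMod p) • x)
    rw [D.T_apply p, ← LF_single_mul_smul, inv_mul_cancel, LF_single_one_smul] at h
    exact h.symm.trans (D.smul_def (p := p) i g (φ.1 x)).symm

theorem LF_Tw.lemmaA {p : ℕ} [Fact p.Prime] {G k : Type} [Group G] [Finite G] [Field k]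
    [CharP k p] [Finite k] (D : LF_Tw G k) (e d b : ℕ) (he : 0 < e)
    (hI : ∀ g ∈ D.a.ker, D.th g = 1 → g = 1) (hIe : ∀ g ∈ D.a.ker, D.th g ^ e = 1)
    (hcard : Nat.card k ^ e = p ^ (d * Nat.card G))
    (X : Type) [AddCommGroup X] [Module (MonoidAlgebra (ZMod p) G) X] [Finite X] :
    ∏ i ∈ Finset.range e, Nat.card (X →ₗ[MonoidAlgebra (ZMod p) G] D.V (b + i)) =
      Nat.card X ^ d := by
  classical
  have hfY : Finite (X →+ k) := Finite.of_injective _ DFunLike.coe_injective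
  have : Module.Finite k (X →+ k) := Module.Finite.of_finite
  obtain ⟨m, hX, hY⟩ := LF_card_addHom p X k (LF_p_smul p (G := G))
  have hk1 : 1 < Nat.card k := Finite.one_lt_card
  have hfr : Module.finrank k (X →+ k) = m := by
    have h := Module.natCard_eq_pow_finrank (K := k) (V := X →+ k)
    rw [hY] at h
    exact (Nat.pow_right_injective hk1 h).symm
  -- the inertia group
  let θI : D.a.ker →* k :=
    { toFun := fun g => D.th g
      map_one' := D.th_one
      map_mul' := fun g h => by
        have hg : D.a g = 1 := g.2
        change D.th (g * h) = _
        rw [D.th_mul, hg]; rfl }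
  have hθinj : Function.Injective θI := by
    let θu : D.a.ker →* kˣ := MonoidHom.toHomUnits θI
    have : Function.Injective θu := by
      rw [injective_iff_map_eq_one]
      intro g hg
      apply Subtype.ext
      apply hI g g.2
      exact congrArg Units.val hg
    intro g h hgh
    exact this (Units.ext hgh)
  have hcyc : IsCyclic D.a.ker := isCyclic_of_injective_ringHom θI hθinj
  obtain ⟨τ, hτ⟩ := hcyc.exists_generator
  set t := Nat.card D.a.ker with ht
  have htpos : 0 < t := Nat.card_pos
  have hord : orderOf τ = t := orderOf_eq_card_of_forall_mem_zpowers hτ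
  have hw : IsPrimitiveRoot (θI τ) t := by
    rw [← hord, ← orderOf_injective θI hθinj]
    exact IsPrimitiveRoot.orderOf _
  have hte : t ∣ e := hw.dvd_of_pow_eq_one _ (hIe τ τ.2)
  obtain ⟨e', rfl⟩ := hte
  let P : Module.End k (X →+ k) :=
    { toFun := fun φ => φ.comp
        (DistribSMul.toAddMonoidHom X (MonoidAlgebra.single (τ : G) (1 : ZMod p)))
      map_add' := fun φ ψ => rfl
      map_smul' := fun c φ => rfl }
  have hPpow : ∀ j φ x, (P ^ j) φ x = φ (MonoidAlgebra.single ((τ : G) ^ j) (1 : ZMod p) • x) := by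
    intro j
    induction j with
    | zero => intro φ x; simp [LF_single_one_smul]
    | succ j ih =>
      intro φ x
      rw [pow_succ, Module.End.mul_apply, ih, pow_succ', LF_single_mul_smul]
      rfl
  have hPt : P ^ t = 1 := by
    apply LinearMap.ext
    intro φ
    ext x
    rw [hPpow, ← hord]
    have : (τ : G) ^ orderOf τ = 1 := by
      rw [← Subgroup.coe_pow, pow_orderOf_eq_one]; rfl
    rw [this, LF_single_one_smul]
    rfl
  have hsem : ∀ i (c : G) (x : k) (y : X →+ k), D.T p i X c (x • y) = (D.a c x) • D.T p i X c y := by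
    intro i c x y
    ext z
    rw [D.T_apply p, AddMonoidHom.smul_apply, AddMonoidHom.smul_apply, D.T_apply p, smul_eq_mul, 
      smul_eq_mul, map_mul]
    ring
  have hfix : ∀ i, LF_fixI D.a (D.T p i X) (hsem i) =
      LinearMap.ker (P - algebraMap k (Module.End k (X →+ k)) (θI τ ^ i)) := by
    intro i
    have hτ1 : D.a τ = 1 := τ.2
    ext φ
    rw [LinearMap.mem_ker, LinearMap.sub_apply, sub_eq_zero, Module.algebraMap_end_apply]
    have hkey : D.T p i X τ φ = φ ↔ P φ = θI τ ^ i • φ := by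
      constructor
      · intro h
        ext x
        have := DFunLike.congr_fun h (MonoidAlgebra.single (τ : G) (1 : ZMod p) • x)
        rw [D.T_apply p, ← LF_single_mul_smul, inv_mul_cancel, LF_single_one_smul, hτ1] at this
        exact this.symm
      · intro h
        ext x
        have := DFunLike.congr_fun h (MonoidAlgebra.single (τ : G)⁻¹ (1 : ZMod p) • x)
        rw [D.T_apply p, hτ1]
        refine this.symm.trans ?_
        change φ (MonoidAlgebra.single (τ : G) (1 : ZMod p) • MonoidAlgebra.single (τ : G)⁻¹ (1 : ZMod p) • x) = φ x
        rw [← LF_single_mul_smul, mul_inv_cancel, LF_single_one_smul]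
    rw [← hkey]
    constructor
    · intro h
      exact h τ τ.2
    · intro h g hg
      obtain ⟨j, hj⟩ := (mem_powers_iff_mem_zpowers (x := τ) (y := ⟨g, hg⟩)).mpr (hτ ⟨g, hg⟩)
      have hj' : g = (τ : G) ^ j := by
        have := congrArg Subtype.val hj
        exact this.symm
      rw [hj', map_pow]
      clear hj hj'
      induction j with
      | zero => rfl
      | succ j ih =>
        rw [pow_succ]
        change (D.T p i X τ ^ j) (D.T p i X τ φ) = φ
        rw [h, ih]
  let h : ℕ → ℕ := fun i => Module.finrank k
      (LinearMap.ker (P - algebraMap k (Module.End k (X →+ k)) (θI τ ^ i)))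
  have hper : ∀ i, h (i + t) = h i := by
    intro i
    change Module.finrank k (LinearMap.ker (P - algebraMap k _ (θI τ ^ (i + t)))) = _
    rw [pow_add, hw.pow_eq_one, mul_one]
  have hsum : ∑ i ∈ Finset.range t, h i = m := by
    rw [← hfr]
    exact LF_eigen_root P t htpos (θI τ) hw hPt
  have hN : ∀ i, Nat.card (X →ₗ[MonoidAlgebra (ZMod p) G] D.V i) ^ D.a.ker.index =
      Nat.card k ^ h i := by
    intro i
    rw [D.homCard, LF_speiser D.a (D.T p i X) (hsem i), hfix,
      Module.natCard_eq_pow_finrank (K := k)]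
  have hG : D.a.ker.index * t = Nat.card G := Subgroup.index_mul_card _
  have hGpos : Nat.card G ≠ 0 := Nat.card_pos.ne'
  apply Nat.pow_left_injective hGpos
  change _ ^ Nat.card G = _ ^ Nat.card G
  rw [← hG, pow_mul, ← Finset.prod_pow, Finset.prod_congr rfl (fun i _ => hN (b + i)),
    Finset.prod_pow_eq_pow_sum, LF_periodic t h hper, hsum, hG, hX, ← pow_mul,
    show e' * m * t = (t * e') * m by ring, pow_mul, hcard]
  simp only [← pow_mul]
  congr 1
  ring

theorem LF_Tw.isoFree {p : ℕ} [Fact p.Prime] {G k : Type} [Group G] [Finite G] [Field k]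
    [CharP k p] [Finite k] (D : LF_Tw G k) (e d b : ℕ) (he : 0 < e)
    (hI : ∀ g ∈ D.a.ker, D.th g = 1 → g = 1) (hIe : ∀ g ∈ D.a.ker, D.th g ^ e = 1)
    (hcard : Nat.card k ^ e = p ^ (d * Nat.card G)) :
    Nonempty (((i : Fin e) → D.V (b + i)) ≃ₗ[MonoidAlgebra (ZMod p) G]
      (Fin d → MonoidAlgebra (ZMod p) G)) := by
  have : Finite (MonoidAlgebra (ZMod p) G) := 
    Finite.of_injective (fun x => (x.coeff : G → ZMod p)) (fun x y h => by
      ext g; exact congrFun h g)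
  apply LF_lovasz
  intro X _ _ _
  rw [LF_cardHom_pi, LF_cardHom_pi]
  simp only [LF_cardHom_self, Finset.prod_const, Finset.card_univ, Fintype.card_fin]
  rw [← D.lemmaA e d b he hI hIe hcard X, Finset.prod_range]

theorem LF_Tw.proj {p : ℕ} [Fact p.Prime] {G k : Type} [Group G] [Finite G] [Field k]
    [CharP k p] [Finite k] (D : LF_Tw G k) (e d b : ℕ) (he : 0 < e)
    (hI : ∀ g ∈ D.a.ker, D.th g = 1 → g = 1) (hIe : ∀ g ∈ D.a.ker, D.th g ^ e = 1)
    (hcard : Nat.card k ^ e = p ^ (d * Nat.card G)) :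
    Module.Projective (MonoidAlgebra (ZMod p) G) (D.V b) := by
  classical
  obtain ⟨f⟩ := D.isoFree e d b he hI hIe hcard
  have : Module.Projective (MonoidAlgebra (ZMod p) G) ((i : Fin e) → D.V (b + i)) :=
    Module.Projective.of_equiv f.symm
  exact Module.Projective.of_split (R := MonoidAlgebra (ZMod p) G)
    (P := D.V (b + ((⟨0, he⟩ : Fin e) : ℕ)))
    (LinearMap.single (MonoidAlgebra (ZMod p) G) (fun i : Fin e => D.V (b + i)) ⟨0, he⟩)
    (LinearMap.proj (⟨0, he⟩ : Fin e)) (by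
      apply LinearMap.ext
      intro x
      simp)

theorem LF_Tw.frob {p : ℕ} [Fact p.Prime] {G k : Type} [Group G] [Finite G] [Field k]
    [CharP k p] [Finite k] (D : LF_Tw G k) (i : ℕ) :
    Nonempty (D.V i ≃ₗ[MonoidAlgebra (ZMod p) G] D.V (p * i)) := by
  refine ⟨LinearEquiv.ofBijective (LF_lin p (M := D.V i) (N := D.V (p * i))
    ((frobenius k p : k →+* k) : k →+ k) ?_) ?_⟩
  · intro g (x : k)
    refine Eq.trans (congrArg (frobenius k p) (D.smul_def (p := p) i g x)) ?_
    refine Eq.trans ?_ (D.smul_def (p := p) (p * i) g (frobenius k p x)).symm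
    change (D.th g ^ i * D.a g x) ^ p = D.th g ^ (p * i) * D.a g (x ^ p)
    rw [mul_pow, map_pow, ← pow_mul, mul_comm i p]
  · have : Function.Injective (frobenius k p) := frobenius_inj k p
    exact Finite.injective_iff_bijective.mp this

theorem LF_comb (p E : ℕ) (hp : 1 < p) (N : ℕ → ℕ) (hN : ∀ i, 0 < N i) (h : ∀ i, N (p * i) = N i) :
    ∏ i ∈ (Finset.range (p * E)).filter (fun i => ¬ p ∣ i), N i =
      ∏ i ∈ Finset.range ((p - 1) * E), N (E + i) := by
  have h1 := Finset.prod_filter_mul_prod_filter_not (Finset.range (p * E)) (fun i => p ∣ i) N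
  have h2 : (Finset.range (p * E)).filter (fun i => p ∣ i) =
      (Finset.range E).image (fun j => p * j) := by
    ext i
    simp only [Finset.mem_filter, Finset.mem_range, Finset.mem_image]
    constructor
    · rintro ⟨h1, j, rfl⟩
      exact ⟨j, Nat.lt_of_mul_lt_mul_left h1, rfl⟩
    · rintro ⟨j, hj, rfl⟩
      exact ⟨Nat.mul_lt_mul_of_pos_left hj (by omega), dvd_mul_right _ _⟩
  rw [h2, Finset.prod_image (fun a _ b _ hab => Nat.eq_of_mul_eq_mul_left (by omega) hab)] at h1
  simp only [h] at h1
  have h3 : p * E = E + (p - 1) * E := by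
    obtain ⟨q, rfl⟩ : ∃ q, p = q + 1 := ⟨p - 1, by omega⟩
    simp; ring
  have h4 : ∏ i ∈ Finset.range (p * E), N i =
    (∏ i ∈ Finset.range E, N i) * ∏ i ∈ Finset.range ((p - 1) * E), N (E + i) := by
    rw [h3, Finset.prod_range_add]
  rw [h4] at h1
  exact Nat.eq_of_mul_eq_mul_left (Finset.prod_pos fun i _ => hN i) h1

theorem LF_Tw.prodCard {p : ℕ} [Fact p.Prime] {G k : Type} [Group G] [Finite G] [Field k]
    [CharP k p] [Finite k] (D : LF_Tw G k) (E d : ℕ) (hE : 0 < E)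
    (hI : ∀ g ∈ D.a.ker, D.th g = 1 → g = 1) (hIe : ∀ g ∈ D.a.ker, D.th g ^ ((p - 1) * E) = 1)
    (hcard : Nat.card k ^ ((p - 1) * E) = p ^ (d * Nat.card G))
    (X : Type) [AddCommGroup X] [Module (MonoidAlgebra (ZMod p) G) X] [Finite X] :
    ∏ i ∈ (Finset.range (p * E)).filter (fun i => ¬ p ∣ i),
      Nat.card (X →ₗ[MonoidAlgebra (ZMod p) G] D.V i) = Nat.card X ^ d := by
  have hp : 1 < p := (Fact.out : p.Prime).one_lt
  rw [LF_comb p E hp, D.lemmaA _ d E (Nat.mul_pos (by omega) hE) hI hIe hcard X]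
  · intro i
    have : Finite (X →ₗ[MonoidAlgebra (ZMod p) G] D.V i) :=
      Finite.of_injective _ DFunLike.coe_injective
    exact Nat.card_pos
  · intro i
    obtain ⟨f⟩ := D.frob (p := p) i
    exact (LF_cardHom_congr f).symm

/-! ### Part 4: the module of classes -/

/-- Submodule from a stable additive subgroup. -/
def LF_submod (p : ℕ) [Fact p.Prime] {G M : Type} [Group G] [AddCommGroup M]
    [Module (MonoidAlgebra (ZMod p) G) M] (S : AddSubgroup M)
    (h : ∀ (g : G), ∀ x ∈ S, MonoidAlgebra.single g (1 : ZMod p) • x ∈ S) :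
    Submodule (MonoidAlgebra (ZMod p) G) M :=
  { S with
    smul_mem' := by
      intro r x hx
      induction r using MonoidAlgebra.induction_linear with
      | zero => rw [zero_smul]; exact S.zero_mem
      | add r s hr hs => rw [add_smul]; exact S.add_mem hr hs
      | single g a =>
        rw [LF_single_smul]
        exact S.nsmul_mem (h g x hx) _ }

/-- The group of units modulo `p`-th powers, written additively. -/
def LF_M (p : ℕ) (L : Type) [Field L] : Type :=
  Additive (Lˣ ⧸ (powMonoidHom p : Lˣ →* Lˣ).range)

instance (p : ℕ) (L : Type) [Field L] : AddCommGroup (LF_M p L) :=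
  inferInstanceAs (AddCommGroup (Additive (Lˣ ⧸ (powMonoidHom p : Lˣ →* Lˣ).range)))

/-- The class map. -/
def LF_cl (p : ℕ) (L : Type) [Field L] : Additive Lˣ →+ LF_M p L :=
  MonoidHom.toAdditive (QuotientGroup.mk' (powMonoidHom p : Lˣ →* Lˣ).range)

theorem LF_cl_surj (p : ℕ) (L : Type) [Field L] (x : LF_M p L) :
    ∃ y : Lˣ, LF_cl p L (Additive.ofMul y) = x := by
  obtain ⟨y, hy⟩ := QuotientGroup.mk_surjective (Additive.toMul x)
  exact ⟨y, congrArg Additive.ofMul hy⟩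

theorem LF_cl_zero (p : ℕ) (L : Type) [Field L] (x : Lˣ) :
    LF_cl p L (Additive.ofMul x) = 0 ↔ ∃ y : Lˣ, y ^ p = x := by
  have h := QuotientGroup.eq_one_iff (N := (powMonoidHom p : Lˣ →* Lˣ).range) x
  exact h

theorem LF_M_p_smul (p : ℕ) (L : Type) [Field L] (x : LF_M p L) : p • x = 0 := by
  obtain ⟨y, rfl⟩ := LF_cl_surj p L x
  rw [← map_nsmul, ← ofMul_pow, LF_cl_zero]
  exact ⟨y, rfl⟩

/-- Action on units. -/
def LF_ua {G A : Type} [Group G] [CommRing A] [MulSemiringAction G A] (g : G) : Aˣ →* Aˣ :=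
  Units.map (MulSemiringAction.toRingHom G A g : A →* A)

theorem LF_ua_val {G A : Type} [Group G] [CommRing A] [MulSemiringAction G A] (g : G) (u : Aˣ) :
    ((LF_ua g u : Aˣ) : A) = g • (u : A) := rfl

theorem LF_ua_one {G A : Type} [Group G] [CommRing A] [MulSemiringAction G A] (u : Aˣ) :
    LF_ua (1 : G) u = u := by
  ext
  rw [LF_ua_val, one_smul]

theorem LF_ua_mul {G A : Type} [Group G] [CommRing A] [MulSemiringAction G A] (g h : G) (u : Aˣ) :
    LF_ua (g * h) u = LF_ua g (LF_ua h u) := by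
  ext
  rw [LF_ua_val, LF_ua_val, LF_ua_val, mul_smul]

/-- Action on classes. -/
def LF_M_act (p : ℕ) (G L : Type) [Group G] [Field L] [MulSemiringAction G L] :
    G →* AddMonoid.End (LF_M p L) where
  toFun := fun g => MonoidHom.toAdditive (QuotientGroup.map (powMonoidHom p : Lˣ →* Lˣ).range
    (powMonoidHom p : Lˣ →* Lˣ).range (LF_ua g) (by
      rintro _ ⟨y, rfl⟩
      exact ⟨LF_ua g y, (map_pow (LF_ua g) y p).symm⟩))
  map_one' := by
    apply AddMonoidHom.ext
    intro x
    obtain ⟨y, rfl⟩ := LF_cl_surj p L x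
    change LF_cl p L (Additive.ofMul (LF_ua (1 : G) y)) = LF_cl p L (Additive.ofMul y)
    rw [LF_ua_one]
  map_mul' := by
    intro g h
    apply AddMonoidHom.ext
    intro x
    obtain ⟨y, rfl⟩ := LF_cl_surj p L x
    change LF_cl p L (Additive.ofMul (LF_ua (g * h) y)) =
      LF_cl p L (Additive.ofMul (LF_ua g (LF_ua h y)))
    rw [LF_ua_mul]

noncomputable instance (p : ℕ) [Fact p.Prime] (G L : Type) [Group G] [Field L]
    [MulSemiringAction G L] : Module (MonoidAlgebra (ZMod p) G) (LF_M p L) :=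
  LF_mod p G (LF_M p L) (LF_M_act p G L) (LF_M_p_smul p L)

theorem LF_M_smul (p : ℕ) [Fact p.Prime] (G L : Type) [Group G] [Field L]
    [MulSemiringAction G L] (g : G) (x : Lˣ) :
    MonoidAlgebra.single g (1 : ZMod p) • LF_cl p L (Additive.ofMul x) =
      LF_cl p L (Additive.ofMul (LF_ua g x)) :=
  LF_mod_smul p G (LF_M p L) (LF_M_act p G L) (LF_M_p_smul p L) g _

/-- The group of roots of unity, additively. -/
def LF_Mu (p : ℕ) (L : Type) [Field L] : Type := Additive (rootsOfUnity p L)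

instance (p : ℕ) (L : Type) [Field L] : AddCommGroup (LF_Mu p L) :=
  inferInstanceAs (AddCommGroup (Additive (rootsOfUnity p L)))

instance (p : ℕ) [Fact p.Prime] (L : Type) [Field L] : Finite (LF_Mu p L) := 
  have : NeZero p := ⟨(Fact.out : p.Prime).ne_zero⟩
  inferInstanceAs (Finite (rootsOfUnity p L))

theorem LF_ua_mu (p : ℕ) {G L : Type} [Group G] [Field L] [MulSemiringAction G L] (g : G)
    (x : rootsOfUnity p L) : LF_ua g (x : Lˣ) ∈ rootsOfUnity p L := by
  rw [mem_rootsOfUnity, ← map_pow, (mem_rootsOfUnity p _).mp x.2, map_one]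

/-- Action on roots of unity. -/
def LF_Mu_act (p : ℕ) (G L : Type) [Group G] [Field L] [MulSemiringAction G L] :
    G →* AddMonoid.End (LF_Mu p L) where
  toFun := fun g => MonoidHom.toAdditive (
    { toFun := fun x => ⟨LF_ua g (x : Lˣ), LF_ua_mu p g x⟩
      map_one' := by ext; simp
      map_mul' := fun x y => by ext; simp } : rootsOfUnity p L →* rootsOfUnity p L)
  map_one' := by
    apply AddMonoidHom.ext
    intro x
    apply Subtype.ext
    exact LF_ua_one (G := G) _
  map_mul' := by
    intro g h
    apply AddMonoidHom.ext
    intro x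
    apply Subtype.ext
    exact LF_ua_mul g h _

noncomputable instance (p : ℕ) [Fact p.Prime] (G L : Type) [Group G] [Field L]
    [MulSemiringAction G L] : Module (MonoidAlgebra (ZMod p) G) (LF_Mu p L) :=
  LF_mod p G (LF_Mu p L) (LF_Mu_act p G L) (fun x => by
    have h : (Additive.toMul (x : Additive (rootsOfUnity p L))) ^ p = 1 := by
      apply Subtype.ext
      exact (mem_rootsOfUnity p _).mp (Additive.toMul (x : Additive (rootsOfUnity p L))).2
    exact congrArg Additive.ofMul h)

theorem LF_Mu_smul (p : ℕ) [Fact p.Prime] (G L : Type) [Group G] [Field L]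
    [MulSemiringAction G L] (g : G) (x : rootsOfUnity p L) :
    MonoidAlgebra.single g (1 : ZMod p) • (show LF_Mu p L from Additive.ofMul x) =
      (show LF_Mu p L from Additive.ofMul ⟨LF_ua g (x : Lˣ), LF_ua_mu p g x⟩) :=
  LF_mod_smul p G (LF_Mu p L) (LF_Mu_act p G L) _ g _

/-- The trivial module. -/
def LF_Z (p : ℕ) : Type := ZMod p

instance (p : ℕ) : AddCommGroup (LF_Z p) := inferInstanceAs (AddCommGroup (ZMod p))

instance (p : ℕ) [Fact p.Prime] : Finite (LF_Z p) :=
  have : NeZero p := ⟨(Fact.out : p.Prime).ne_zero⟩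
  inferInstanceAs (Finite (ZMod p))

noncomputable instance (p : ℕ) [Fact p.Prime] (G : Type) [Group G] :
    Module (MonoidAlgebra (ZMod p) G) (LF_Z p) :=
  LF_mod p G (LF_Z p) 1 (fun x => by
    have h : ∀ y : ZMod p, p • y = 0 := by intro y; simp
    exact h x)

theorem LF_Z_smul (p : ℕ) [Fact p.Prime] (G : Type) [Group G] (g : G) (x : LF_Z p) :
    MonoidAlgebra.single g (1 : ZMod p) • x = x :=
  LF_mod_smul p G (LF_Z p) 1 _ g x

/-! ### Part 5: unit filtration -/

section local_theory

variable {A : Type} [CommRing A] [IsDomain A] [IsLocalRing A]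

/-- Units congruent to one modulo `π`. -/
def LF_U (π : A) : Subgroup Aˣ where
  carrier := {u | π ∣ (u : A) - 1}
  one_mem' := by simp
  mul_mem' := by
    rintro u v ⟨a, ha⟩ ⟨b, hb⟩
    refine ⟨a + b + π * a * b, ?_⟩
    rw [Units.val_mul]
    linear_combination (v : A) * ha + hb + π * a * hb
  inv_mem' := by
    rintro u ⟨a, ha⟩
    refine ⟨-((u⁻¹ : Aˣ) : A) * a, ?_⟩
    have h : ((u⁻¹ : Aˣ) : A) * u = 1 := by simp
    linear_combination - ((u⁻¹ : Aˣ) : A) * ha + h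

theorem LF_mem_U {π : A} {u : Aˣ} : u ∈ LF_U π ↔ ∃ a, (u : A) = 1 + π * a := by
  constructor
  · rintro ⟨a, ha⟩
    exact ⟨a, by linear_combination ha⟩
  · rintro ⟨a, ha⟩
    exact ⟨a, by linear_combination ha⟩

theorem LF_U_le {π π' : A} (h : π ∣ π') : LF_U π' ≤ LF_U π := fun _ hu => h.trans hu

theorem LF_U_exists {π : A} (hπ : π ∈ IsLocalRing.maximalIdeal A) (a : A) :
    ∃ u ∈ LF_U π, (u : A) = 1 + π * a := by
  have h : IsUnit (1 + π * a) := by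
    have h1 : -(π * a) ∈ nonunits A := by
      rw [← IsLocalRing.mem_maximalIdeal]
      exact neg_mem (Ideal.mul_mem_right _ _ hπ)
    have := IsLocalRing.isUnit_one_sub_self_of_mem_nonunits _ h1
    simpa using this
  exact ⟨h.unit, LF_mem_U.mpr ⟨a, rfl⟩, rfl⟩

theorem LF_rho (π : A) (hπ0 : π ≠ 0) (hπ : π ∈ IsLocalRing.maximalIdeal A) :
    ∃ ρ : Additive (LF_U π) →+ IsLocalRing.ResidueField A,
      ∀ (u : LF_U π) (a : A), ((u : Aˣ) : A) = 1 + π * a →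
        ρ (Additive.ofMul u) = IsLocalRing.residue A a := by
  choose c hc using fun u : LF_U π => LF_mem_U.mp u.2
  have key : ∀ (u : LF_U π) (a : A), ((u : Aˣ) : A) = 1 + π * a → c u = a := by
    intro u a h
    have h2 := hc u
    rw [h] at h2
    exact (mul_left_cancel₀ hπ0 (add_left_cancel h2)).symm
  have hpi : IsLocalRing.residue A π = 0 := (IsLocalRing.residue_eq_zero_iff _).mpr hπ
  refine ⟨AddMonoidHom.mk' (fun u => IsLocalRing.residue A (c (Additive.toMul u))) ?_, ?_⟩
  · intro u v
    change IsLocalRing.residue A (c (Additive.toMul u * Additive.toMul v)) =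
      IsLocalRing.residue A (c (Additive.toMul u)) + IsLocalRing.residue A (c (Additive.toMul v))
    rw [key (Additive.toMul u * Additive.toMul v)
      (c (Additive.toMul u) + c (Additive.toMul v) + π * c (Additive.toMul u) * c (Additive.toMul v))]
    · simp [hpi]
    · rw [Subgroup.coe_mul, Units.val_mul, hc, hc]
      ring
  · intro u a h
    change IsLocalRing.residue A (c u) = _
    rw [key u a h]

theorem LF_pow_expand (p : ℕ) [hp : Fact p.Prime] (x : A) :
    ∃ r, (1 + x) ^ p = 1 + x ^ p + p * x * r := by
  obtain ⟨r, hr⟩ := exists_add_pow_prime_eq hp.out 1 x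
  exact ⟨r, by rw [hr]; ring⟩

end local_theory

section dvr

variable {A : Type} [CommRing A] [IsDomain A] [IsDiscreteValuationRing A]

theorem LF_p_dvd (p E j : ℕ) (hj : j ≤ E) (hp : 1 ≤ p) {ϖ : A}
    (hpE : ϖ ^ ((p - 1) * E) ∣ (p : A)) : ϖ ^ (p * j) ∣ (p : A) * ϖ ^ j := by
  have : p * j = (p - 1) * j + j := by
    obtain ⟨q, rfl⟩ : ∃ q, p = q + 1 := ⟨p - 1, by omega⟩
    simp; ring
  rw [this, pow_add]
  exact mul_dvd_mul ((pow_dvd_pow _ (Nat.mul_le_mul_left _ hj)).trans hpE) dvd_rfl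

theorem LF_p_dvd' (p E j : ℕ) (hj : j < E) (hp : 2 ≤ p) {ϖ : A}
    (hpE : ϖ ^ ((p - 1) * E) ∣ (p : A)) : ϖ ^ (p * j + 1) ∣ (p : A) * ϖ ^ j := by
  have h1 : p * j = (p - 1) * j + j := by
    obtain ⟨q, rfl⟩ : ∃ q, p = q + 1 := ⟨p - 1, by omega⟩
    simp; ring
  have : p * j + 1 = ((p - 1) * j + 1) + j := by omega
  rw [this, pow_add]
  refine mul_dvd_mul ((pow_dvd_pow _ ?_).trans hpE) dvd_rfl
  have h2 : (p - 1) * (j + 1) ≤ (p - 1) * E := Nat.mul_le_mul_left _ hj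
  rw [Nat.mul_succ] at h2
  omega

/-- `y ∈ U_j`, then `y^p ∈ U_{pj}` for `j ≤ E`. -/
theorem LF_pow_mem (p : ℕ) [hp : Fact p.Prime] (E j : ℕ) (hj : j ≤ E) {ϖ : A}
    (hpE : ϖ ^ ((p - 1) * E) ∣ (p : A)) (y : Aˣ) (hy : y ∈ LF_U (ϖ ^ j)) :
    y ^ p ∈ LF_U (ϖ ^ (p * j)) := by
  obtain ⟨a, ha⟩ := LF_mem_U.mp hy
  obtain ⟨r, hr⟩ := LF_pow_expand p (ϖ ^ j * a)
  obtain ⟨s, hs⟩ := LF_p_dvd p E j hj hp.out.one_le hpE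
  rw [LF_mem_U]
  refine ⟨a ^ p + s * a * r, ?_⟩
  rw [Units.val_pow_eq_pow_val, ha, hr, mul_pow, ← pow_mul, mul_comm j p]
  linear_combination a * r * hs

/-- for `j < E`, expansion modulo `ϖ^(pj+1)`. -/
theorem LF_pow_step (p : ℕ) [hp : Fact p.Prime] (E j : ℕ) (hj : j < E) {ϖ : A}
    (hpE : ϖ ^ ((p - 1) * E) ∣ (p : A)) (a : A) :
    ∃ s, (1 + ϖ ^ j * a) ^ p = 1 + ϖ ^ (p * j) * (a ^ p + ϖ * s) := by
  obtain ⟨r, hr⟩ := LF_pow_expand p (ϖ ^ j * a)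
  obtain ⟨s, hs⟩ := LF_p_dvd' p E j hj hp.out.two_le hpE
  refine ⟨s * a * r, ?_⟩
  rw [hr, mul_pow, ← pow_mul, mul_comm j p]
  rw [pow_succ] at hs
  linear_combination a * r * hs

theorem LF_step (p : ℕ) [hp : Fact p.Prime] (E j : ℕ) (hj : j < E) {ϖ : A} (hϖ : Irreducible ϖ)
    (hpE : ϖ ^ ((p - 1) * E) ∣ (p : A)) (y : Aˣ) (hy : y ∈ LF_U (ϖ ^ j))
    (hyp : y ^ p ∈ LF_U (ϖ ^ (p * j + 1))) : y ∈ LF_U (ϖ ^ (j + 1)) := by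
  by_cases hj0 : j = 0
  · subst hj0
    have h1 : ϖ ∣ ((y : A) - 1) ^ p := by
      obtain ⟨r, hr⟩ := LF_pow_expand p ((y : A) - 1)
      obtain ⟨b, hb⟩ := LF_mem_U.mp hyp
      rw [Units.val_pow_eq_pow_val] at hb
      have h3 : ϖ ∣ (p : A) := (dvd_pow_self _ (Nat.mul_ne_zero (by have := hp.out.two_le; omega) hj.ne')).trans hpE
      obtain ⟨c, hc⟩ := h3
      rw [show 1 + ((y : A) - 1) = y by ring, hb] at hr
      refine ⟨b - c * ((y : A) - 1) * r, ?_⟩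
      rw [hc] at hr
      simp only [mul_zero, zero_add, pow_one] at hr
      linear_combination -hr
    have h2 := hϖ.prime.dvd_of_dvd_pow h1
    change ϖ ^ (0 + 1) ∣ (y : A) - 1
    rwa [zero_add, pow_one]
  obtain ⟨a, ha⟩ := LF_mem_U.mp hy
  obtain ⟨s, hs⟩ := LF_pow_step p E j hj hpE a
  obtain ⟨b, hb⟩ := LF_mem_U.mp hyp
  rw [Units.val_pow_eq_pow_val, ha, hs, pow_succ, mul_assoc] at hb
  have hb' := mul_left_cancel₀ (pow_ne_zero _ hϖ.ne_zero) (add_left_cancel hb)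
  have h1 : ϖ ∣ a ^ p := ⟨b - s, by linear_combination hb'⟩
  obtain ⟨c, hc⟩ := hϖ.prime.dvd_of_dvd_pow h1
  rw [LF_mem_U]
  exact ⟨c, by rw [ha, hc, pow_succ]; ring⟩

theorem LF_root_mem (p : ℕ) [hp : Fact p.Prime] (E : ℕ) {ϖ : A} (hϖ : Irreducible ϖ)
    (hpE : ϖ ^ ((p - 1) * E) ∣ (p : A)) (y : Aˣ) (i : ℕ) (hyp : y ^ p ∈ LF_U (ϖ ^ i))
    (j : ℕ) (hj : j ≤ E) (hji : p * j < i + p) : y ∈ LF_U (ϖ ^ j) := by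
  induction j with
  | zero => exact ⟨(y : A) - 1, by simp⟩
  | succ j ih =>
    apply LF_step p E j (by omega) hϖ hpE y
    · apply ih (by omega)
      rw [Nat.mul_succ] at hji
      omega
    · rw [Nat.mul_succ] at hji
      exact LF_U_le (pow_dvd_pow _ (by omega)) hyp

/-- `p`-th powers in `U_i` lie in `U_{i+1}`. -/
theorem LF_pow_jump (p : ℕ) [hp : Fact p.Prime] (E : ℕ) {ϖ : A} (hϖ : Irreducible ϖ)
    (hpE : ϖ ^ ((p - 1) * E) ∣ (p : A)) (y : Aˣ) (i : ℕ) (hi : i < p * E) (hpi : ¬ p ∣ i)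
    (hyp : y ^ p ∈ LF_U (ϖ ^ i)) : y ^ p ∈ LF_U (ϖ ^ (i + 1)) := by
  have hp0 : 0 < p := hp.out.pos
  have hd := Nat.div_add_mod i p
  have hm := Nat.mod_lt i hp0
  have hm0 : i % p ≠ 0 := fun h => hpi (Nat.dvd_of_mod_eq_zero h)
  have hjE : i / p + 1 ≤ E := by
    have : i / p < E := (Nat.div_lt_iff_lt_mul hp0).mpr (by rw [mul_comm]; exact hi)
    omega
  have h1 := LF_root_mem p E hϖ hpE y i hyp (i / p + 1) hjE (by rw [Nat.mul_succ]; omega)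
  have h2 := LF_pow_mem p E _ hjE hpE y h1
  exact LF_U_le (pow_dvd_pow _ (by rw [Nat.mul_succ]; omega)) h2

theorem LF_frob_surj (p : ℕ) [hp : Fact p.Prime] [Finite (IsLocalRing.ResidueField A)]
    [CharP (IsLocalRing.ResidueField A) p] {ϖ : A} (hϖ : Irreducible ϖ) (a : A) :
    ∃ b c, a = b ^ p + ϖ * c := by
  have : Function.Surjective (frobenius (IsLocalRing.ResidueField A) p) :=
    Finite.surjective_of_injective (frobenius_inj _ p)
  obtain ⟨x, hx⟩ := this (IsLocalRing.residue A a)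
  obtain ⟨b, rfl⟩ := IsLocalRing.residue_surjective x
  have h : a - b ^ p ∈ IsLocalRing.maximalIdeal A := by
    rw [← IsLocalRing.residue_eq_zero_iff, map_sub, ← hx, map_pow, frobenius_def, sub_self]
  rw [hϖ.maximalIdeal_eq, Ideal.mem_span_singleton] at h
  obtain ⟨c, hc⟩ := h
  exact ⟨b, c, by linear_combination hc⟩

/-- reduction modulo `p`-th powers at multiples of `p` -/
theorem LF_pmul (p : ℕ) [hp : Fact p.Prime] [Finite (IsLocalRing.ResidueField A)]
    [CharP (IsLocalRing.ResidueField A) p] (E j : ℕ) (hj : j < E) {ϖ : A} (hϖ : Irreducible ϖ)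
    (hpE : ϖ ^ ((p - 1) * E) ∣ (p : A)) (u : Aˣ) (hu : u ∈ LF_U (ϖ ^ (p * j))) :
    ∃ y : Aˣ, u * (y ^ p)⁻¹ ∈ LF_U (ϖ ^ (p * j + 1)) := by
  have fin : ∀ y : Aˣ, (∃ c, (u : A) = (y : A) ^ p + ϖ ^ (p * j + 1) * c) →
      u * (y ^ p)⁻¹ ∈ LF_U (ϖ ^ (p * j + 1)) := by
    rintro y ⟨c, hc⟩
    rw [LF_mem_U]
    refine ⟨c * ((y ^ p)⁻¹ : Aˣ), ?_⟩
    have h : ((y : A) ^ p) * ((y ^ p)⁻¹ : Aˣ) = 1 := by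
      rw [← Units.val_pow_eq_pow_val, Units.mul_inv]
    rw [Units.val_mul, hc]
    linear_combination h
  by_cases hj0 : j = 0
  · subst hj0
    obtain ⟨b, c, hbc⟩ := LF_frob_surj p hϖ (u : A)
    have hb : IsUnit b := by
      by_contra hb
      have h1 : b ∈ IsLocalRing.maximalIdeal A := hb
      have h2 : ϖ ∈ IsLocalRing.maximalIdeal A := hϖ.not_isUnit
      have : (u : A) ∈ IsLocalRing.maximalIdeal A := by
        rw [hbc]
        exact add_mem (Ideal.pow_mem_of_mem _ h1 _ hp.out.pos) (Ideal.mul_mem_right _ _ h2)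
      exact this u.isUnit
    refine ⟨hb.unit, fin _ ⟨c, ?_⟩⟩
    simpa using hbc
  · obtain ⟨a, ha⟩ := LF_mem_U.mp hu
    obtain ⟨b, c, hbc⟩ := LF_frob_surj p hϖ a
    have hm : ϖ ^ j ∈ IsLocalRing.maximalIdeal A :=
      Ideal.pow_mem_of_mem _ hϖ.not_isUnit _ (Nat.pos_of_ne_zero hj0)
    obtain ⟨y, -, hy⟩ := LF_U_exists hm b
    obtain ⟨s, hs⟩ := LF_pow_step p E j hj hpE b
    refine ⟨y, fin y ⟨c - s, ?_⟩⟩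
    rw [hy, hs, ha, hbc, pow_succ]
    ring

end dvr

section hensel

open Polynomial in
theorem LF_intpoly (p : ℕ) [hp : Fact p.Prime] :
    ∃ r : ℤ[X], (1 + X : ℤ[X]) ^ p = 1 + X ^ p + (p : ℤ[X]) * X * r ∧ r.eval 0 = 1 ∧
      (X * r).degree < (p : WithBot ℕ) := by
  obtain ⟨r, hr⟩ := exists_add_pow_prime_eq hp.out (1 : ℤ[X]) X
  have hr' : (1 + X : ℤ[X]) ^ p = 1 + X ^ p + (p : ℤ[X]) * X * r := by rw [hr]; ring
  have hp0 : (p : ℤ) ≠ 0 := by exact_mod_cast hp.out.ne_zero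
  refine ⟨r, hr', ?_, ?_⟩
  · have h := congrArg (fun q => (derivative q).eval 0) hr'
    simp [derivative_pow, hp.out.ne_zero] at h
    have hp1 : p - 1 ≠ 0 := by have := hp.out.two_le; omega
    rw [zero_pow hp1] at h
    have h2 : (p : ℤ) * 1 = p * r.eval 0 := by linarith
    exact (mul_left_cancel₀ hp0 h2).symm
  · have h1 : ((p : ℤ[X]) * (X * r)) = ((X + 1) ^ p - X ^ p) - 1 := by
      rw [add_comm X 1, hr']; ring
    have hm : ((X + 1 : ℤ[X]) ^ p).Monic := (monic_X_add_C (1 : ℤ)).pow p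
    have hd : ((X + 1 : ℤ[X]) ^ p).degree = p := by
      rw [degree_pow]
      have := degree_X_add_C (1 : ℤ)
      rw [map_one] at this
      rw [this]; simp
    have h2 : (((X + 1 : ℤ[X]) ^ p) - X ^ p).degree < (p : WithBot ℕ) := by
      rw [← hd]
      apply degree_sub_lt_left
      · rw [hd, degree_X_pow]
      · exact hm.ne_zero
      · rw [hm.leadingCoeff, (monic_X_pow p).leadingCoeff]
    have h3 : ((p : ℤ[X]) * (X * r)).degree < (p : WithBot ℕ) := by
      rw [h1]
      refine lt_of_le_of_lt (degree_sub_le _ _) (max_lt h2 ?_)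
      rw [degree_one]
      exact_mod_cast hp.out.pos
    have h4 : ((p : ℤ[X]) * (X * r)).degree = (X * r).degree := by
      have : (p : ℤ[X]) = C (p : ℤ) := by simp
      rw [this, degree_C_mul hp0]
    rwa [h4] at h3

variable {A : Type} [CommRing A] [IsDomain A] [HenselianLocalRing A]

theorem LF_lam_pow (p : ℕ) [hp : Fact p.Prime] {lam : A} (h : lam ^ (p - 1) = -(p : A)) :
    lam ^ p = -(p : A) * lam := by
  rw [← h, ← pow_succ, Nat.sub_add_cancel hp.out.one_le]

open Polynomial in
theorem LF_f (p : ℕ) [hp : Fact p.Prime] {lam : A} (h : lam ^ (p - 1) = -(p : A))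
    (hlam : lam ∈ IsLocalRing.maximalIdeal A) :
    ∃ f : A[X], f.Monic ∧ 0 < f.degree ∧ (∀ x, 1 + lam ^ p * f.eval x = (1 + lam * x) ^ p) ∧
      (∀ x, IsLocalRing.residue A (f.eval x) = IsLocalRing.residue A x ^ p - IsLocalRing.residue A x)
      ∧ (∀ x, IsLocalRing.residue A (f.derivative.eval x) = -1) := by
  obtain ⟨r, hr, hr0, hrd⟩ := LF_intpoly p
  have hres : IsLocalRing.residue A lam = 0 := (IsLocalRing.residue_eq_zero_iff _).mpr hlam
  have hpres : IsLocalRing.residue A (p : A) = 0 := by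
    rw [IsLocalRing.residue_eq_zero_iff, ← neg_mem_iff, ← h]
    exact Ideal.pow_mem_of_mem _ hlam _ (by have := hp.out.two_le; omega)
  let s : A[X] := r.map (Int.castRingHom A)
  have hs0 : s.eval 0 = 1 := by
    have := eval_map_apply (f := Int.castRingHom A) (p := r) (0 : ℤ)
    simp [s, ← coeff_zero_eq_eval_zero] at *
    simp [hr0]
  have hs : ∀ y : A, (1 + y) ^ p = 1 + y ^ p + p * y * s.eval y := by
    intro y
    have := congrArg (fun q => (q.map (Int.castRingHom A)).eval y) hr
    simpa [s] using this
  have hrp : r.degree < (p : WithBot ℕ) := by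
    by_cases hr0' : r = 0
    · rw [hr0', degree_zero]; exact WithBot.bot_lt_coe _
    · refine lt_of_le_of_lt ?_ hrd
      rw [mul_comm]
      exact degree_le_mul_left _ X_ne_zero
  let g : A[X] := X * s.comp (C lam * X)
  have hg : g.degree < (p : WithBot ℕ) := by
    have hnd : (X * r).natDegree < p := by
      rw [natDegree_lt_iff_degree_lt (by
        intro h0
        rcases mul_eq_zero.mp h0 with h1 | h1
        · exact X_ne_zero h1
        · rw [h1] at hr0; simp at hr0)]
      exact hrd
    have hr00 : r ≠ 0 := by rintro rfl; simp at hr0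
    rw [natDegree_X_mul hr00] at hnd
    refine lt_of_le_of_lt degree_le_natDegree ?_
    have h1 : g.natDegree ≤ 1 + r.natDegree := by
      refine natDegree_mul_le.trans (add_le_add natDegree_X_le ?_)
      refine natDegree_comp_le.trans ?_
      refine (Nat.mul_le_mul natDegree_map_le ((natDegree_C_mul_le lam X).trans natDegree_X_le)).trans ?_
      omega
    exact_mod_cast lt_of_le_of_lt h1 (by omega)
  have hmon : (X ^ p - g).Monic := (monic_X_pow p).sub_of_left (by rw [degree_X_pow]; exact hg)
  have hlp := LF_lam_pow p h
  refine ⟨X ^ p - g, hmon, ?_, ?_, ?_, ?_⟩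
  · have : (X ^ p - g).degree = (p : WithBot ℕ) := by
      rw [sub_eq_add_neg, degree_add_eq_left_of_degree_lt]
      · simp
      · rw [degree_neg, degree_X_pow]; exact hg
    rw [this]
    exact_mod_cast hp.out.pos
  · intro x
    rw [hs]
    simp only [g, eval_sub, eval_pow, eval_X, eval_mul, eval_comp, eval_C]
    rw [mul_pow]
    linear_combination (- x * eval (lam * x) s) * hlp
  · intro x
    have h1 : IsLocalRing.residue A (eval (lam * x) s) = 1 := by
      have := sub_dvd_eval_sub (lam * x) 0 s
      rw [sub_zero, hs0] at this
      obtain ⟨c, hc⟩ := this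
      have h2 : eval (lam * x) s = 1 + lam * x * c := by linear_combination hc
      rw [h2]; simp [hres]
    simp [g, h1]
  · intro x
    have h1 : IsLocalRing.residue A (eval (lam * x) s) = 1 := by
      have := sub_dvd_eval_sub (lam * x) 0 s
      rw [sub_zero, hs0] at this
      obtain ⟨c, hc⟩ := this
      have h2 : eval (lam * x) s = 1 + lam * x * c := by linear_combination hc
      rw [h2]; simp [hres]
    simp only [g, derivative_sub, derivative_X_pow, derivative_mul, derivative_X, derivative_comp, derivative_C]
    simp [h1, hres]
    have : ((p : IsLocalRing.ResidueField A)) = 0 := by simpa using hpres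
    simp [this]

open Polynomial in
theorem LF_solve (p : ℕ) [hp : Fact p.Prime] {lam : A} (h : lam ^ (p - 1) = -(p : A))
    (hlam : lam ∈ IsLocalRing.maximalIdeal A) (a x0 : A)
    (hx : IsLocalRing.residue A a = IsLocalRing.residue A x0 ^ p - IsLocalRing.residue A x0) :
    ∃ x, (1 + lam * x) ^ p = 1 + lam ^ p * a ∧
      IsLocalRing.residue A x = IsLocalRing.residue A x0 := by
  obtain ⟨f, hf, hfd, h1, h2, h3⟩ := LF_f p h hlam
  have hmon : (f - C a).Monic := by
    rw [sub_eq_add_neg]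
    apply hf.add_of_left
    rw [degree_neg]
    exact lt_of_le_of_lt degree_C_le hfd
  obtain ⟨x, hx1, hx2⟩ := HenselianLocalRing.is_henselian (f - C a) hmon x0 (by
      rw [← IsLocalRing.residue_eq_zero_iff, eval_sub, eval_C, map_sub, h2, hx, sub_self]) (by
      have h4 := h3 x0
      rw [derivative_sub, derivative_C, sub_zero]
      by_contra hu
      have : eval x0 (derivative f) ∈ IsLocalRing.maximalIdeal A := hu
      rw [← IsLocalRing.residue_eq_zero_iff, h4] at this
      exact one_ne_zero (neg_eq_zero.mp this))
  refine ⟨x, ?_, ?_⟩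
  · rw [IsRoot, eval_sub, eval_C, sub_eq_zero] at hx1
    rw [← h1, hx1]
  · rwa [← sub_eq_zero, ← map_sub, IsLocalRing.residue_eq_zero_iff]

theorem LF_solve_conv (p : ℕ) [hp : Fact p.Prime] {lam : A} (h : lam ^ (p - 1) = -(p : A))
    (hlam : lam ∈ IsLocalRing.maximalIdeal A) (hlam0 : lam ≠ 0) (a x : A)
    (hx : (1 + lam * x) ^ p = 1 + lam ^ p * a) :
    IsLocalRing.residue A a = IsLocalRing.residue A x ^ p - IsLocalRing.residue A x := by
  obtain ⟨f, hf, hfd, h1, h2, h3⟩ := LF_f p h hlam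
  rw [← h1] at hx
  have := mul_left_cancel₀ (pow_ne_zero _ hlam0) (add_left_cancel hx)
  rw [← this, h2]

end hensel

section trace

variable {p : ℕ} [hp : Fact p.Prime] {k : Type} [Field k] [CharP k p] [Finite k]

/-- Fixed points of Frobenius. -/
def LF_K0 (p : ℕ) [hp : Fact p.Prime] (k : Type) [Field k] [CharP k p] : AddSubgroup k where
  carrier := {x | x ^ p = x}
  zero_mem' := zero_pow hp.out.ne_zero
  add_mem' := fun {x y} hx hy => by
    have : (x + y) ^ p = x ^ p + y ^ p := add_pow_char x y p
    exact this.trans (by rw [hx, hy])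
  neg_mem' := fun {x} hx => by
    have : (-x) ^ p = - x ^ p := by
      rw [← frobenius_def, map_neg, frobenius_def]
    exact this.trans (by rw [hx])

theorem LF_K0_card : Nat.card (LF_K0 p k) = p := by
  classical
  apply le_antisymm
  · let P : Polynomial k := Polynomial.X ^ p - Polynomial.X
    have hP : P ≠ 0 := FiniteField.X_pow_card_sub_X_ne_zero k hp.out.one_lt
    have hsub : ((LF_K0 p k : Set k)) ⊆ (P.roots.toFinset : Set k) := by
      intro x hx
      have hx' : x ^ p = x := hx
      simp [P, Polynomial.mem_roots hP, hP, hx']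
    have h1 : Nat.card (LF_K0 p k) ≤ P.roots.toFinset.card := by
      rw [← Set.ncard_coe_finset]
      exact Set.ncard_le_ncard hsub (Finset.finite_toSet _)
    refine h1.trans ((Multiset.toFinset_card_le _).trans ((Polynomial.card_roots' P).trans ?_))
    rw [FiniteField.X_pow_card_sub_X_natDegree_eq k hp.out.one_lt]
  · let f : ZMod p → LF_K0 p k := fun x => ⟨ZMod.castHom dvd_rfl k x, by
      change (ZMod.castHom dvd_rfl k x) ^ p = ZMod.castHom dvd_rfl k x
      rw [← map_pow, ZMod.pow_card]⟩
    have hf : Function.Injective f := by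
      intro x y hxy
      exact (ZMod.castHom dvd_rfl k).injective (congrArg Subtype.val hxy)
    have := Nat.card_le_card_of_injective f hf
    rwa [Nat.card_zmod] at this

theorem LF_trace_exists : ∃ (f : ℕ) (T : k →+ LF_K0 p k),
    (∀ x, (T x : k) = ∑ j ∈ Finset.range f, x ^ (p ^ j)) ∧ Function.Surjective T ∧
      ∀ x, T x = 0 ↔ ∃ y, x = y ^ p - y := by
  classical
  have : Fintype k := Fintype.ofFinite k
  obtain ⟨f, -, hf⟩ := FiniteField.card k p
  have hpow : ∀ x : k, x ^ (p ^ (f : ℕ)) = x := by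
    intro x
    rw [← hf]
    exact FiniteField.pow_card x
  let T : k →+ LF_K0 p k := AddMonoidHom.mk' (fun x => ⟨∑ j ∈ Finset.range f, x ^ (p ^ j), by
      change (∑ j ∈ Finset.range f, x ^ (p ^ j)) ^ p = ∑ j ∈ Finset.range f, x ^ (p ^ j)
      have h1 := sum_pow_char p (Finset.range f) (fun j => x ^ (p ^ j))
      rw [h1]
      simp_rw [← pow_mul, ← pow_succ]
      have h2 := Finset.sum_range_succ (fun j => x ^ (p ^ j)) f
      rw [Finset.sum_range_succ', hpow, pow_zero, pow_one] at h2
      exact add_right_cancel h2⟩) (by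
      intro x y
      apply Subtype.ext
      change ∑ j ∈ Finset.range f, (x + y) ^ (p ^ j) = ∑ j ∈ Finset.range f, x ^ (p ^ j) +
        ∑ j ∈ Finset.range f, y ^ (p ^ j)
      rw [← Finset.sum_add_distrib]
      exact Finset.sum_congr rfl fun j _ => add_pow_char_pow x y p j)
  have hT : ∀ x, (T x : k) = ∑ j ∈ Finset.range f, x ^ (p ^ j) := fun x => rfl
  have hsurj : Function.Surjective T := by
    have hcard := LF_K0_card (p := p) (k := k)
    have hpr : Fact (Nat.card (LF_K0 p k)).Prime := ⟨by rw [hcard]; exact hp.out⟩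
    rcases T.range.eq_bot_or_eq_top_of_prime_card with h | h
    · exfalso
      have h0 : ∀ x : k, ∑ j ∈ Finset.range f, x ^ (p ^ j) = 0 := by
        intro x
        have : T x ∈ T.range := ⟨x, rfl⟩
        rw [h, AddSubgroup.mem_bot] at this
        rw [← hT, this]; rfl
      let P : Polynomial k := ∑ j ∈ Finset.range f, Polynomial.X ^ (p ^ j)
      have hfpos : 0 < (f : ℕ) := f.pos
      have hdeg : P.natDegree ≤ p ^ ((f : ℕ) - 1) := by
        apply Polynomial.natDegree_sum_le_of_forall_le
        intro j hj
        rw [Polynomial.natDegree_X_pow]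
        exact Nat.pow_le_pow_right hp.out.pos (by have := Finset.mem_range.mp hj; omega)
      have hP : P = 0 := by
        apply Polynomial.eq_zero_of_natDegree_lt_card_of_eval_eq_zero' P Finset.univ
        · intro x _
          simp [P, Polynomial.eval_finsetSum, h0]
        · rw [Finset.card_univ, hf]
          exact lt_of_le_of_lt hdeg (Nat.pow_lt_pow_right hp.out.one_lt (by omega))
      have hc : P.coeff 1 = 1 := by
        simp only [P, Polynomial.finsetSum_coeff, Polynomial.coeff_X_pow]
        rw [Finset.sum_eq_single 0]
        · simp
        · intro j _ hj
          rw [if_neg]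
          intro h1
          have := Nat.one_lt_pow hj hp.out.one_lt
          omega
        · intro h1
          exact absurd (Finset.mem_range.mpr hfpos) h1
      rw [hP] at hc
      simp at hc
    · exact AddMonoidHom.range_eq_top.mp h
  refine ⟨f, T, hT, hsurj, ?_⟩
  let W : k →+ k := (frobenius k p : k →+ k) - AddMonoidHom.id k
  have hW : ∀ y, W y = y ^ p - y := fun y => rfl
  have hWker : W.ker = LF_K0 p k := by
    ext y
    rw [AddMonoidHom.mem_ker, hW, sub_eq_zero]
    rfl
  have hle : W.range ≤ T.ker := by
    rintro _ ⟨y, rfl⟩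
    rw [AddMonoidHom.mem_ker, hW, map_sub, sub_eq_zero]
    apply Subtype.ext
    rw [hT, hT]
    have h2 := Finset.sum_range_succ (fun j => y ^ (p ^ j)) f
    rw [Finset.sum_range_succ', hpow, pow_zero, pow_one] at h2
    rw [← add_right_cancel h2]
    exact Finset.sum_congr rfl fun j _ => by rw [← pow_mul, pow_succ']
  have c1 : Nat.card W.ker * Nat.card W.range = Nat.card k := by
    rw [← AddSubgroup.card_mul_index W.ker, AddSubgroup.index_ker]
  have c2 : Nat.card T.ker * Nat.card T.range = Nat.card k := by
    rw [← AddSubgroup.card_mul_index T.ker, AddSubgroup.index_ker]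
  have c3 : Nat.card T.range = p := by
    rw [AddMonoidHom.range_eq_top.mpr hsurj, AddSubgroup.card_top, LF_K0_card]
  rw [hWker, LF_K0_card] at c1
  rw [c3] at c2
  have c4 : Nat.card T.ker ≤ Nat.card W.range := by
    rw [← c2, mul_comm] at c1
    exact (Nat.eq_of_mul_eq_mul_right hp.out.pos c1).ge
  have heq : W.range = T.ker := AddSubgroup.eq_of_le_of_card_ge hle c4
  intro x
  rw [← AddMonoidHom.mem_ker, ← heq, AddMonoidHom.mem_range]
  exact ⟨fun ⟨y, hy⟩ => ⟨y, by rw [← hy, hW]⟩, fun ⟨y, hy⟩ => ⟨y, by rw [hW, hy]⟩⟩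

variable {G : Type} [Group G]

/-- The Frobenius-fixed submodule of a twist. -/
noncomputable def LF_Tw.K0 (D : LF_Tw G k) (hD : ∀ g, D.th g ^ p = D.th g) :
    Submodule (MonoidAlgebra (ZMod p) G) (D.V 1) :=
  LF_submod p (M := D.V 1) (LF_K0 p k) (by
    intro g (x : k) (hx : x ^ p = x)
    rw [D.smul_def]
    change (D.th g ^ 1 * D.a g x) ^ p = D.th g ^ 1 * D.a g x
    rw [mul_pow, ← map_pow, hx, pow_one, hD])

theorem LF_Tw.trace (D : LF_Tw G k) (hD : ∀ g, D.th g ^ p = D.th g) :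
    ∃ T : D.V 1 →ₗ[MonoidAlgebra (ZMod p) G] D.K0 hD, Function.Surjective T ∧
      ∀ x : k, T x = 0 ↔ ∃ y : k, x = y ^ p - y := by
  obtain ⟨f, T, hT, hs, hk⟩ := LF_trace_exists (p := p) (k := k)
  have hD' : ∀ g j, D.th g ^ (p ^ j) = D.th g := by
    intro g j
    induction j with
    | zero => simp
    | succ j ih => rw [pow_succ, pow_mul, ih, hD]
  refine ⟨LF_lin p (M := D.V 1) (N := D.K0 hD) T ?_, hs, hk⟩
  intro g (x : k)
  refine Eq.trans (congrArg T (D.smul_def 1 g x)) ?_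
  apply Subtype.ext
  refine Eq.trans ?_ (D.smul_def 1 g (T x : k)).symm
  rw [hT, hT]
  change ∑ j ∈ Finset.range f, (D.th g ^ 1 * D.a g x) ^ p ^ j = D.th g ^ 1 * D.a g (∑ j ∈ Finset.range f, x ^ p ^ j)
  rw [map_sum, Finset.mul_sum]
  refine Finset.sum_congr rfl fun j _ => ?_
  rw [mul_pow, map_pow, pow_one, hD']

end trace

section action

variable {G A : Type} [Group G] [CommRing A] [IsDomain A] [IsLocalRing A] [MulSemiringAction G A]

/-- The action on the residue field. -/
noncomputable def LF_resAct (G A : Type) [Group G] [CommRing A] [IsLocalRing A]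
    [MulSemiringAction G A] :
    G →* (IsLocalRing.ResidueField A ≃+* IsLocalRing.ResidueField A) :=
  (IsLocalRing.ResidueField.mapAut (R := A)).comp (MulSemiringAction.toRingAut G A)

theorem LF_resAct_apply (g : G) (x : A) :
    LF_resAct G A g (IsLocalRing.residue A x) = IsLocalRing.residue A (g • x) := rfl

/-- The twist attached to an element `π` generating a stable ideal. -/
noncomputable def LF_tw (π : A) (h0 : π ≠ 0) (hπ : ∀ g : G, π ∣ g • π) :
    LF_Tw G (IsLocalRing.ResidueField A) where
  a := LF_resAct G A
  th := fun g => IsLocalRing.residue A (hπ g).choose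
  th_ne := by
    intro g h
    have h1 := (hπ g).choose_spec
    have h2 := (hπ g⁻¹).choose_spec
    have h3 : π * 1 = π * ((hπ g).choose * g • (hπ g⁻¹).choose) := by
      rw [← mul_assoc, ← h1, ← smul_mul', ← h2, smul_inv_smul, mul_one]
    have h4 := mul_left_cancel₀ h0 h3
    have h5 := congrArg (IsLocalRing.residue A) h4
    rw [map_mul, h, zero_mul, map_one] at h5
    exact one_ne_zero h5
  th_mul := by
    intro g h
    rw [LF_resAct_apply, ← map_mul]
    apply congrArg
    apply mul_left_cancel₀ h0
    rw [← (hπ (g * h)).choose_spec, ← mul_assoc, ← (hπ g).choose_spec, ← smul_mul',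
      ← (hπ h).choose_spec, mul_smul]

theorem LF_tw_th (π : A) (h0 : π ≠ 0) (hπ : ∀ g : G, π ∣ g • π) (g : G) (c : A)
    (hc : g • π = π * c) : (LF_tw π h0 hπ).th g = IsLocalRing.residue A c := by
  apply congrArg (IsLocalRing.residue A)
  apply mul_left_cancel₀ h0
  rw [← hc]
  exact (hπ g).choose_spec.symm

theorem LF_tw_ex (π : A) (h0 : π ≠ 0) (hπ : ∀ g : G, π ∣ g • π) (g : G) :
    ∃ c, g • π = π * c ∧ (LF_tw π h0 hπ).th g = IsLocalRing.residue A c :=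
  ⟨_, (hπ g).choose_spec, rfl⟩

theorem LF_U_stable (π : A) (hπ : ∀ g : G, π ∣ g • π) (g : G) (u : Aˣ) (hu : u ∈ LF_U π) :
    LF_ua g u ∈ LF_U π := by
  obtain ⟨a, ha⟩ := LF_mem_U.mp hu
  obtain ⟨c, hc⟩ := hπ g
  apply LF_mem_U.mpr
  refine ⟨c * g • a, ?_⟩
  rw [LF_ua_val, ha, smul_add, smul_one, smul_mul', hc, mul_assoc]

theorem LF_stable_pow (π : A) (hπ : ∀ g : G, π ∣ g • π) (i : ℕ) (g : G) : π ^ i ∣ g • π ^ i := by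
  rw [smul_pow']
  exact pow_dvd_pow_of_dvd (hπ g) i

theorem LF_rho_equiv (p : ℕ) [hp : Fact p.Prime] [CharP (IsLocalRing.ResidueField A) p]
    (π : A) (h0 : π ≠ 0) (hπ : ∀ g : G, π ∣ g • π) (i : ℕ)
    (ρ : Additive (LF_U (π ^ i)) →+ IsLocalRing.ResidueField A)
    (hρ : ∀ (u : LF_U (π ^ i)) (a : A), ((u : Aˣ) : A) = 1 + π ^ i * a →
        ρ (Additive.ofMul u) = IsLocalRing.residue A a) (g : G) (u : LF_U (π ^ i)) :
    (show (LF_tw π h0 hπ).V i from ρ (Additive.ofMul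
      ⟨LF_ua g (u : Aˣ), LF_U_stable _ (LF_stable_pow π hπ i) g _ u.2⟩)) =
      MonoidAlgebra.single g (1 : ZMod p) • (show (LF_tw π h0 hπ).V i from
        ρ (Additive.ofMul u)) := by
  refine Eq.trans ?_ ((LF_tw π h0 hπ).smul_def (p := p) i g (ρ (Additive.ofMul u))).symm
  obtain ⟨a, ha⟩ := LF_mem_U.mp u.2
  obtain ⟨c, hc, hth⟩ := LF_tw_ex π h0 hπ g
  rw [hth, hρ u a ha]
  refine Eq.trans (hρ _ (c ^ i * g • a) ?_) ?_
  · change ((LF_ua g (u : Aˣ) : Aˣ) : A) = _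
    rw [LF_ua_val, ha, smul_add, smul_one, smul_mul', smul_pow', hc]
    ring
  · rw [map_mul, map_pow]
    rfl

end action

section descent

variable {p : ℕ} [hp : Fact p.Prime] {G A L : Type} [Group G] [CommRing A] [Field L] [Algebra A L]
  [MulSemiringAction G A] [MulSemiringAction G L]

/-- The class of a unit. -/
noncomputable def LF_clA (p : ℕ) (A L : Type) [CommRing A] [Field L] [Algebra A L] :
    Additive Aˣ →+ LF_M p L :=
  (LF_cl p L).comp (MonoidHom.toAdditive (Units.map (algebraMap A L : A →* L)))

theorem LF_clA_apply (u : Aˣ) : LF_clA p A L (Additive.ofMul u) =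
    LF_cl p L (Additive.ofMul (Units.map (algebraMap A L : A →* L) u)) := rfl

theorem LF_clA_smul (hc : ∀ (g : G) (a : A), algebraMap A L (g • a) = g • algebraMap A L a)
    (g : G) (u : Aˣ) : MonoidAlgebra.single g (1 : ZMod p) • LF_clA p A L (Additive.ofMul u) =
      LF_clA p A L (Additive.ofMul (LF_ua g u)) := by
  rw [LF_clA_apply, LF_clA_apply, LF_M_smul]
  congr 2
  ext
  exact (hc g u).symm

theorem LF_clA_zero [IsDomain A] [IsFractionRing A L] [IsIntegrallyClosed A] (u : Aˣ) :
    LF_clA p A L (Additive.ofMul u) = 0 ↔ ∃ y : Aˣ, y ^ p = u := by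
  rw [LF_clA_apply, LF_cl_zero]
  constructor
  · rintro ⟨y, hy⟩
    have hy' : (y : L) ^ p = algebraMap A L u := congrArg Units.val hy
    have hintg : IsIntegral A (y : L) := by
      apply IsIntegral.of_pow hp.out.pos
      rw [hy']
      exact isIntegral_algebraMap
    obtain ⟨z, hz⟩ := IsIntegrallyClosed.isIntegral_iff.mp hintg
    have hz' : z ^ p = u := by
      apply IsFractionRing.injective A L
      rw [map_pow, hz, hy']
    have hu : IsUnit z := by
      rw [← isUnit_pow_iff hp.out.ne_zero, hz']
      exact u.isUnit
    exact ⟨hu.unit, Units.ext hz'⟩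
  · rintro ⟨y, rfl⟩
    exact ⟨Units.map (algebraMap A L : A →* L) y, (map_pow _ _ _).symm⟩

/-- The submodule of classes of units in a stable subgroup. -/
noncomputable def LF_F (p : ℕ) [hp : Fact p.Prime] {G A L : Type} [Group G] [CommRing A] [Field L]
    [Algebra A L] [MulSemiringAction G A] [MulSemiringAction G L]
    (hc : ∀ (g : G) (a : A), algebraMap A L (g • a) = g • algebraMap A L a)
    (S : Subgroup Aˣ) (hS : ∀ (g : G), ∀ u ∈ S, LF_ua g u ∈ S) :
    Submodule (MonoidAlgebra (ZMod p) G) (LF_M p L) :=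
  LF_submod p ((Subgroup.toAddSubgroup S).map (LF_clA p A L)) (by
    rintro g _ ⟨u, hu, rfl⟩
    refine ⟨Additive.ofMul (LF_ua g (Additive.toMul u)), hS g _ hu, ?_⟩
    exact (LF_clA_smul hc g (Additive.toMul u)).symm)

theorem LF_mem_F (hc : ∀ (g : G) (a : A), algebraMap A L (g • a) = g • algebraMap A L a)
    (S : Subgroup Aˣ) (hS : ∀ (g : G), ∀ u ∈ S, LF_ua g u ∈ S) (x : LF_M p L) :
    x ∈ LF_F p hc S hS ↔ ∃ u ∈ S, LF_clA p A L (Additive.ofMul u) = x := Iff.rfl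

theorem LF_descend (hc : ∀ (g : G) (a : A), algebraMap A L (g • a) = g • algebraMap A L a)
    (S : Subgroup Aˣ) (hS : ∀ (g : G), ∀ u ∈ S, LF_ua g u ∈ S)
    {V : Type} [AddCommGroup V] [Module (MonoidAlgebra (ZMod p) G) V] (q : Additive S →+ V)
    (hz : ∀ u : S, LF_clA p A L (Additive.ofMul (u : Aˣ)) = 0 → q (Additive.ofMul u) = 0)
    (heq : ∀ (g : G) (u : S), q (Additive.ofMul ⟨LF_ua g (u : Aˣ), hS g _ u.2⟩) =
      MonoidAlgebra.single g (1 : ZMod p) • q (Additive.ofMul u)) :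
    ∃ Q : LF_F p hc S hS →ₗ[MonoidAlgebra (ZMod p) G] V, ∀ (u : S) (x : LF_F p hc S hS),
      (x : LF_M p L) = LF_clA p A L (Additive.ofMul (u : Aˣ)) → Q x = q (Additive.ofMul u) := by
  choose c hcS hcx using fun x : LF_F p hc S hS => (LF_mem_F hc S hS (x : LF_M p L)).mp x.2
  have key : ∀ (u : S) (x : LF_F p hc S hS),
      (x : LF_M p L) = LF_clA p A L (Additive.ofMul (u : Aˣ)) →
        q (Additive.ofMul ⟨c x, hcS x⟩) = q (Additive.ofMul u) := by
    intro u x hx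
    rw [← sub_eq_zero, ← map_sub]
    apply hz ((⟨c x, hcS x⟩ : S) / u)
    have : (((⟨c x, hcS x⟩ : S) / u : S) : Aˣ) = c x / u := rfl
    rw [this, ofMul_div, map_sub, hcx, hx, sub_self]
  let Q0 : LF_F p hc S hS →+ V := AddMonoidHom.mk' (fun x => q (Additive.ofMul ⟨c x, hcS x⟩)) (by
    intro x y
    rw [← map_add, ← ofMul_mul]
    apply key
    have : ((⟨c x, hcS x⟩ * ⟨c y, hcS y⟩ : S) : Aˣ) = c x * c y := rfl
    rw [this, ofMul_mul, map_add, hcx, hcx]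
    rfl)
  refine ⟨LF_lin p Q0 ?_, key⟩
  intro g x
  change q (Additive.ofMul ⟨c _, hcS _⟩) = MonoidAlgebra.single g (1 : ZMod p) •
    q (Additive.ofMul ⟨c x, hcS x⟩)
  rw [← heq]
  apply key
  have := LF_clA_smul (p := p) hc g (c x)
  rw [hcx] at this
  exact this

end descent

section steps

variable {p : ℕ} [hp : Fact p.Prime] {G A L : Type} [Group G] [CommRing A] [IsDomain A]
  [IsDiscreteValuationRing A] [Field L] [Algebra A L] [IsFractionRing A L]
  [MulSemiringAction G A] [MulSemiringAction G L] [CharP (IsLocalRing.ResidueField A) p]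

/-- The filtration. -/
noncomputable def LF_Fi (p : ℕ) [hp : Fact p.Prime] {G A L : Type} [Group G] [CommRing A]
    [IsDomain A] [IsDiscreteValuationRing A] [Field L] [Algebra A L]
    [MulSemiringAction G A] [MulSemiringAction G L]
    (hc : ∀ (g : G) (a : A), algebraMap A L (g • a) = g • algebraMap A L a)
    (ϖ : A) (hst : ∀ g : G, ϖ ∣ g • ϖ) (i : ℕ) :
    Submodule (MonoidAlgebra (ZMod p) G) (LF_M p L) :=
  LF_F p hc (LF_U (ϖ ^ i)) (LF_U_stable _ (LF_stable_pow ϖ hst i))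

theorem LF_mem_max_of_irr {ϖ : A} (hϖ : Irreducible ϖ) :
    ϖ ∈ IsLocalRing.maximalIdeal A := (IsLocalRing.mem_maximalIdeal ϖ).mpr hϖ.not_isUnit

theorem LF_residue_zero {ϖ : A} (hϖ : Irreducible ϖ) (a : A) :
    IsLocalRing.residue A a = 0 ↔ ϖ ∣ a := by
  rw [IsLocalRing.residue_eq_zero_iff, hϖ.maximalIdeal_eq, Ideal.mem_span_singleton]

theorem LF_Fi_split (hc : ∀ (g : G) (a : A), algebraMap A L (g • a) = g • algebraMap A L a)
    (ϖ : A) (hϖ : Irreducible ϖ) (hst : ∀ g : G, ϖ ∣ g • ϖ) (E : ℕ)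
    (hpE : ϖ ^ ((p - 1) * E) ∣ (p : A)) (i : ℕ) (hi : i < p * E) (hpi : ¬ p ∣ i)
    (hproj : Module.Projective (MonoidAlgebra (ZMod p) G) ((LF_tw ϖ hϖ.ne_zero hst).V i)) :
    Nonempty (LF_Fi p hc ϖ hst i ≃ₗ[MonoidAlgebra (ZMod p) G]
      LF_Fi p hc ϖ hst (i + 1) × (LF_tw ϖ hϖ.ne_zero hst).V i) := by
  have hi0 : i ≠ 0 := by rintro rfl; exact hpi (dvd_zero p)
  have hmem : ϖ ^ i ∈ IsLocalRing.maximalIdeal A :=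
    Ideal.pow_mem_of_mem _ (LF_mem_max_of_irr hϖ) i (Nat.pos_of_ne_zero hi0)
  have hne : ϖ ^ i ≠ 0 := pow_ne_zero i hϖ.ne_zero
  obtain ⟨ρ, hρ⟩ := LF_rho (ϖ ^ i) hne hmem
  have hdvd : ϖ ^ i ∣ ϖ ^ (i + 1) := pow_dvd_pow _ (Nat.le_succ i)
  obtain ⟨Q, hQ⟩ := LF_descend (p := p) (L := L) hc (LF_U (ϖ ^ i))
    (LF_U_stable _ (LF_stable_pow ϖ hst i)) (V := (LF_tw ϖ hϖ.ne_zero hst).V i) ρ (by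
      intro u hu
      obtain ⟨y, hy⟩ := (LF_clA_zero (p := p) (L := L) (u : Aˣ)).mp hu
      have h1 : y ^ p ∈ LF_U (ϖ ^ i) := by rw [hy]; exact u.2
      have h2 := LF_pow_jump p E hϖ hpE y i hi hpi h1
      rw [hy] at h2
      obtain ⟨a, ha⟩ := LF_mem_U.mp h2
      refine (hρ u (ϖ * a) (by rw [ha]; ring)).trans ?_
      exact (LF_residue_zero hϖ _).mpr (dvd_mul_right _ _))
    (LF_rho_equiv p ϖ hϖ.ne_zero hst i ρ hρ)
  refine LF_split (LF_Fi p hc ϖ hst i) (LF_Fi p hc ϖ hst (i + 1)) ?_ Q ?_ ?_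
  · rintro x ⟨u, hu, rfl⟩
    exact ⟨u, LF_U_le hdvd hu, rfl⟩
  · intro v
    obtain ⟨a, ha⟩ := IsLocalRing.residue_surjective (R := A) v
    obtain ⟨u, hu, hua⟩ := LF_U_exists hmem a
    refine ⟨⟨LF_clA p A L (Additive.ofMul u), ⟨u, hu, rfl⟩⟩, ?_⟩
    exact (hQ ⟨u, hu⟩ _ rfl).trans ((hρ ⟨u, hu⟩ a hua).trans ha)
  · rintro ⟨x, u, hu, rfl⟩
    have h1 := hQ ⟨Additive.toMul u, hu⟩ ⟨LF_clA p A L u, ⟨u, hu, rfl⟩⟩ rfl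
    obtain ⟨a, ha⟩ := LF_mem_U.mp hu
    have h2 := hρ ⟨Additive.toMul u, hu⟩ a ha
    constructor
    · intro h
      have h3 : IsLocalRing.residue A a = 0 := h2.symm.trans (h1.symm.trans h)
      obtain ⟨b, rfl⟩ := (LF_residue_zero hϖ _).mp h3
      exact ⟨u, LF_mem_U.mpr ⟨b, by rw [ha]; ring⟩, rfl⟩
    · rintro ⟨w, hw, hwu⟩
      obtain ⟨b, hb⟩ := LF_mem_U.mp hw
      have hw' : Additive.toMul w ∈ LF_U (ϖ ^ i) := LF_U_le hdvd hw
      have h4 := hQ ⟨Additive.toMul w, hw'⟩ ⟨LF_clA p A L u, ⟨u, hu, rfl⟩⟩ hwu.symm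
      refine h4.trans ((hρ ⟨Additive.toMul w, hw'⟩ (ϖ * b) (hb.trans (by ring))).trans ?_)
      exact (LF_residue_zero hϖ _).mpr (dvd_mul_right _ _)

theorem LF_Fi_eq (hc : ∀ (g : G) (a : A), algebraMap A L (g • a) = g • algebraMap A L a)
    [Finite (IsLocalRing.ResidueField A)]
    (ϖ : A) (hϖ : Irreducible ϖ) (hst : ∀ g : G, ϖ ∣ g • ϖ) (E : ℕ)
    (hpE : ϖ ^ ((p - 1) * E) ∣ (p : A)) (i : ℕ) (hi : i < p * E) (hpi : p ∣ i) :
    LF_Fi (L := L) p hc ϖ hst i = LF_Fi p hc ϖ hst (i + 1) := by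
  obtain ⟨j, rfl⟩ := hpi
  have hj : j < E := Nat.lt_of_mul_lt_mul_left hi
  apply le_antisymm
  · rintro x ⟨u, hu, rfl⟩
    obtain ⟨y, hy⟩ := LF_pmul p E j hj hϖ hpE (Additive.toMul u) hu
    refine ⟨_, hy, ?_⟩
    change LF_clA p A L (Additive.ofMul (Additive.toMul u * (y ^ p)⁻¹)) = _
    rw [ofMul_mul, map_add, ofMul_inv, map_neg, (LF_clA_zero (y ^ p)).mpr ⟨y, rfl⟩, neg_zero,
      add_zero]
    rfl
  · rintro x ⟨u, hu, rfl⟩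
    exact ⟨u, LF_U_le (pow_dvd_pow _ (Nat.le_succ _)) hu, rfl⟩

end steps

section top

variable {p : ℕ} [hp : Fact p.Prime] {G A L : Type} [Group G] [CommRing A] [IsDomain A]
  [IsDiscreteValuationRing A] [HenselianLocalRing A] [Field L] [Algebra A L] [IsFractionRing A L]
  [MulSemiringAction G A] [MulSemiringAction G L] [CharP (IsLocalRing.ResidueField A) p]
  [Finite (IsLocalRing.ResidueField A)]

theorem LF_top (hc : ∀ (g : G) (a : A), algebraMap A L (g • a) = g • algebraMap A L a)
    (lam : A) (h0 : lam ≠ 0) (hlam : lam ^ (p - 1) = -(p : A))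
    (hmem : lam ∈ IsLocalRing.maximalIdeal A) (hst : ∀ g : G, lam ∣ g • lam)
    (hD : ∀ g, (LF_tw lam h0 hst).th g ^ p = (LF_tw lam h0 hst).th g)
    (hroot : ∀ y : Aˣ, y ^ p ∈ LF_U (lam ^ p) → y ∈ LF_U lam) :
    Nonempty (LF_F (L := L) p hc (LF_U (lam ^ p)) (LF_U_stable _ (LF_stable_pow lam hst p))
      ≃ₗ[MonoidAlgebra (ZMod p) G] (LF_tw lam h0 hst).K0 (p := p) hD) := by
  obtain ⟨T, hTs, hTk⟩ := (LF_tw lam h0 hst).trace (p := p) hD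
  have hmem' : lam ^ p ∈ IsLocalRing.maximalIdeal A :=
    Ideal.pow_mem_of_mem _ hmem p hp.out.pos
  obtain ⟨ρ, hρ⟩ := LF_rho (lam ^ p) (pow_ne_zero p h0) hmem'
  obtain ⟨Q, hQ⟩ := LF_descend (p := p) (L := L) hc (LF_U (lam ^ p))
    (LF_U_stable _ (LF_stable_pow lam hst p)) (V := (LF_tw lam h0 hst).K0 (p := p) hD)
    (T.toAddMonoidHom.comp ρ) (by
      intro u hu
      obtain ⟨y, hy⟩ := (LF_clA_zero (p := p) (L := L) (u : Aˣ)).mp hu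
      have h1 : y ∈ LF_U lam := hroot y (by rw [hy]; exact u.2)
      obtain ⟨x, hx⟩ := LF_mem_U.mp h1
      obtain ⟨a, ha⟩ := LF_mem_U.mp u.2
      have h2 : (1 + lam * x) ^ p = 1 + lam ^ p * a := by
        rw [← hx, ← ha, ← hy]; rfl
      have h3 := LF_solve_conv p hlam hmem h0 a x h2
      refine (congrArg T (hρ u a ha)).trans ?_
      exact (hTk _).mpr ⟨_, h3⟩)
    (by
      intro g u
      change T _ = MonoidAlgebra.single g (1 : ZMod p) • T _
      rw [← map_smul]
      apply congrArg T
      refine Eq.trans (LF_rho_equiv p lam h0 hst p ρ hρ g u) ?_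
      refine Eq.trans ((LF_tw lam h0 hst).smul_def (p := p) p g (ρ (Additive.ofMul u))) ?_
      refine Eq.trans ?_ ((LF_tw lam h0 hst).smul_def (p := p) 1 g (ρ (Additive.ofMul u))).symm
      rw [hD, pow_one])
  refine ⟨LinearEquiv.ofBijective Q ⟨?_, ?_⟩⟩
  · rw [injective_iff_map_eq_zero]
    rintro ⟨x, u, hu, rfl⟩ h
    have h1 := hQ ⟨Additive.toMul u, hu⟩ ⟨LF_clA p A L u, ⟨u, hu, rfl⟩⟩ rfl
    obtain ⟨a, ha⟩ := LF_mem_U.mp hu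
    have h2 : T (IsLocalRing.residue A a) = 0 :=
      (congrArg T (hρ ⟨Additive.toMul u, hu⟩ a ha)).symm.trans (h1.symm.trans h)
    obtain ⟨y, hy⟩ := (hTk _).mp h2
    obtain ⟨x0, rfl⟩ := IsLocalRing.residue_surjective y
    obtain ⟨x, hx, -⟩ := LF_solve p hlam hmem a x0 hy
    apply Subtype.ext
    have hu' : IsUnit (1 + lam * x) := by
      rw [← isUnit_pow_iff hp.out.ne_zero, hx, ← ha]
      exact (Additive.toMul u).isUnit
    refine (LF_clA_zero (p := p) (L := L) (Additive.toMul u)).mpr ⟨hu'.unit, ?_⟩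
    ext
    exact hx.trans ha.symm
  · intro v
    obtain ⟨w, rfl⟩ := hTs v
    obtain ⟨a, ha⟩ := IsLocalRing.residue_surjective (R := A) w
    obtain ⟨u, hu, hua⟩ := LF_U_exists hmem' a
    refine ⟨⟨LF_clA p A L (Additive.ofMul u), ⟨u, hu, rfl⟩⟩, ?_⟩
    exact (hQ ⟨u, hu⟩ _ rfl).trans (congrArg T ((hρ ⟨u, hu⟩ a hua).trans ha))

theorem LF_mu (hc : ∀ (g : G) (a : A), algebraMap A L (g • a) = g • algebraMap A L a)
    (lam : A) (h0 : lam ≠ 0) (hlam : lam ^ (p - 1) = -(p : A))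
    (hmem : lam ∈ IsLocalRing.maximalIdeal A) (hst : ∀ g : G, lam ∣ g • lam)
    (hD : ∀ g, (LF_tw lam h0 hst).th g ^ p = (LF_tw lam h0 hst).th g)
    (hroot : ∀ y : Aˣ, y ^ p ∈ LF_U (lam ^ p) → y ∈ LF_U lam) :
    Nonempty (LF_Mu p L ≃ₗ[MonoidAlgebra (ZMod p) G] (LF_tw lam h0 hst).K0 (p := p) hD) := by
  have hinj : Function.Injective (Units.map (algebraMap A L : A →* L)) :=
    Units.map_injective (IsFractionRing.injective A L)
  have hex : ∀ x : rootsOfUnity p L, ∃ y : LF_U (lam ^ 1),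
      Units.map (algebraMap A L : A →* L) (y : Aˣ) = x := by
    intro x
    have hx : (x : Lˣ) ^ p = 1 := x.2
    have hx' : ((x : Lˣ) : L) ^ p = 1 := congrArg Units.val hx
    have hintg : IsIntegral A ((x : Lˣ) : L) := by
      apply IsIntegral.of_pow hp.out.pos
      rw [hx']
      exact isIntegral_one
    obtain ⟨z, hz⟩ := IsIntegrallyClosed.isIntegral_iff.mp hintg
    have hz' : z ^ p = 1 := by
      apply IsFractionRing.injective A L
      rw [map_pow, hz, hx', map_one]
    have hu : IsUnit z := IsUnit.of_pow_eq_one hz' hp.out.ne_zero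
    refine ⟨⟨hu.unit, ?_⟩, Units.ext hz⟩
    rw [pow_one]
    apply hroot
    have : hu.unit ^ p = 1 := Units.ext hz'
    rw [this]
    exact Subgroup.one_mem _
  choose c hcx using hex
  have key : ∀ (x : rootsOfUnity p L) (y : LF_U (lam ^ 1)),
      Units.map (algebraMap A L : A →* L) (y : Aˣ) = x → c x = y := by
    intro x y hy
    exact Subtype.ext (hinj ((hcx x).trans hy.symm))
  let C : rootsOfUnity p L →* LF_U (lam ^ 1) := MonoidHom.mk' c (by
    intro x y
    apply key
    rw [Subgroup.coe_mul, map_mul, hcx, hcx]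
    rfl)
  obtain ⟨ρ, hρ⟩ := LF_rho (lam ^ 1) (pow_ne_zero 1 h0) (by rwa [pow_one])
  let f : LF_Mu p L →ₗ[MonoidAlgebra (ZMod p) G] (LF_tw lam h0 hst).V 1 :=
    LF_lin p (M := LF_Mu p L) (N := (LF_tw lam h0 hst).V 1)
      (ρ.comp (MonoidHom.toAdditive C) : Additive (rootsOfUnity p L) →+ _) (by
      intro g (x : rootsOfUnity p L)
      refine Eq.trans ?_ (LF_rho_equiv p lam h0 hst 1 ρ hρ g (c x))
      have h1 := LF_Mu_smul p G L g x
      refine Eq.trans (congrArg _ h1) ?_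
      apply congrArg ρ
      apply congrArg Additive.ofMul
      apply key
      change Units.map (algebraMap A L : A →* L) (LF_ua g (c x : Aˣ)) = LF_ua g (x : Lˣ)
      rw [← hcx x]
      ext
      exact hc g _)
  have hf : ∀ (x : rootsOfUnity p L) (a : A), ((c x : Aˣ) : A) = 1 + lam * a →
      f (show LF_Mu p L from Additive.ofMul x) = IsLocalRing.residue A a := by
    intro x a ha
    exact hρ (c x) a (by rw [ha, pow_one])
  have hf2 : ∀ x : LF_Mu p L, f x ∈ (LF_tw lam h0 hst).K0 (p := p) hD := by
    intro (x : rootsOfUnity p L)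
    obtain ⟨a, ha'⟩ := LF_mem_U.mp (c x).2
    have ha : ((c x : Aˣ) : A) = 1 + lam * a := ha'.trans (by rw [pow_one])
    have h1 := hf x a ha
    have h2 : (c x : Aˣ) ^ p = 1 := by
      apply hinj
      rw [map_pow, hcx, map_one]
      exact x.2
    have h3 : (1 + lam * a) ^ p = 1 + lam ^ p * 0 := by
      rw [mul_zero, add_zero, ← ha, ← Units.val_pow_eq_pow_val, h2, Units.val_one]
    have h4 := LF_solve_conv p hlam hmem h0 0 a h3
    have h5 : f (show LF_Mu p L from Additive.ofMul x) ∈ LF_K0 p (IsLocalRing.ResidueField A) := by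
      rw [h1]
      rw [map_zero] at h4
      exact (sub_eq_zero.mp h4.symm)
    exact h5
  let f' := LinearMap.codRestrict _ f hf2
  have hsurj : Function.Surjective f' := by
    rintro ⟨v, hv⟩
    have hv' : (show IsLocalRing.ResidueField A from v) ^ p = v := hv
    obtain ⟨x0, rfl⟩ := IsLocalRing.residue_surjective (R := A) v
    obtain ⟨x, hx, hxx⟩ := LF_solve p hlam hmem 0 x0 (by
      rw [map_zero]; exact (sub_eq_zero.mpr hv').symm)
    rw [mul_zero, add_zero] at hx
    have hu : IsUnit (1 + lam * x) := IsUnit.of_pow_eq_one hx hp.out.ne_zero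
    have hr : Units.map (algebraMap A L : A →* L) hu.unit ∈ rootsOfUnity p L := by
      rw [mem_rootsOfUnity, ← map_pow]
      have : hu.unit ^ p = 1 := Units.ext hx
      rw [this, map_one]
    have hU : hu.unit ∈ LF_U (lam ^ 1) := LF_mem_U.mpr ⟨x, by rw [pow_one]; rfl⟩
    have hcc := key ⟨_, hr⟩ ⟨hu.unit, hU⟩ rfl
    refine ⟨(show LF_Mu p L from Additive.ofMul (⟨_, hr⟩ : rootsOfUnity p L)), ?_⟩
    apply Subtype.ext
    refine (hf ⟨_, hr⟩ x ?_).trans hxx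
    rw [hcc]
    rfl
  have : NeZero p := ⟨hp.out.ne_zero⟩
  have hcard : Nat.card (LF_Mu p L) ≤ Nat.card ((LF_tw lam h0 hst).K0 (p := p) hD) := by
    have h1 : Nat.card (LF_Mu p L) ≤ p := by
      exact card_rootsOfUnity L p
    have h2 : Nat.card ((LF_tw lam h0 hst).K0 (p := p) hD) = p :=
      LF_K0_card (p := p) (k := IsLocalRing.ResidueField A)
    rw [h2]
    exact h1
  exact ⟨LinearEquiv.ofBijective f' (hsurj.bijective_of_nat_card_le hcard)⟩

end top

section val

variable {p : ℕ} [hp : Fact p.Prime] {G A L : Type} [Group G] [CommRing A] [IsDomain A]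
  [IsDiscreteValuationRing A] [Field L] [Algebra A L] [IsFractionRing A L]
  [MulSemiringAction G A] [MulSemiringAction G L]

theorem LF_unif_smul {ϖ : A} (hϖ : Irreducible ϖ) (g : G) : ϖ ∣ g • ϖ := by
  have h : g • ϖ ∈ IsLocalRing.maximalIdeal A := by
    rw [IsLocalRing.mem_maximalIdeal]
    intro h
    have h2 := h.map (MulSemiringAction.toRingHom G A g⁻¹)
    apply hϖ.not_isUnit
    simpa using h2
  rwa [hϖ.maximalIdeal_eq, Ideal.mem_span_singleton] at h

theorem LF_unit_zpow {ϖ : A} (hϖ : Irreducible ϖ) (x : Lˣ) :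
    ∃ (z : ℤ) (u : Aˣ), (x : L) = algebraMap A L u * (algebraMap A L ϖ) ^ z := by
  have hinj := IsFractionRing.injective A L
  have hϖ0 : algebraMap A L ϖ ≠ 0 := by
    rw [Ne, map_eq_zero_iff _ hinj]; exact hϖ.ne_zero
  obtain ⟨a, b, hb, hab⟩ := IsFractionRing.div_surjective (A := A) (x : L)
  have hb0 : b ≠ 0 := nonZeroDivisors.ne_zero hb
  have ha0 : a ≠ 0 := by
    rintro rfl
    rw [map_zero, zero_div] at hab
    exact x.ne_zero hab.symm
  obtain ⟨n, u, rfl⟩ := IsDiscreteValuationRing.eq_unit_mul_pow_irreducible ha0 hϖ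
  obtain ⟨m, v, rfl⟩ := IsDiscreteValuationRing.eq_unit_mul_pow_irreducible hb0 hϖ
  refine ⟨(n : ℤ) - m, u * v⁻¹, ?_⟩
  have hv0 : algebraMap A L (v : A) ≠ 0 := by
    rw [Ne, map_eq_zero_iff _ hinj]; exact v.ne_zero
  have hv : algebraMap A L ((v⁻¹ : Aˣ) : A) = (algebraMap A L (v : A))⁻¹ := by
    apply eq_inv_of_mul_eq_one_left
    rw [← map_mul, Units.inv_mul, map_one]
  rw [← hab, zpow_sub₀ hϖ0, zpow_natCast, zpow_natCast, Units.val_mul, map_mul, map_mul, map_mul,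
    map_pow, map_pow, hv]
  field_simp

theorem LF_unit_zpow_unique {ϖ : A} (hϖ : Irreducible ϖ) (z z' : ℤ) (u u' : Aˣ)
    (h : algebraMap A L u * (algebraMap A L ϖ) ^ z = algebraMap A L u' * (algebraMap A L ϖ) ^ z') :
    z = z' := by
  have hinj := IsFractionRing.injective A L
  have hϖ0 : algebraMap A L ϖ ≠ 0 := by
    rw [Ne, map_eq_zero_iff _ hinj]; exact hϖ.ne_zero
  have main : ∀ (z z' : ℤ) (u u' : Aˣ), algebraMap A L u * (algebraMap A L ϖ) ^ z =
      algebraMap A L u' * (algebraMap A L ϖ) ^ z' → ¬ z < z' := by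
    intro z z' u u' h hlt
    obtain ⟨m, hm⟩ := Int.eq_ofNat_of_zero_le (sub_nonneg.mpr hlt.le)
    have hm0 : m ≠ 0 := by rintro rfl; simp at hm; omega
    have hz : z' = z + m := by omega
    rw [hz, zpow_add₀ hϖ0, zpow_natCast, mul_left_comm, mul_comm] at h
    have h1 := mul_left_cancel₀ (zpow_ne_zero z hϖ0) h
    rw [← map_pow, ← map_mul] at h1
    have h2 := hinj h1
    apply hϖ.not_isUnit
    have h3 : IsUnit (ϖ ^ m) := by
      apply isUnit_of_dvd_unit _ u.isUnit
      rw [h2]; exact dvd_mul_left _ _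
    exact (isUnit_pow_iff hm0).mp h3
  have h1 := main z z' u u' h
  have h2 := main z' z u' u h.symm
  omega

theorem LF_val {ϖ : A} (hϖ : Irreducible ϖ) : ∃ v : Additive Lˣ →+ ℤ,
    ∀ (x : Lˣ) (z : ℤ) (u : Aˣ), (x : L) = algebraMap A L u * (algebraMap A L ϖ) ^ z →
      v (Additive.ofMul x) = z := by
  choose z u h using LF_unit_zpow (A := A) (L := L) hϖ
  have hinj := IsFractionRing.injective A L
  have hϖ0 : algebraMap A L ϖ ≠ 0 := by
    rw [Ne, map_eq_zero_iff _ hinj]; exact hϖ.ne_zero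
  have key : ∀ (x : Lˣ) (z' : ℤ) (u' : Aˣ),
      (x : L) = algebraMap A L u' * (algebraMap A L ϖ) ^ z' → z x = z' := by
    intro x z' u' h'
    exact LF_unit_zpow_unique hϖ _ _ _ _ ((h x).symm.trans h')
  refine ⟨AddMonoidHom.mk' (fun x => z (Additive.toMul x)) ?_, key⟩
  intro x y
  apply key _ _ (u (Additive.toMul x) * u (Additive.toMul y))
  rw [toMul_add, Units.val_mul, h (Additive.toMul x), h (Additive.toMul y), zpow_add₀ hϖ0,
    Units.val_mul, map_mul]
  ring

theorem LF_val_inv {ϖ : A} (hϖ : Irreducible ϖ)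
    (hc : ∀ (g : G) (a : A), algebraMap A L (g • a) = g • algebraMap A L a)
    (v : Additive Lˣ →+ ℤ) (hv : ∀ (x : Lˣ) (z : ℤ) (u : Aˣ),
      (x : L) = algebraMap A L u * (algebraMap A L ϖ) ^ z → v (Additive.ofMul x) = z)
    (g : G) (x : Lˣ) : v (Additive.ofMul (LF_ua g x)) = v (Additive.ofMul x) := by
  obtain ⟨z, u, h⟩ := LF_unit_zpow (A := A) hϖ x
  rw [hv x z u h]
  obtain ⟨c, hcϖ⟩ := LF_unif_smul hϖ g
  have hcu : IsUnit c := by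
    obtain ⟨c', hc'⟩ := LF_unif_smul hϖ g⁻¹
    have h3 : ϖ * 1 = ϖ * (c * g • c') := by
      rw [← mul_assoc, ← hcϖ, ← smul_mul', ← hc', smul_inv_smul, mul_one]
    exact IsUnit.of_mul_eq_one _ (mul_left_cancel₀ hϖ.ne_zero h3).symm
  obtain ⟨w, rfl⟩ := hcu
  have hz : ∀ y : L, g • (y ^ z) = (g • y) ^ z := fun y =>
    map_zpow₀ (MulSemiringAction.toRingHom G L g) y z
  apply hv _ z (LF_ua g u * w ^ z)
  have hwz : algebraMap A L ((w ^ z : Aˣ) : A) = (algebraMap A L (w : A)) ^ z := by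
    have := congrArg Units.val (map_zpow (Units.map (algebraMap A L : A →* L)) w z)
    rw [Units.val_zpow_eq_zpow_val] at this
    exact this
  rw [LF_ua_val, h, smul_mul', hz, ← hc, ← hc, hcϖ, Units.val_mul, map_mul, map_mul, mul_zpow,
    hwz, LF_ua_val]
  ring

theorem LF_valsplit {ϖ : A} (hϖ : Irreducible ϖ)
    (hc : ∀ (g : G) (a : A), algebraMap A L (g • a) = g • algebraMap A L a)
    (κ : A) (hκ : ∀ g : G, g • κ = κ) (m : ℕ) (hm : ¬ p ∣ m) (hκm : Associated (ϖ ^ m) κ) :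
    Nonempty (LF_M p L ≃ₗ[MonoidAlgebra (ZMod p) G]
      LF_Fi (L := L) p hc ϖ (LF_unif_smul hϖ) 0 × LF_Z p) := by
  obtain ⟨v, hv⟩ := LF_val (A := A) (L := L) hϖ
  have hinj := IsFractionRing.injective A L
  have hϖ0 : algebraMap A L ϖ ≠ 0 := by
    rw [Ne, map_eq_zero_iff _ hinj]; exact hϖ.ne_zero
  let v' : Lˣ →* Multiplicative (ZMod p) :=
    AddMonoidHom.toMultiplicativeRight ((Int.castAddHom (ZMod p)).comp v)
  let q0 : LF_M p L →+ LF_Z p := MonoidHom.toAdditiveLeft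
    (QuotientGroup.lift (powMonoidHom p : Lˣ →* Lˣ).range v' (by
      rintro _ ⟨y, rfl⟩
      change v' (y ^ p) = 1
      rw [map_pow]
      apply Multiplicative.toAdd.injective
      rw [toAdd_pow, toAdd_one, nsmul_eq_mul, CharP.cast_eq_zero, zero_mul]))
  have hq0 : ∀ x : Lˣ, q0 (LF_cl p L (Additive.ofMul x)) = ((v (Additive.ofMul x) : ℤ) : ZMod p) :=
    fun x => rfl
  let q : LF_M p L →ₗ[MonoidAlgebra (ZMod p) G] LF_Z p := LF_lin p q0 (by
    intro g x
    obtain ⟨y, rfl⟩ := LF_cl_surj p L x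
    rw [LF_M_smul, LF_Z_smul, hq0, hq0, LF_val_inv hϖ hc v hv])
  have hκ0 : algebraMap A L κ ≠ 0 := by
    rw [Ne, map_eq_zero_iff _ hinj]
    rintro rfl
    have := hκm.symm.eq_zero_iff.mp rfl
    exact pow_ne_zero m hϖ.ne_zero this
  let κ' : Lˣ := Units.mk0 _ hκ0
  have hvκ : v (Additive.ofMul κ') = m := by
    obtain ⟨u, hu⟩ := hκm
    apply hv _ _ u
    change algebraMap A L κ = _
    rw [← hu, map_mul, map_pow, zpow_natCast, mul_comm]
  have hκg : ∀ g : G, LF_ua g κ' = κ' := by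
    intro g
    ext
    rw [LF_ua_val]
    change g • algebraMap A L κ = algebraMap A L κ
    rw [← hc, hκ]
  -- scaling
  have hm' : (m : ZMod p) ≠ 0 := by rwa [Ne, ZMod.natCast_eq_zero_iff]
  let x0 : LF_M p L := ((m : ZMod p)⁻¹).val • LF_cl p L (Additive.ofMul κ')
  have hx0 : p • x0 = 0 := LF_M_p_smul p L x0
  let s0 : LF_Z p →+ LF_M p L := ZMod.lift p ⟨(zmultiplesHom _ x0), by
    rw [zmultiplesHom_apply, natCast_zsmul]; exact hx0⟩
  have hs0 : ∀ z : ℤ, s0 ((z : ℤ) : ZMod p) = z • x0 := fun z => ZMod.lift_coe p _ z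
  let s : LF_Z p →ₗ[MonoidAlgebra (ZMod p) G] LF_M p L := LF_lin p s0 (by
    intro g (x : ZMod p)
    obtain ⟨z, rfl⟩ := ZMod.intCast_surjective x
    refine Eq.trans (congrArg s0 (LF_Z_smul p G g ((z : ZMod p)))) ?_
    have hfix : MonoidAlgebra.single g (1 : ZMod p) • x0 = x0 := by
      change MonoidAlgebra.single g (1 : ZMod p) • (((m : ZMod p)⁻¹).val •
        LF_cl p L (Additive.ofMul κ')) = ((m : ZMod p)⁻¹).val • LF_cl p L (Additive.ofMul κ')
      rw [smul_comm, LF_M_smul, hκg]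
    rw [hs0, smul_comm (MonoidAlgebra.single g (1 : ZMod p)) z x0, hfix])
  have hqs : ∀ x, q (s x) = x := by
    intro (x : ZMod p)
    obtain ⟨z, rfl⟩ := ZMod.intCast_surjective x
    change q0 (s0 _) = _
    rw [hs0, map_zsmul, map_nsmul, hq0, hvκ]
    have : ((z • (((m : ZMod p)⁻¹).val • (((m : ℤ) : ZMod p)))) : ZMod p) = (z : ZMod p) := by
      rw [nsmul_eq_mul, zsmul_eq_mul, ZMod.natCast_zmod_val, Int.cast_natCast, inv_mul_cancel₀ hm',
        mul_one]
    exact this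
  have hker : ∀ x, q x = 0 ↔ x ∈ LF_Fi (L := L) p hc ϖ (LF_unif_smul hϖ) 0 := by
    intro x
    constructor
    · intro h
      obtain ⟨y, rfl⟩ := LF_cl_surj p L x
      have h1 : ((v (Additive.ofMul y) : ℤ) : ZMod p) = 0 := h
      rw [ZMod.intCast_zmod_eq_zero_iff_dvd] at h1
      obtain ⟨z, u, hz⟩ := LF_unit_zpow (A := A) hϖ y
      rw [hv y z u hz] at h1
      obtain ⟨j, rfl⟩ := h1
      refine (LF_mem_F hc _ _ _).mpr ⟨u, ⟨(u : A) - 1, by simp⟩, ?_⟩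
      rw [LF_clA_apply]
      have hy : y = Units.map (algebraMap A L : A →* L) u * ((Units.mk0 _ hϖ0) ^ j) ^ p := by
        ext
        rw [hz, mul_comm (p : ℤ) j, zpow_mul, zpow_natCast]
        simp
      rw [hy, ofMul_mul, map_add, (LF_cl_zero p L _).mpr ⟨_, rfl⟩, add_zero]
    · rintro ⟨u, -, rfl⟩
      change ((v (Additive.ofMul (Units.map (algebraMap A L : A →* L) (Additive.toMul u))) : ℤ) : ZMod p) = 0
      rw [hv _ 0 (Additive.toMul u) (by simp), Int.cast_zero]
  refine ⟨(LinearEquiv.ofBijective (((LF_Fi (L := L) p hc ϖ (LF_unif_smul hϖ) 0).subtype).coprod s)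
    ⟨?_, ?_⟩).symm⟩
  · rw [injective_iff_map_eq_zero]
    rintro ⟨x, z⟩ h
    rw [LinearMap.coprod_apply, Submodule.subtype_apply] at h
    have h1 := congrArg q h
    rw [map_add, (hker x).mpr x.2, hqs, zero_add, map_zero] at h1
    subst h1
    rw [map_zero, add_zero] at h
    rw [Prod.mk_eq_zero]
    exact ⟨Subtype.ext h, rfl⟩
  · intro x
    refine ⟨(⟨x - s (q x), (hker _).mp (by rw [map_sub, hqs, sub_self])⟩, q x), ?_⟩
    rw [LinearMap.coprod_apply, Submodule.subtype_apply]
    exact sub_add_cancel _ _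

end val

section main

variable {p : ℕ} [hp : Fact p.Prime] {G A L : Type} [Group G] [Finite G] [CommRing A] [IsDomain A]
  [IsDiscreteValuationRing A] [HenselianLocalRing A] [Field L] [Algebra A L] [IsFractionRing A L]
  [MulSemiringAction G A] [MulSemiringAction G L] [CharP (IsLocalRing.ResidueField A) p]
  [Finite (IsLocalRing.ResidueField A)]

theorem LF_U_assoc {a b : A} (h : Associated a b) : LF_U a = LF_U b :=
  le_antisymm (LF_U_le h.symm.dvd) (LF_U_le h.dvd)

theorem LF_F_congr (hc : ∀ (g : G) (a : A), algebraMap A L (g • a) = g • algebraMap A L a)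
    (S S' : Subgroup Aˣ) (h : S = S') (hS : ∀ (g : G), ∀ u ∈ S, LF_ua g u ∈ S)
    (hS' : ∀ (g : G), ∀ u ∈ S', LF_ua g u ∈ S') :
    LF_F (L := L) p hc S hS = LF_F p hc S' hS' := by
  subst h; rfl

theorem LF_main (hc : ∀ (g : G) (a : A), algebraMap A L (g • a) = g • algebraMap A L a)
    (hp0 : (p : A) ≠ 0) (d : ℕ) (ϖ : A) (hϖ : Irreducible ϖ)
    (lam : A) (hlam : lam ^ (p - 1) = -(p : A))
    (hI : ∀ g : G, (∀ a : A, IsLocalRing.residue A (g • a) = IsLocalRing.residue A a) →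
      (∀ c : A, g • ϖ = ϖ * c → IsLocalRing.residue A c = 1) → g = 1)
    (hcard : ∀ e : ℕ, Associated (ϖ ^ e) (p : A) →
      Nat.card (IsLocalRing.ResidueField A) ^ e = p ^ (d * Nat.card G))
    (κ : A) (hκ : ∀ g : G, g • κ = κ) (m : ℕ) (hm : ¬ p ∣ m) (hκm : Associated (ϖ ^ m) κ) :
    Nonempty (LF_M p L ≃ₗ[MonoidAlgebra (ZMod p) G]
      LF_Mu p L × (Fin d → MonoidAlgebra (ZMod p) G) × LF_Z p) := by
  classical
  have hp1 : p - 1 ≠ 0 := by have := hp.out.one_lt; omega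
  have hpm : (p : A) ∈ IsLocalRing.maximalIdeal A := by
    rw [← IsLocalRing.residue_eq_zero_iff, map_natCast, CharP.cast_eq_zero]
  have hlam0 : lam ≠ 0 := by
    rintro rfl
    rw [zero_pow hp1] at hlam
    exact hp0 (neg_eq_zero.mp hlam.symm)
  have hlamm : lam ∈ IsLocalRing.maximalIdeal A := by
    have : lam ^ (p - 1) ∈ IsLocalRing.maximalIdeal A := by
      rw [hlam]; exact neg_mem hpm
    exact Ideal.IsPrime.mem_of_pow_mem inferInstance _ this
  obtain ⟨E, w, hw⟩ := IsDiscreteValuationRing.eq_unit_mul_pow_irreducible hlam0 hϖ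
  have hassE : Associated (ϖ ^ E) lam := ⟨w, by rw [hw, mul_comm]⟩
  have hE : 0 < E := by
    rcases Nat.eq_zero_or_pos E with h | h
    · exfalso
      subst h
      rw [pow_zero, mul_one] at hw
      rw [hw] at hlamm
      exact (IsLocalRing.mem_maximalIdeal _).mp hlamm w.isUnit
    · exact h
  have hassp : Associated (ϖ ^ ((p - 1) * E)) (p : A) := by
    have h1 : Associated ((ϖ ^ E) ^ (p - 1)) (lam ^ (p - 1)) := hassE.pow_pow
    rw [hlam, ← pow_mul, mul_comm] at h1
    exact h1.trans (Associated.neg_left (Associated.refl _))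
  have hpE : ϖ ^ ((p - 1) * E) ∣ (p : A) := hassp.dvd
  have hst : ∀ g : G, ϖ ∣ g • ϖ := LF_unif_smul hϖ
  have hstl : ∀ g : G, lam ∣ g • lam := by
    intro g
    rw [← hassE.dvd_iff_dvd_left, hw, smul_mul']
    exact (LF_stable_pow ϖ hst E g).mul_left _
  have hpg : ∀ g : G, g • (p : A) = (p : A) := fun g =>
    map_natCast (MulSemiringAction.toRingHom G A g) p
  set D := LF_tw ϖ hϖ.ne_zero hst with hDdef
  set D' := LF_tw lam hlam0 hstl with hD'def
  have hD : ∀ g, D'.th g ^ p = D'.th g := by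
    intro g
    obtain ⟨c, hcc, hth⟩ := LF_tw_ex lam hlam0 hstl g
    have h1 : lam ^ (p - 1) * 1 = lam ^ (p - 1) * c ^ (p - 1) := by
      rw [← mul_pow, ← hcc, ← smul_pow', hlam, smul_neg, hpg, mul_one]
    have h2 := mul_left_cancel₀ (pow_ne_zero _ hlam0) h1
    have h3 : c ^ p = c := by
      conv_lhs => rw [← Nat.sub_add_cancel hp.out.one_le, pow_add, ← h2, one_mul, pow_one]
    rw [hD'def, hth, ← map_pow, h3]
  have hmemker : ∀ g ∈ D.a.ker, ∀ a : A,
      IsLocalRing.residue A (g • a) = IsLocalRing.residue A a := by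
    intro g hg a
    have h1 : LF_resAct G A g = 1 := hg
    rw [← LF_resAct_apply, h1]; rfl
  have hI' : ∀ g ∈ D.a.ker, D.th g = 1 → g = 1 := by
    intro g hg h
    apply hI g (hmemker g hg)
    intro c hcc
    rw [← LF_tw_th ϖ hϖ.ne_zero hst g c hcc]
    exact h
  have hIe : ∀ g ∈ D.a.ker, D.th g ^ ((p - 1) * E) = 1 := by
    intro g hg
    obtain ⟨c, hcc, hth⟩ := LF_tw_ex ϖ hϖ.ne_zero hst g
    obtain ⟨v, hv⟩ := hassp
    have h1 : ϖ ^ ((p - 1) * E) * (v : A) = ϖ ^ ((p - 1) * E) * (c ^ ((p - 1) * E) * g • (v : A)) := by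
      rw [← mul_assoc, ← mul_pow, ← hcc, ← smul_pow', ← smul_mul', hv, hpg]
    have h2 := congrArg (IsLocalRing.residue A) (mul_left_cancel₀ (pow_ne_zero _ hϖ.ne_zero) h1)
    rw [map_mul, hmemker g hg, map_pow] at h2
    have hv0 : IsLocalRing.residue A (v : A) ≠ 0 := (v.isUnit.map (IsLocalRing.residue A)).ne_zero
    rw [hDdef, hth]
    exact (mul_right_cancel₀ hv0 ((one_mul _).trans h2)).symm
  have hcard' := hcard _ hassp
  have hroot : ∀ y : Aˣ, y ^ p ∈ LF_U (lam ^ p) → y ∈ LF_U lam := by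
    intro y hy
    rw [← LF_U_assoc hassE]
    rw [← LF_U_assoc (hassE.pow_pow (n := p)), ← pow_mul] at hy
    exact LF_root_mem p E hϖ hpE y _ hy E le_rfl (by
      rw [mul_comm]; have := hp.out.pos; omega)
  obtain ⟨e1⟩ := LF_top (L := L) hc lam hlam0 hlam hlamm hstl hD hroot
  obtain ⟨e2⟩ := LF_mu (L := L) hc lam hlam0 hlam hlamm hstl hD hroot
  obtain ⟨e3⟩ := LF_valsplit (p := p) (L := L) hϖ hc κ hκ m hm hκm
  have hFN : LF_Fi (L := L) p hc ϖ hst (p * E) = LF_F (L := L) p hc (LF_U (lam ^ p))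
      (LF_U_stable _ (LF_stable_pow lam hstl p)) := by
    apply LF_F_congr
    rw [← LF_U_assoc (hassE.pow_pow (n := p)), ← pow_mul, mul_comm]
  have hproj : ∀ i, Module.Projective (MonoidAlgebra (ZMod p) G) (D.V i) := fun i =>
    D.proj ((p - 1) * E) d i (Nat.mul_pos (Nat.pos_of_ne_zero hp1) hE) hI' hIe hcard'
  have hstep0 : ∀ i < p * E, ¬ (¬ p ∣ i) → LF_Fi (L := L) p hc ϖ hst i =
      LF_Fi (L := L) p hc ϖ hst (i + 1) := by
    intro i hi h
    exact LF_Fi_eq hc ϖ hϖ hst E hpE i hi (not_not.mp h)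
  have hstep1 : ∀ i < p * E, ¬ p ∣ i → Nonempty (LF_Fi (L := L) p hc ϖ hst i
      ≃ₗ[MonoidAlgebra (ZMod p) G] LF_Fi (L := L) p hc ϖ hst (i + 1) × D.V i) := by
    intro i hi h
    exact LF_Fi_split hc ϖ hϖ hst E hpE i hi h (hproj i)
  have hfinK : Finite (D'.K0 (p := p) hD) :=
    Finite.of_injective (fun x => (x : D'.V 1)) Subtype.val_injective
  have hfin : ∀ j ≤ p * E, Finite (LF_Fi (L := L) p hc ϖ hst (p * E - j)) := by
    intro j
    induction j with
    | zero =>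
      intro _
      rw [Nat.sub_zero, hFN]
      exact Finite.of_equiv _ e1.symm.toEquiv
    | succ j ih =>
      intro hj
      have := ih (by omega)
      have hi : p * E - j = (p * E - (j + 1)) + 1 := by omega
      rw [hi] at this
      by_cases h : p ∣ (p * E - (j + 1))
      · rw [hstep0 _ (by omega) (not_not.mpr h)]
        exact this
      · obtain ⟨e⟩ := hstep1 _ (by omega) h
        exact Finite.of_equiv _ e.symm.toEquiv
  have hfin0 : Finite (LF_Fi (L := L) p hc ϖ hst 0) := by
    have := hfin (p * E) le_rfl
    rwa [Nat.sub_self] at this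
  have hfinM : Finite (LF_M p L) := Finite.of_equiv _ e3.symm.toEquiv
  have hfinR : Finite (MonoidAlgebra (ZMod p) G) := by
    have : NeZero p := ⟨hp.out.ne_zero⟩
    have : Module.Finite (ZMod p) (MonoidAlgebra (ZMod p) G) := inferInstance
    exact Module.finite_of_finite (ZMod p)
  apply LF_lovasz
  intro X _ _ _
  rw [LF_cardHom_congr e3, LF_cardHom_prod, LF_cardHom_prod, LF_cardHom_prod, LF_cardHom_pi]
  rw [LF_chain (LF_Fi (L := L) p hc ϖ hst) (fun i => D.V i) (fun i => ¬ p ∣ i) (p * E) hstep0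
    hstep1 X]
  rw [D.prodCard E d hE hI' hIe hcard' X, hFN, LF_cardHom_congr e1, ← LF_cardHom_congr e2]
  rw [Finset.prod_const, Finset.card_univ, Fintype.card_fin, LF_cardHom_self p]
  ring

end main

section CF
variable (p : ℕ) [hp : Fact p.Prime] (F : Type) [Field F] [Algebra ℚ_[p] F]
  [FiniteDimensional ℚ_[p] F]

theorem CF_norm_mul (x y : F) : spectralNorm ℚ_[p] F (x * y) =
    spectralNorm ℚ_[p] F x * spectralNorm ℚ_[p] F y :=
  spectralAlgNorm_mul x y

theorem CF_norm_inv (x : F) : spectralNorm ℚ_[p] F x⁻¹ = (spectralNorm ℚ_[p] F x)⁻¹ := by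
  by_cases hx : x = 0
  · subst hx; simp [spectralNorm_zero]
  · have h := CF_norm_mul p F x x⁻¹
    rw [mul_inv_cancel₀ hx, spectralNorm_one] at h
    exact eq_inv_of_mul_eq_one_right h.symm

/-- The valuation ring of a finite extension of `ℚ_p`. -/
def CF_O : ValuationSubring F where
  carrier := {x | spectralNorm ℚ_[p] F x ≤ 1}
  mul_mem' := by
    intro a b ha hb
    change spectralNorm ℚ_[p] F (a * b) ≤ 1
    rw [CF_norm_mul]
    exact mul_le_one₀ ha (spectralNorm_nonneg _) hb
  one_mem' := by
    change spectralNorm ℚ_[p] F 1 ≤ 1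
    rw [spectralNorm_one]
  add_mem' := by
    intro a b ha hb
    exact (isNonarchimedean_spectralNorm (K := ℚ_[p]) (L := F) a b).trans (max_le ha hb)
  zero_mem' := by
    change spectralNorm ℚ_[p] F 0 ≤ 1
    rw [spectralNorm_zero]; exact zero_le_one
  neg_mem' := by
    intro a ha
    change spectralNorm ℚ_[p] F (-a) ≤ 1
    rw [spectralNorm_neg (Algebra.IsAlgebraic.isAlgebraic a)]
    exact ha
  mem_or_inv_mem' := by
    intro x
    rcases le_or_gt (spectralNorm ℚ_[p] F x) 1 with h | h
    · exact Or.inl h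
    · right
      change spectralNorm ℚ_[p] F x⁻¹ ≤ 1
      rw [CF_norm_inv]
      exact inv_le_one_of_one_le₀ h.le

theorem CF_mem {x : F} : x ∈ CF_O p F ↔ spectralNorm ℚ_[p] F x ≤ 1 := Iff.rfl

theorem CF_mem_int (x : ℤ_[p]) : algebraMap ℚ_[p] F (x : ℚ_[p]) ∈ CF_O p F := by
  rw [CF_mem, spectralNorm_extends]; exact x.2

/-- structure map of `ℤ_p` -/
noncomputable def CF_algMap : ℤ_[p] →+* CF_O p F :=
  ((algebraMap ℚ_[p] F).comp (algebraMap ℤ_[p] ℚ_[p])).codRestrict (CF_O p F).toSubring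
    (fun x => CF_mem_int p F x)

@[reducible]
noncomputable def CF_alg : Algebra ℤ_[p] (CF_O p F) := (CF_algMap p F).toAlgebra

@[reducible]
noncomputable def CF_algF : Algebra ℤ_[p] F := ((algebraMap ℚ_[p] F).comp (algebraMap ℤ_[p] ℚ_[p])).toAlgebra

theorem CF_mem_iff_isIntegral (x : F) : x ∈ CF_O p F ↔
    letI := CF_algF p F; IsIntegral ℤ_[p] x := by
  letI := CF_algF p F
  haveI : IsScalarTower ℤ_[p] ℚ_[p] F := IsScalarTower.of_algebraMap_eq' rfl
  change spectralNorm ℚ_[p] F x ≤ 1 ↔ IsIntegral ℤ_[p] x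
  have hx : IsIntegral ℚ_[p] x := Algebra.IsIntegral.isIntegral x
  unfold spectralNorm
  rw [spectralValue_le_one_iff (minpoly.monic hx)]
  constructor
  · intro h
    have hl : minpoly ℚ_[p] x ∈ Polynomial.lifts (algebraMap ℤ_[p] ℚ_[p]) := by
      rw [Polynomial.lifts_iff_coeff_lifts]
      intro n
      exact ⟨⟨_, h n⟩, rfl⟩
    obtain ⟨q, hq, -, hqm⟩ := Polynomial.lifts_and_natDegree_eq_and_monic hl (minpoly.monic hx)
    refine ⟨q, hqm, ?_⟩
    have := minpoly.aeval ℚ_[p] x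
    rw [← hq, Polynomial.aeval_map_algebraMap] at this
    exact this
  · intro h n
    have e := minpoly.isIntegrallyClosed_eq_field_fractions ℚ_[p] F h
    rw [Algebra.algebraMap_self_apply] at e
    rw [e, Polynomial.coeff_map]
    exact ((minpoly ℤ_[p] x).coeff n).2

theorem CF_isIntegralClosure :
    letI := CF_algF p F; IsIntegralClosure (CF_O p F) ℤ_[p] F := by
  letI := CF_algF p F
  refine ⟨Subtype.val_injective, ?_⟩
  intro x
  rw [← CF_mem_iff_isIntegral]
  exact ⟨fun h => ⟨⟨x, h⟩, rfl⟩, by rintro ⟨y, rfl⟩; exact y.2⟩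

theorem CF_pack : letI := CF_alg p F;
    Module.Finite ℤ_[p] (CF_O p F) ∧ Module.Free ℤ_[p] (CF_O p F) ∧
    Module.finrank ℤ_[p] (CF_O p F) = Module.finrank ℚ_[p] F ∧ IsDedekindDomain (CF_O p F) := by
  letI := CF_alg p F
  letI := CF_algF p F
  haveI : IsScalarTower ℤ_[p] ℚ_[p] F := IsScalarTower.of_algebraMap_eq' rfl
  haveI : IsScalarTower ℤ_[p] (CF_O p F) F := IsScalarTower.of_algebraMap_eq' rfl
  haveI := CF_isIntegralClosure p F
  haveI : Module.IsTorsionFree ℤ_[p] F := by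
    have := FaithfulSMul.algebraMap_injective ℤ_[p] ℚ_[p]
    have h2 := (algebraMap ℚ_[p] F).injective.comp this
    have : FaithfulSMul ℤ_[p] F := (faithfulSMul_iff_algebraMap_injective _ _).2 h2
    infer_instance
  haveI : CharZero F := charZero_of_injective_algebraMap (algebraMap ℚ_[p] F).injective
  refine ⟨IsIntegralClosure.finite ℤ_[p] ℚ_[p] F _, IsIntegralClosure.module_free ℤ_[p] ℚ_[p] F _,
    IsIntegralClosure.rank ℤ_[p] ℚ_[p] F _, IsIntegralClosure.isDedekindDomain ℤ_[p] ℚ_[p] F _⟩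

theorem CF_p_coe : (((p : CF_O p F)) : F) = (p : F) := by simp

theorem CF_norm_p : spectralNorm ℚ_[p] F (p : F) = (p : ℝ)⁻¹ := by
  have := spectralNorm_extends (K := ℚ_[p]) (L := F) (p : ℚ_[p])
  rw [map_natCast] at this
  rw [this, Padic.norm_p]

theorem CF_charZero (p : ℕ) [hp : Fact p.Prime] (F : Type) [Field F] [Algebra ℚ_[p] F] :
    CharZero F := charZero_of_injective_algebraMap (algebraMap ℚ_[p] F).injective

theorem CF_p_ne : ((p : CF_O p F)) ≠ 0 := by
  haveI := CF_charZero p F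
  intro h
  have := congrArg (Subtype.val) h
  rw [CF_p_coe] at this
  exact hp.1.ne_zero (by exact_mod_cast this)

theorem CF_unit_iff (x : CF_O p F) : IsUnit x ↔ spectralNorm ℚ_[p] F x = 1 := by
  constructor
  · rintro ⟨u, rfl⟩
    have h1 : spectralNorm ℚ_[p] F ((u : CF_O p F) : F) ≤ 1 := (u : CF_O p F).2
    have h2 : spectralNorm ℚ_[p] F (((u⁻¹ : (CF_O p F)ˣ) : CF_O p F) : F) ≤ 1 := (↑u⁻¹ : CF_O p F).2
    have h3 := CF_norm_mul p F ((u : CF_O p F) : F) (((u⁻¹ : (CF_O p F)ˣ) : CF_O p F) : F)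
    have h4 : ((u : CF_O p F) : F) * (((u⁻¹ : (CF_O p F)ˣ) : CF_O p F) : F) = 1 := by
      have := congrArg (Subtype.val) (u.mul_inv)
      exact this
    rw [h4, spectralNorm_one] at h3
    nlinarith [spectralNorm_nonneg (K := ℚ_[p]) ((u : CF_O p F) : F), spectralNorm_nonneg (K := ℚ_[p]) (((u⁻¹ : (CF_O p F)ˣ) : CF_O p F) : F)]
  · intro h
    have hx : (x : F) ≠ 0 := by
      intro h0; rw [h0, spectralNorm_zero] at h; exact zero_ne_one h
    refine IsUnit.of_mul_eq_one (⟨(x : F)⁻¹, ?_⟩ : CF_O p F) ?_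
    · rw [CF_mem, CF_norm_inv, h, inv_one]
    · apply Subtype.ext
      exact mul_inv_cancel₀ hx

theorem CF_p_nonunit : ¬ IsUnit ((p : CF_O p F)) := by
  rw [CF_unit_iff, CF_p_coe, CF_norm_p]
  intro h
  have : (1:ℝ) < p := by exact_mod_cast hp.1.one_lt
  rw [inv_eq_one] at h
  linarith

theorem CF_dvr : IsDiscreteValuationRing (CF_O p F) := by
  haveI := (CF_pack p F).2.2.2
  have hnf : ¬ IsField (CF_O p F) := by
    intro h
    obtain ⟨b, hb⟩ := h.mul_inv_cancel (CF_p_ne p F)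
    exact CF_p_nonunit p F (IsUnit.of_mul_eq_one b hb)
  haveI : IsNoetherianRing (CF_O p F) := inferInstance
  have h := (IsDiscreteValuationRing.TFAE (CF_O p F) hnf).out 0 1
  exact h.2 inferInstance

theorem CF_card_quot : Nat.card (CF_O p F ⧸ Ideal.span {(p : CF_O p F)}) =
    p ^ Module.finrank ℚ_[p] F := by
  letI := CF_alg p F
  obtain ⟨h1, h2, h3, -⟩ := CF_pack p F
  rw [← h3]
  let b := Module.finBasis ℤ_[p] (CF_O p F)
  let r := Module.finrank ℤ_[p] (CF_O p F)
  let φ : CF_O p F →+ (Fin r → ZMod p) :=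
    { toFun := fun x i => PadicInt.toZMod (b.equivFun x i)
      map_zero' := by ext i; simp
      map_add' := by intro x y; ext i; simp }
  have hφ : Function.Surjective φ := by
    intro v
    choose w hw using fun i => ZMod.ringHom_surjective (PadicInt.toZMod (p := p)) (v i)
    refine ⟨b.equivFun.symm w, ?_⟩
    ext i
    change PadicInt.toZMod (b.equivFun (b.equivFun.symm w) i) = v i
    rw [LinearEquiv.apply_symm_apply, hw]
  have hk : φ.ker = (Ideal.span {(p : CF_O p F)}).toAddSubgroup := by
    ext x
    rw [AddMonoidHom.mem_ker]
    change φ x = 0 ↔ x ∈ Ideal.span {(p : CF_O p F)}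
    rw [Ideal.mem_span_singleton]
    constructor
    · intro h
      have : ∀ i, ∃ c, b.equivFun x i = (p : ℤ_[p]) * c := by
        intro i
        have h2 : PadicInt.toZMod (b.equivFun x i) = 0 := congrFun h i
        rw [← RingHom.mem_ker, PadicInt.ker_toZMod, PadicInt.maximalIdeal_eq_span_p,
          Ideal.mem_span_singleton] at h2
        exact h2
      choose c hc using this
      refine ⟨b.equivFun.symm c, ?_⟩
      apply b.equivFun.injective
      have : (p : CF_O p F) * b.equivFun.symm c = (p : ℤ_[p]) • b.equivFun.symm c := by
        rw [Algebra.smul_def, map_natCast]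
      rw [this, map_smul, LinearEquiv.apply_symm_apply]
      ext i
      rw [hc]; rfl
    · rintro ⟨y, rfl⟩
      ext i
      have : (p : CF_O p F) * y = (p : ℤ_[p]) • y := by
        rw [Algebra.smul_def, map_natCast]
      change PadicInt.toZMod (b.equivFun ((p : CF_O p F) * y) i) = 0
      rw [this, map_smul, Pi.smul_apply, smul_eq_mul, map_mul, map_natCast, ZMod.natCast_self, zero_mul]
  have e := (QuotientAddGroup.quotientKerEquivOfSurjective φ hφ).toEquiv
  have := Nat.card_congr e
  rw [hk] at this
  rw [Nat.card_fun, Nat.card_zmod, Nat.card_fin] at this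
  exact this

theorem CF_finite_res : Finite (IsLocalRing.ResidueField (CF_O p F)) := by
  have h := CF_card_quot p F
  haveI : Finite (CF_O p F ⧸ Ideal.span {(p : CF_O p F)}) := by
    apply Nat.finite_of_card_ne_zero
    rw [h]; exact pow_ne_zero _ hp.1.ne_zero
  have hle : Ideal.span {(p : CF_O p F)} ≤ IsLocalRing.maximalIdeal (CF_O p F) := by
    rw [Ideal.span_singleton_le_iff_mem]
    exact CF_p_nonunit p F
  exact Finite.of_surjective _ (Ideal.Quotient.factor_surjective hle)

theorem CF_char_res : CharP (IsLocalRing.ResidueField (CF_O p F)) p := by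
  have h : ((p : ℕ) : IsLocalRing.ResidueField (CF_O p F)) = 0 := by
    rw [← map_natCast (IsLocalRing.residue (CF_O p F)), IsLocalRing.residue_eq_zero_iff]
    exact CF_p_nonunit p F
  obtain ⟨q, hq⟩ := CharP.exists (IsLocalRing.ResidueField (CF_O p F))
  rcases (Nat.dvd_prime hp.1).1 ((CharP.cast_eq_zero_iff _ q p).1 h) with h1 | h1
  · exact absurd h1 (CharP.char_ne_one (IsLocalRing.ResidueField (CF_O p F)) q)
  · rwa [h1] at hq

theorem CF_card_res (ϖ : CF_O p F) (hϖ : Irreducible ϖ) (e : ℕ)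
    (he : Associated (ϖ ^ e) (p : CF_O p F)) :
    Nat.card (IsLocalRing.ResidueField (CF_O p F)) ^ e = p ^ Module.finrank ℚ_[p] F := by
  haveI := (CF_pack p F).2.2.2
  haveI := CF_dvr p F
  rw [← CF_card_quot p F, ← Ideal.span_singleton_eq_span_singleton.2 he, ← Ideal.span_singleton_pow,
    ← hϖ.maximalIdeal_eq]
  have := cardQuot_pow_of_prime (P := IsLocalRing.maximalIdeal (CF_O p F)) (i := e)
    (by rw [hϖ.maximalIdeal_eq]; simpa using hϖ.ne_zero)
  exact this.symm

end CF

section CFc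
variable (p : ℕ) [hp : Fact p.Prime] (F : Type) [Field F] [Algebra ℚ_[p] F]
  [FiniteDimensional ℚ_[p] F]

theorem CF_complete (f : ℕ → F) (r : ℝ) (hr0 : 0 ≤ r) (hr : r < 1)
    (h : ∀ m n, m ≤ n → spectralNorm ℚ_[p] F (f m - f n) ≤ r ^ m) :
    ∃ l : F, ∀ n, spectralNorm ℚ_[p] F (f n - l) ≤ r ^ n := by
  letI := spectralNorm.normedField ℚ_[p] F
  haveI : CompleteSpace F := spectralNorm.completeSpace ℚ_[p] F
  have hc : CauchySeq f := by
    apply cauchySeq_of_le_tendsto_0 (fun n => r ^ n + r ^ n)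
    · intro n m N hn hm
      have h1 : dist (f N) (f n) ≤ r ^ N := h N n hn
      have h2 : dist (f N) (f m) ≤ r ^ N := h N m hm
      exact (dist_triangle_left _ _ (f N)).trans (add_le_add h1 h2)
    · have := tendsto_pow_atTop_nhds_zero_of_lt_one hr0 hr
      simpa using this.add this
  obtain ⟨l, hl⟩ := cauchySeq_tendsto_of_complete hc
  refine ⟨l, fun n => ?_⟩
  change dist (f n) l ≤ r ^ n
  refine le_of_tendsto (hl.const_sub (f n) |>.norm) ?_ |> fun h => by simpa [dist_eq_norm] using h
  filter_upwards [Filter.eventually_ge_atTop n] with m hm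
  exact h n m hm

theorem CF_dvd_iff (x y : CF_O p F) : x ∣ y ↔
    spectralNorm ℚ_[p] F (y : F) ≤ spectralNorm ℚ_[p] F (x : F) := by
  constructor
  · rintro ⟨c, rfl⟩
    have : spectralNorm ℚ_[p] F ((x * c : CF_O p F) : F) =
      spectralNorm ℚ_[p] F (x : F) * spectralNorm ℚ_[p] F (c : F) := CF_norm_mul p F _ _
    rw [this]
    exact mul_le_of_le_one_right (spectralNorm_nonneg _) c.2
  · intro h
    by_cases hx : (x : F) = 0
    · rw [hx, spectralNorm_zero] at h
      have h0 : spectralNorm ℚ_[p] F (y : F) = 0 := le_antisymm h (spectralNorm_nonneg _)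
      have hy : (y : F) = 0 := eq_zero_of_map_spectralNorm_eq_zero h0
        (Algebra.IsAlgebraic.isAlgebraic _)
      have : y = 0 := Subtype.ext hy
      rw [this]; exact dvd_zero x
    · have hpos : 0 < spectralNorm ℚ_[p] F (x : F) :=
        spectralNorm_zero_lt hx (Algebra.IsAlgebraic.isAlgebraic _)
      refine ⟨⟨(x : F)⁻¹ * y, ?_⟩, ?_⟩
      · rw [CF_mem, CF_norm_mul, CF_norm_inv, inv_mul_le_iff₀ hpos, mul_one]
        exact h
      · apply Subtype.ext
        change (y : F) = (x : F) * ((x : F)⁻¹ * y)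
        rw [mul_inv_cancel_left₀ hx]

theorem CF_norm_pow (x : F) (n : ℕ) : spectralNorm ℚ_[p] F (x ^ n) =
    (spectralNorm ℚ_[p] F x) ^ n := by
  induction n with
  | zero => simp [spectralNorm_one]
  | succ n ih => rw [pow_succ, pow_succ, CF_norm_mul, ih]

theorem CF_adicComplete : IsAdicComplete (IsLocalRing.maximalIdeal (CF_O p F)) (CF_O p F) := by
  haveI := CF_dvr p F
  obtain ⟨ϖ, hϖ⟩ := IsDiscreteValuationRing.exists_irreducible (CF_O p F)
  have hmem : ∀ (n : ℕ) (x : CF_O p F),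
      x ∈ (IsLocalRing.maximalIdeal (CF_O p F) ^ n • ⊤ : Submodule (CF_O p F) (CF_O p F)) ↔
      spectralNorm ℚ_[p] F (x : F) ≤ (spectralNorm ℚ_[p] F (ϖ : F)) ^ n := by
    intro n x
    rw [smul_eq_mul, Ideal.mul_top, hϖ.maximalIdeal_eq, Ideal.span_singleton_pow,
      Ideal.mem_span_singleton, CF_dvd_iff, ← CF_norm_pow]
    rfl
  have hlt : spectralNorm ℚ_[p] F (ϖ : F) < 1 := by
    refine lt_of_le_of_ne ϖ.2 ?_
    intro h
    exact hϖ.not_isUnit ((CF_unit_iff p F ϖ).2 h)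
  have h0 := spectralNorm_nonneg (K := ℚ_[p]) (ϖ : F)
  haveI : IsPrecomplete (IsLocalRing.maximalIdeal (CF_O p F)) (CF_O p F) := by
    constructor
    intro f hf
    obtain ⟨l, hl⟩ := CF_complete p F (fun n => (f n : F)) _ h0 hlt (by
      intro m n hmn
      have := hf hmn
      rw [SModEq.sub_mem, hmem] at this
      exact this)
    have hlO : l ∈ CF_O p F := by
      have h1 : (f 0 : F) - l ∈ CF_O p F := by
        rw [CF_mem]; simpa using hl 0
      have := sub_mem (f 0).2 h1
      rwa [sub_sub_cancel] at this
    refine ⟨⟨l, hlO⟩, fun n => ?_⟩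
    rw [SModEq.sub_mem, hmem]
    exact hl n
  haveI : IsHausdorff (IsLocalRing.maximalIdeal (CF_O p F)) (CF_O p F) := by
    constructor
    intro x hx
    have h1 : ∀ n : ℕ, spectralNorm ℚ_[p] F (x : F) ≤ (spectralNorm ℚ_[p] F (ϖ : F)) ^ n := by
      intro n
      have := hx n
      rwa [SModEq.zero, hmem] at this
    have h2 : spectralNorm ℚ_[p] F (x : F) ≤ 0 :=
      ge_of_tendsto' (tendsto_pow_atTop_nhds_zero_of_lt_one h0 hlt) h1
    exact Subtype.ext (eq_zero_of_map_spectralNorm_eq_zero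
      (le_antisymm h2 (spectralNorm_nonneg _)) (Algebra.IsAlgebraic.isAlgebraic _))
  exact {}

theorem CF_henselian : HenselianLocalRing (CF_O p F) := by
  haveI := CF_adicComplete p F
  constructor
  intro f hf a₀ h1 h2
  exact HenselianRing.is_henselian (I := IsLocalRing.maximalIdeal (CF_O p F)) f hf a₀ h1
    (h2.map _)

end CFc

section CFp

theorem CF_root {A : Type} [CommRing A] [HenselianLocalRing A] (t : ℕ) (ht0 : t ≠ 0)
    (ht : (t : IsLocalRing.ResidueField A) ≠ 0) (w : A) (hw : IsLocalRing.residue A w = 1) :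
    ∃ v : A, v ^ t = w ∧ IsLocalRing.residue A v = 1 := by
  obtain ⟨v, hv1, hv2⟩ := HenselianLocalRing.is_henselian (R := A)
    (Polynomial.X ^ t - Polynomial.C w) (Polynomial.monic_X_pow_sub_C w ht0) 1 (by
      rw [← IsLocalRing.residue_eq_zero_iff]
      simp [hw]) (by
      simp only [Polynomial.derivative_sub, Polynomial.derivative_X_pow, Polynomial.derivative_C,
        sub_zero, Polynomial.eval_mul, Polynomial.eval_pow, Polynomial.eval_X, one_pow, mul_one,
        Polynomial.eval_natCast, map_natCast]
      rw [← IsLocalRing.residue_ne_zero_iff_isUnit, map_natCast]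
      exact ht)
  refine ⟨v, ?_, ?_⟩
  · have : v ^ t - w = 0 := by simpa [Polynomial.IsRoot] using hv1
    exact sub_eq_zero.1 this
  · rw [← IsLocalRing.residue_eq_zero_iff, map_sub, map_one, sub_eq_zero] at hv2
    exact hv2

variable (p : ℕ) [hp : Fact p.Prime] (F : Type) [Field F] [Algebra ℚ_[p] F]
  [FiniteDimensional ℚ_[p] F]

theorem CF_t_ne (t : ℕ) (ht : ¬ p ∣ t) : (t : IsLocalRing.ResidueField (CF_O p F)) ≠ 0 := by
  haveI := CF_char_res p F
  rwa [Ne, CharP.cast_eq_zero_iff _ p]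

theorem CF_powclasses (t : ℕ) (ht : ¬ p ∣ t) : ∃ S : Set F, S.Finite ∧
    ∀ x : F, x ≠ 0 → ∃ s ∈ S, ∃ y : F, y ≠ 0 ∧ x = s * y ^ t := by
  have ht0 : t ≠ 0 := by rintro rfl; exact ht (dvd_zero p)
  haveI := CF_dvr p F
  haveI := CF_henselian p F
  haveI := CF_finite_res p F
  obtain ⟨ϖ, hϖ⟩ := IsDiscreteValuationRing.exists_irreducible (CF_O p F)
  have hϖ0 : (ϖ : F) ≠ 0 := fun h => hϖ.ne_zero (Subtype.ext h)
  let out : IsLocalRing.ResidueField (CF_O p F) → CF_O p F :=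
    Function.surjInv IsLocalRing.residue_surjective
  have hout : ∀ a, IsLocalRing.residue _ (out a) = a :=
    Function.surjInv_eq IsLocalRing.residue_surjective
  refine ⟨Set.range (fun q : IsLocalRing.ResidueField (CF_O p F) × Fin t =>
    ((out q.1 : CF_O p F) : F) * (ϖ : F) ^ (q.2 : ℕ)), Set.finite_range _, ?_⟩
  intro x hx
  obtain ⟨z, u, hxu⟩ := LF_unit_zpow (L := F) hϖ (Units.mk0 x hx)
  change x = ((u : CF_O p F) : F) * (ϖ : F) ^ z at hxu
  have hru : IsLocalRing.residue _ (u : CF_O p F) ≠ 0 :=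
    (IsLocalRing.residue_ne_zero_iff_isUnit _).2 u.isUnit
  have ha : IsUnit (out (IsLocalRing.residue _ (u : CF_O p F))) := by
    rw [← IsLocalRing.residue_ne_zero_iff_isUnit, hout]; exact hru
  obtain ⟨a, ha⟩ := ha
  have hra : IsLocalRing.residue _ (a : CF_O p F) = IsLocalRing.residue _ (u : CF_O p F) := by
    rw [ha, hout]
  obtain ⟨v, hv, hv1⟩ := CF_root t ht0 (CF_t_ne p F t ht) ((u : CF_O p F) * (a⁻¹ : (CF_O p F)ˣ)) (by
    rw [map_mul, ← hra, ← map_mul, Units.mul_inv, map_one])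
  have huv : (u : CF_O p F) = a * v ^ t := by
    rw [hv, mul_comm, mul_assoc, Units.inv_mul, mul_one]
  have huvF : ((u : CF_O p F) : F) = ((a : CF_O p F) : F) * (v : F) ^ t := by
    have := congrArg Subtype.val huv
    exact this
  have hv0 : (v : F) ≠ 0 := by
    intro h
    have : v = 0 := Subtype.ext h
    rw [this, map_zero] at hv1
    exact zero_ne_one hv1
  have htz : (0 : ℤ) < t := by exact_mod_cast Nat.pos_of_ne_zero ht0
  have hm0 := Int.emod_nonneg z htz.ne'
  have hm1 := Int.emod_lt_of_pos z htz
  refine ⟨_, ⟨(IsLocalRing.residue _ (u : CF_O p F), ⟨(z % t).toNat, by omega⟩), rfl⟩,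
    (v : F) * (ϖ : F) ^ (z / t), mul_ne_zero hv0 (zpow_ne_zero _ hϖ0), ?_⟩
  have hz : (ϖ : F) ^ z = (ϖ : F) ^ ((z % t).toNat) * ((ϖ : F) ^ (z / t)) ^ t := by
    rw [← zpow_natCast, ← zpow_natCast, Int.toNat_of_nonneg hm0, ← zpow_mul, ← zpow_add₀ hϖ0]
    congr 1
    rw [mul_comm]
    exact (Int.emod_add_mul_ediv z t).symm
  change x = ((out (IsLocalRing.residue _ (u : CF_O p F)) : CF_O p F) : F) *
    (ϖ : F) ^ ((z % t).toNat) * _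
  rw [hxu, hz, huvF, ← ha, mul_pow]
  ring

end CFp

section ext
open IntermediateField

variable {p : ℕ} [hp : Fact p.Prime] {Ω : Type} [Field Ω] [Algebra ℚ_[p] Ω]
  [IsAlgClosure ℚ_[p] Ω] (K : IntermediateField ℚ_[p] Ω) [FiniteDimensional ℚ_[p] ↥K]

theorem EX_alg : Algebra.IsAlgebraic ↥K Ω := by
  haveI := IsAlgClosure.isAlgebraic (R := ℚ_[p]) (K := Ω)
  exact Algebra.IsAlgebraic.tower_top (K := ℚ_[p]) K

theorem EX_fin_Kn (ζ : Ω) : FiniteDimensional ↥K (adjoin ↥K {ζ}) := by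
  haveI := EX_alg K
  exact adjoin.finiteDimensional (Algebra.IsIntegral.isIntegral ζ)

theorem EX_fin_trans (E : IntermediateField ↥K Ω) [FiniteDimensional ↥K ↥E] :
    FiniteDimensional ℚ_[p] ↥E := by
  haveI : IsScalarTower ℚ_[p] ↥K ↥E := inferInstance
  exact FiniteDimensional.trans ℚ_[p] ↥K ↥E

theorem EX_fin_Ln (t : ℕ) (ht : ¬ p ∣ t) (Kn : IntermediateField ↥K Ω) [FiniteDimensional ↥K ↥Kn] :
    FiniteDimensional ↥K ↥(Kn ⊔ adjoin ↥K {x : Ω | x ^ t ∈ Kn}) := by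
  have ht0 : t ≠ 0 := by rintro rfl; exact ht (dvd_zero p)
  haveI := EX_alg K
  haveI := EX_fin_trans K Kn
  obtain ⟨S, hS, h⟩ := CF_powclasses p ↥Kn t ht
  let T : Set Ω := ⋃ s ∈ S, {x : Ω | x ^ t = (s : Ω)}
  have hT : T.Finite := by
    classical
    refine hS.biUnion fun s _ => ?_
    refine Set.Finite.subset (Polynomial.X ^ t - Polynomial.C (s : Ω)).roots.toFinset.finite_toSet ?_
    intro x hx
    have hx : x ^ t = (s : Ω) := hx
    have hne : (Polynomial.X ^ t - Polynomial.C (s : Ω)) ≠ 0 :=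
      (Polynomial.monic_X_pow_sub_C _ ht0).ne_zero
    simp [hne, hx]
  haveI := hT.to_subtype
  haveI : FiniteDimensional ↥K ↥(adjoin ↥K T) :=
    finiteDimensional_adjoin (fun x _ => Algebra.IsIntegral.isIntegral x)
  have hle : Kn ⊔ adjoin ↥K {x : Ω | x ^ t ∈ Kn} ≤ Kn ⊔ adjoin ↥K T := by
    refine sup_le le_sup_left ?_
    rw [adjoin_le_iff]
    intro x hx
    by_cases hx0 : x = 0
    · rw [hx0]; exact zero_mem _
    obtain ⟨s, hs, y, hy0, hxy⟩ := h ⟨x ^ t, hx⟩ (fun h => pow_ne_zero t hx0 (congrArg Subtype.val h))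
    have hxy : x ^ t = (s : Ω) * (y : Ω) ^ t := congrArg Subtype.val hxy
    have hy0 : (y : Ω) ≠ 0 := fun h => hy0 (Subtype.ext h)
    have h1 : x / y ∈ T := by
      refine Set.mem_biUnion hs ?_
      change (x / y) ^ t = (s : Ω)
      rw [div_pow, hxy, mul_div_assoc, div_self (pow_ne_zero _ hy0), mul_one]
    have h2 : x / y ∈ Kn ⊔ adjoin ↥K T := (le_sup_right : _ ≤ Kn ⊔ adjoin ↥K T) (subset_adjoin _ _ h1)
    have h3 : (y : Ω) ∈ Kn ⊔ adjoin ↥K T := (le_sup_left : _ ≤ Kn ⊔ adjoin ↥K T) y.2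
    have := mul_mem h2 h3
    rwa [div_mul_cancel₀ _ hy0] at this
  exact FiniteDimensional.of_injective (inclusion hle).toLinearMap (inclusion hle).injective

theorem EX_normal (t : ℕ) (ht0 : t ≠ 0) (ζ : Ω) (hζ : IsPrimitiveRoot ζ t)
    (Kn : IntermediateField ↥K Ω) (hKn : Kn = adjoin ↥K {ζ}) :
    Normal ↥K ↥(Kn ⊔ adjoin ↥K {x : Ω | x ^ t ∈ Kn}) := by
  haveI := EX_alg K
  haveI := IsAlgClosure.isAlgClosed (R := ℚ_[p]) (K := Ω)
  haveI : IsAlgClosure ↥K Ω := ⟨inferInstance, inferInstance⟩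
  haveI : Normal ↥K Ω := IsAlgClosure.normal ↥K Ω
  rw [normal_iff_forall_map_le]
  intro σ
  have h1 : Kn.map σ ≤ Kn := by
    rw [hKn, adjoin_map, Set.image_singleton, adjoin_le_iff, Set.singleton_subset_iff]
    haveI : NeZero t := ⟨ht0⟩
    obtain ⟨i, -, hi⟩ := hζ.eq_pow_of_pow_eq_one (ξ := σ ζ) (by rw [← map_pow, hζ.pow_eq_one, map_one])
    rw [← hi]
    exact pow_mem (mem_adjoin_simple_self _ _) _
  rw [IntermediateField.map_sup, adjoin_map]
  refine sup_le_sup h1 (adjoin.mono _ _ _ ?_)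
  rintro _ ⟨x, hx, rfl⟩
  change (σ x) ^ t ∈ Kn
  rw [← map_pow]
  exact h1 ⟨_, hx, rfl⟩

end ext

section tame

variable {p : ℕ} [hp : Fact p.Prime] {G A : Type} [Group G] [Finite G] [CommRing A] [IsDomain A]
  [IsDiscreteValuationRing A] [MulSemiringAction G A]
  [CharP (IsLocalRing.ResidueField A) p] [Finite (IsLocalRing.ResidueField A)]

theorem TM_inertia (ϖ : A) (hϖ : Irreducible ϖ)
    (hI : ∀ g : G, (∀ a : A, IsLocalRing.residue A (g • a) = IsLocalRing.residue A a) →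
      (∀ c : A, g • ϖ = ϖ * c → IsLocalRing.residue A c = 1) → g = 1) :
    ¬ p ∣ Nat.card (LF_resAct G A).ker := by
  have hst : ∀ g : G, ϖ ∣ g • ϖ := LF_unif_smul hϖ
  have hker : ∀ g : (LF_resAct G A).ker, ∀ a : A,
      IsLocalRing.residue A ((g : G) • a) = IsLocalRing.residue A a := by
    intro g a
    rw [← LF_resAct_apply, MonoidHom.mem_ker.1 g.2]; rfl
  choose c hc using hst
  have hmul : ∀ g h : (LF_resAct G A).ker, IsLocalRing.residue A (c (g * h : G)) =
      IsLocalRing.residue A (c g) * IsLocalRing.residue A (c h) := by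
    intro g h
    rw [← hker g (c h), ← map_mul]
    congr 1
    apply mul_left_cancel₀ hϖ.ne_zero
    rw [← hc, mul_smul, hc h, smul_mul', hc g, mul_assoc]
  have hone : IsLocalRing.residue A (c 1) = 1 := by
    have : c 1 = 1 := by
      apply mul_left_cancel₀ hϖ.ne_zero
      rw [← hc, one_smul, mul_one]
    rw [this, map_one]
  let θ₀ : (LF_resAct G A).ker →* IsLocalRing.ResidueField A :=
    { toFun := fun g => IsLocalRing.residue A (c g)
      map_one' := hone
      map_mul' := hmul }
  let θ := θ₀.toHomUnits
  have hinj : Function.Injective θ := by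
    rw [injective_iff_map_eq_one]
    intro g hg
    have hg' : IsLocalRing.residue A (c g) = 1 := by
      have := congrArg Units.val hg
      exact this
    apply Subtype.ext
    apply hI _ (hker g)
    intro c' hc'
    have : c' = c g := by
      apply mul_left_cancel₀ hϖ.ne_zero
      rw [← hc', hc]
    rw [this, hg']
  have hdvd := Subgroup.card_dvd_of_injective θ hinj
  haveI := Fintype.ofFinite (IsLocalRing.ResidueField A)
  intro hpd
  have h1 := hpd.trans hdvd
  rw [Nat.card_units] at h1
  obtain ⟨n, -, hn⟩ := FiniteField.card (IsLocalRing.ResidueField A) p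
  rw [Nat.card_eq_fintype_card, hn] at h1
  have h2 : p ∣ p ^ (n : ℕ) := dvd_pow_self p n.pos.ne'
  have h3 := (Nat.dvd_sub_iff_right (Nat.one_le_pow _ _ hp.1.pos) h2).1 h1
  exact hp.1.one_lt.ne' (Nat.dvd_one.1 h3)

theorem TM_m (ϖ : A) (hϖ : Irreducible ϖ)
    (hI : ∀ g : G, (∀ a : A, IsLocalRing.residue A (g • a) = IsLocalRing.residue A a) →
      (∀ c : A, g • ϖ = ϖ * c → IsLocalRing.residue A c = 1) → g = 1)
    (k : Type) [Field k] [Finite k] (φ : k →+* IsLocalRing.ResidueField A)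
    (hφ : ∀ (g : G) (x : k), LF_resAct G A g (φ x) = φ x) (m : ℕ)
    (h : Nat.card (IsLocalRing.ResidueField A) ^ m = Nat.card k ^ Nat.card G) : ¬ p ∣ m := by
  intro hpm
  apply TM_inertia (p := p) ϖ hϖ hI
  refine hpm.trans ?_
  set kA := IsLocalRing.ResidueField A
  let H : Subgroup (RingAut kA) := (LF_resAct G A).range
  haveI : Finite H := by
    exact Finite.of_surjective _ (LF_resAct G A).rangeRestrict_surjective
  haveI := Fintype.ofFinite H
  let S := FixedPoints.subfield H kA
  have hS : ∀ x : k, φ x ∈ S := by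
    rintro x ⟨_, g, rfl⟩
    exact hφ g x
  let ψ : k →+* S := φ.codRestrict S hS
  letI := ψ.toAlgebra
  have e1 : Nat.card S = Nat.card k ^ Module.finrank k S := Module.natCard_eq_pow_finrank
  have e2 : Nat.card kA = Nat.card S ^ Module.finrank S kA := Module.natCard_eq_pow_finrank
  have e3 : Module.finrank S kA = Nat.card H := by
    rw [Nat.card_eq_fintype_card]
    exact FixedPoints.finrank_eq_card H kA
  have e4 : Nat.card G = Nat.card H * Nat.card (LF_resAct G A).ker := by
    rw [Subgroup.card_eq_card_quotient_mul_card_subgroup (LF_resAct G A).ker]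
    congr 1
    exact Nat.card_congr (QuotientGroup.quotientKerEquivRange (LF_resAct G A)).toEquiv
  rw [e2, e1, e3, e4, ← pow_mul, ← pow_mul] at h
  have h5 := Nat.pow_right_injective (Nat.succ_le_of_lt (Finite.one_lt_card (α := k))) h
  have hH : 0 < Nat.card H := Nat.card_pos
  refine ⟨Module.finrank k S, ?_⟩
  apply Nat.eq_of_mul_eq_mul_left hH
  rw [← h5]; ring

end tame

section conc

theorem CC_root_one {A : Type} [CommRing A] [IsDomain A] [IsLocalRing A] (t : ℕ)
    (ht : (t : IsLocalRing.ResidueField A) ≠ 0) (a : A) (ha : a ^ t = 1)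
    (hr : IsLocalRing.residue A a = 1) : a = 1 := by
  have h := mul_geom_sum a t
  rw [ha, sub_self] at h
  rcases mul_eq_zero.1 h with h | h
  · exact sub_eq_zero.1 h
  · exfalso
    apply ht
    have := congrArg (IsLocalRing.residue A) h
    simpa [map_sum, map_pow, hr] using this

variable (p : ℕ) [hp : Fact p.Prime] (K L : Type) [Field K] [Field L] [Algebra ℚ_[p] K]
  [Algebra ℚ_[p] L] [Algebra K L] [IsScalarTower ℚ_[p] K L] [FiniteDimensional ℚ_[p] K]
  [FiniteDimensional ℚ_[p] L]

theorem CC_mem_smul (σ : L ≃ₐ[K] L) (x : L) (hx : x ∈ CF_O p L) : σ x ∈ CF_O p L := by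
  rw [CF_mem] at hx ⊢
  have := spectralNorm_eq_of_equiv (σ.restrictScalars ℚ_[p]) x
  exact (le_of_eq this.symm).trans hx

@[reducible]
noncomputable def CC_act : MulSemiringAction (L ≃ₐ[K] L) (CF_O p L) where
  smul σ x := ⟨σ x, CC_mem_smul p K L σ x x.2⟩
  one_smul x := rfl
  mul_smul σ τ x := rfl
  smul_zero σ := Subtype.ext (map_zero σ)
  smul_add σ x y := Subtype.ext (map_add σ _ _)
  smul_one σ := Subtype.ext (map_one σ)
  smul_mul σ x y := Subtype.ext (map_mul σ _ _)

theorem CC_norm (x : K) : spectralNorm ℚ_[p] L (algebraMap K L x) = spectralNorm ℚ_[p] K x :=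
  (spectralNorm.eq_of_tower x).symm

noncomputable def CC_map : CF_O p K →+* CF_O p L :=
  ((algebraMap K L).comp (CF_O p K).subtype).codRestrict (CF_O p L).toSubring (fun x => by
    change algebraMap K L x ∈ CF_O p L
    rw [CF_mem, CC_norm]
    exact x.2)

theorem CC_map_coe (x : CF_O p K) : ((CC_map p K L x : CF_O p L) : L) = algebraMap K L x := rfl

instance CC_map_local : IsLocalHom (CC_map p K L) := by
  constructor
  intro x hx
  rw [CF_unit_iff, CC_map_coe, CC_norm] at hx
  rwa [CF_unit_iff]

theorem CC_hI [FiniteDimensional K L] (t : ℕ) (ht : ¬ p ∣ t)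
    (hgen : ∀ σ : L ≃ₐ[K] L, (∀ x : L, σ (x ^ t) = x ^ t → σ x = x) → σ = 1)
    (ϖ : CF_O p L) (hϖ : Irreducible ϖ) :
    letI := CC_act p K L
    ∀ g : L ≃ₐ[K] L, (∀ a : CF_O p L, IsLocalRing.residue _ (g • a) = IsLocalRing.residue _ a) →
      (∀ c : CF_O p L, g • ϖ = ϖ * c → IsLocalRing.residue _ c = 1) → g = 1 := by
  letI := CC_act p K L
  haveI := CF_dvr p L
  intro g h1 h2
  obtain ⟨c, hc⟩ := LF_unif_smul hϖ g
  have hcr := h2 c hc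
  have hcu : IsUnit c := by
    rw [← IsLocalRing.residue_ne_zero_iff_isUnit, hcr]; exact one_ne_zero
  obtain ⟨c, rfl⟩ := hcu
  have hϖ0 : (ϖ : L) ≠ 0 := fun h => hϖ.ne_zero (Subtype.ext h)
  apply hgen
  intro x hx
  by_cases hx0 : x = 0
  · rw [hx0, map_zero]
  obtain ⟨z, u, hxu⟩ := LF_unit_zpow (L := L) hϖ (Units.mk0 x hx0)
  change x = ((u : CF_O p L) : L) * (ϖ : L) ^ z at hxu
  let η : (CF_O p L)ˣ := LF_ua g u * u⁻¹ * c ^ z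
  let ι : (CF_O p L)ˣ →* Lˣ := Units.map (algebraMap (CF_O p L) L).toMonoidHom
  have hgx : g x = x * ((ι η : Lˣ) : L) := by
    have e1 : g ((u : CF_O p L) : L) = ((ι (LF_ua g u) : Lˣ) : L) := rfl
    have e2 : g (ϖ : L) = (ϖ : L) * ((ι c : Lˣ) : L) := congrArg Subtype.val hc
    have e3 : ((u : CF_O p L) : L) = ((ι u : Lˣ) : L) := rfl
    rw [hxu, map_mul, map_zpow₀, e1, e2, e3]
    simp only [η, map_mul, map_inv, map_zpow, Units.val_mul, Units.val_inv_eq_inv_val,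
      Units.val_zpow_eq_zpow_val, mul_zpow]
    have := (ι u).ne_zero
    field_simp
  have hη : (η : CF_O p L) ^ t = 1 := by
    have h3 : x ^ t * ((ι η : Lˣ) : L) ^ t = x ^ t := by
      rw [← mul_pow, ← hgx, ← map_pow, hx]
    have h4 : ((ι η : Lˣ) : L) ^ t = 1 := by
      apply mul_left_cancel₀ (pow_ne_zero t hx0)
      rw [h3, mul_one]
    exact Subtype.ext h4
  have hηr : IsLocalRing.residue _ (η : CF_O p L) = 1 := by
    let ρ : (CF_O p L)ˣ →* (IsLocalRing.ResidueField (CF_O p L))ˣ :=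
      Units.map (IsLocalRing.residue (CF_O p L)).toMonoidHom
    have e1 : ρ (LF_ua g u) = ρ u := Units.ext (h1 u)
    have e2 : ρ c = 1 := Units.ext hcr
    have e3 : ρ η = 1 := by
      simp only [η, map_mul, map_inv, map_zpow, e1, e2, one_zpow, mul_inv_cancel, mul_one]
    exact congrArg Units.val e3
  have hη1 := CC_root_one t (CF_t_ne p L t ht) _ hη hηr
  have : ((ι η : Lˣ) : L) = 1 := congrArg Subtype.val hη1
  rw [hgx, this, mul_one]

theorem CC_main [FiniteDimensional K L] [IsGalois K L] (t : ℕ) (ht : ¬ p ∣ t)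
    (hgen : ∀ σ : L ≃ₐ[K] L, (∀ x : L, σ (x ^ t) = x ^ t → σ x = x) → σ = 1)
    (lam : L) (hlam : lam ^ (p - 1) = -(p : L)) (d : ℕ) (hd : d = Module.finrank ℚ_[p] K) :
    Nonempty (LF_M p L ≃ₗ[MonoidAlgebra (ZMod p) (L ≃ₐ[K] L)]
      LF_Mu p L × (Fin d → MonoidAlgebra (ZMod p) (L ≃ₐ[K] L)) × LF_Z p) := by
  letI := CC_act p K L
  haveI := CF_dvr p L
  haveI := CF_henselian p L
  haveI := CF_finite_res p L
  haveI := CF_char_res p L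
  haveI := CF_dvr p K
  haveI := CF_finite_res p K
  obtain ⟨ϖ, hϖ⟩ := IsDiscreteValuationRing.exists_irreducible (CF_O p L)
  obtain ⟨π, hπ⟩ := IsDiscreteValuationRing.exists_irreducible (CF_O p K)
  have hI := CC_hI p K L t ht hgen ϖ hϖ
  have hp1 : p - 1 ≠ 0 := by have := hp.1.two_le; omega
  have hlamO : lam ∈ CF_O p L := by
    rw [CF_mem]
    have h1 := CF_norm_pow p L lam (p - 1)
    rw [hlam, spectralNorm_neg (Algebra.IsAlgebraic.isAlgebraic _), CF_norm_p] at h1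
    rw [← pow_le_one_iff_of_nonneg (spectralNorm_nonneg _) hp1, ← h1]
    exact inv_le_one_of_one_le₀ (by exact_mod_cast hp.1.one_lt.le)
  have hfin : Module.finrank ℚ_[p] L = d * Nat.card (L ≃ₐ[K] L) := by
    rw [IsGalois.card_aut_eq_finrank, hd, Module.finrank_mul_finrank]
  have hcard : ∀ e : ℕ, Associated (ϖ ^ e) (p : CF_O p L) →
      Nat.card (IsLocalRing.ResidueField (CF_O p L)) ^ e = p ^ (d * Nat.card (L ≃ₐ[K] L)) := by
    intro e he
    rw [CF_card_res p L ϖ hϖ e he, hfin]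
  have hκ0 : CC_map p K L π ≠ 0 := by
    intro h
    have h2 : algebraMap K L π = 0 := congrArg Subtype.val h
    rw [map_eq_zero] at h2
    exact hπ.ne_zero (Subtype.ext h2)
  obtain ⟨m, hm⟩ := IsDiscreteValuationRing.associated_pow_irreducible hκ0 hϖ
  obtain ⟨e, he⟩ := IsDiscreteValuationRing.associated_pow_irreducible (CF_p_ne p K) hπ
  have he0 : e ≠ 0 := by
    rintro rfl
    rw [pow_zero, associated_one_iff_isUnit] at he
    exact CF_p_nonunit p K he
  have hcK := CF_card_res p K π hπ e he.symm
  have hme : Associated (ϖ ^ (m * e)) (p : CF_O p L) := by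
    have h1 : Associated (CC_map p K L (p : CF_O p K)) (CC_map p K L (π ^ e)) := he.map _
    rw [map_natCast, map_pow] at h1
    rw [pow_mul]
    exact ((hm.pow_pow (n := e)).symm).trans h1.symm
  have hq : Nat.card (IsLocalRing.ResidueField (CF_O p L)) ^ m =
      Nat.card (IsLocalRing.ResidueField (CF_O p K)) ^ Nat.card (L ≃ₐ[K] L) := by
    have h1 := hcard _ hme
    rw [hd, pow_mul p, ← hcK, pow_mul] at h1
    apply Nat.pow_left_injective he0
    change _ ^ e = _ ^ e
    rw [h1, ← pow_mul, ← pow_mul, mul_comm]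
  have hpm : ¬ p ∣ m := by
    refine TM_m (p := p) ϖ hϖ hI (IsLocalRing.ResidueField (CF_O p K))
      (IsLocalRing.ResidueField.map (CC_map p K L)) ?_ m hq
    intro g x
    obtain ⟨x, rfl⟩ := IsLocalRing.residue_surjective x
    rw [IsLocalRing.ResidueField.map_residue, LF_resAct_apply]
    congr 1
    exact Subtype.ext (g.commutes _)
  exact LF_main (A := CF_O p L) (fun g a => rfl) (CF_p_ne p L) d ϖ hϖ ⟨lam, hlamO⟩
    (Subtype.ext (by
      change lam ^ (p - 1) = -(((p : CF_O p L)) : L)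
      rw [hlam, CF_p_coe])) hI hcard (CC_map p K L π) (fun g => Subtype.ext (g.commutes _)) m hpm
    hm.symm

end conc

theorem stmt_18 (p : ℕ) [hp : Fact p.Prime] (n : ℕ) (hn : 1 ≤ n)
    (Ω : Type) [Field Ω] [Algebra ℚ_[p] Ω] [IsAlgClosure ℚ_[p] Ω]
    (K : IntermediateField ℚ_[p] Ω) [FiniteDimensional ℚ_[p] ↥K]
    (d : ℕ) (hd : d = Module.finrank ℚ_[p] ↥K)
    (ζ : Ω) (hζ : IsPrimitiveRoot ζ (p ^ n - 1))
    (Kn : IntermediateField ↥K Ω) (hKn : Kn = IntermediateField.adjoin ↥K {ζ})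
    (Ln : IntermediateField ↥K Ω)
    (hLn : Ln = Kn ⊔ IntermediateField.adjoin ↥K {x : Ω | x ^ (p ^ n - 1) ∈ Kn}) :
    ∃ e : Additive ((↥Ln)ˣ ⧸ (powMonoidHom p : (↥Ln)ˣ →* (↥Ln)ˣ).range) ≃+
        (Additive ↥(rootsOfUnity p ↥Ln) ×
          (Fin d → MonoidAlgebra (ZMod p) (↥Ln ≃ₐ[↥K] ↥Ln)) × ZMod p),
      ∀ (σ : ↥Ln ≃ₐ[↥K] ↥Ln) (x : (↥Ln)ˣ),
        (((e (Additive.ofMul (QuotientGroup.mk (Units.map (σ : ↥Ln →* ↥Ln) x)))).1.toMul :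
            ↥(rootsOfUnity p ↥Ln)) : (↥Ln)ˣ) =
          Units.map (σ : ↥Ln →* ↥Ln)
            (((e (Additive.ofMul (QuotientGroup.mk x))).1.toMul :
              ↥(rootsOfUnity p ↥Ln)) : (↥Ln)ˣ) ∧
        (∀ i : Fin d,
          (e (Additive.ofMul (QuotientGroup.mk (Units.map (σ : ↥Ln →* ↥Ln) x)))).2.1 i =
            MonoidAlgebra.single σ (1 : ZMod p) *
              (e (Additive.ofMul (QuotientGroup.mk x))).2.1 i) ∧
        (e (Additive.ofMul (QuotientGroup.mk (Units.map (σ : ↥Ln →* ↥Ln) x)))).2.2 =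
          (e (Additive.ofMul (QuotientGroup.mk x))).2.2 := by
  have hpn : 2 ≤ p ^ n := hp.1.two_le.trans (Nat.le_self_pow (by omega) p)
  have ht : ¬ p ∣ p ^ n - 1 := by
    intro h
    have h2 : p ∣ p ^ n := dvd_pow_self p (by omega)
    have h3 := (Nat.dvd_sub_iff_right (by omega) h2).1 h
    exact hp.1.one_lt.ne' (Nat.dvd_one.1 h3)
  have hdiv : p - 1 ∣ p ^ n - 1 := by simpa using Nat.sub_dvd_pow_sub_pow p 1 n
  have ht0 : p ^ n - 1 ≠ 0 := by omega
  have hp1 : p - 1 ≠ 0 := by have := hp.1.two_le; omega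
  generalize p ^ n - 1 = t at hζ hLn ht hdiv ht0
  haveI : FiniteDimensional ↥K ↥Kn := by rw [hKn]; exact EX_fin_Kn K ζ
  haveI hfL : FiniteDimensional ↥K ↥Ln := by rw [hLn]; exact EX_fin_Ln K t ht Kn
  haveI : Normal ↥K ↥Ln := by rw [hLn]; exact EX_normal K t ht0 ζ hζ Kn hKn
  haveI := EX_fin_trans K Ln
  haveI : CharZero ↥K := CF_charZero p ↥K
  haveI : IsGalois ↥K ↥Ln := { }
  have hmem : ∀ x : Ω, x ^ t ∈ Kn → x ∈ Ln := by
    intro x hx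
    rw [hLn]
    exact (le_sup_right : _ ≤ Kn ⊔ IntermediateField.adjoin ↥K {x : Ω | x ^ t ∈ Kn})
      (IntermediateField.subset_adjoin _ _ hx)
  have hgen : ∀ σ : ↥Ln ≃ₐ[↥K] ↥Ln, (∀ x : ↥Ln, σ (x ^ t) = x ^ t → σ x = x) → σ = 1 := by
    intro σ hσ
    let E : IntermediateField ↥K Ω :=
      (IntermediateField.fixedField (Subgroup.zpowers σ)).map Ln.val
    have hE : ∀ x : Ω, ∀ hx : x ∈ Ln, σ ⟨x, hx⟩ = ⟨x, hx⟩ → x ∈ E := by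
      intro x hx h
      refine ⟨⟨x, hx⟩, ?_, rfl⟩
      rintro ⟨τ, hτ⟩
      have hτ2 : Subgroup.zpowers σ ≤ MulAction.stabilizer (↥Ln ≃ₐ[↥K] ↥Ln) (⟨x, hx⟩ : ↥Ln) := by
        rw [Subgroup.zpowers_le]; exact h
      exact hτ2 hτ
    have hζL : ζ ∈ Ln := hmem ζ (by rw [hζ.pow_eq_one]; exact one_mem _)
    have hKnE : Kn ≤ E := by
      rw [hKn, IntermediateField.adjoin_le_iff, Set.singleton_subset_iff]
      apply hE ζ hζL
      apply hσ
      have : (⟨ζ, hζL⟩ : ↥Ln) ^ t = 1 := Subtype.ext hζ.pow_eq_one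
      rw [this, map_one]
    have hfix : ∀ x : ↥Ln, (x : Ω) ∈ E → σ x = x := by
      rintro x ⟨y, hy, hyx⟩
      have : y = x := Subtype.ext hyx
      rw [← this]
      exact hy ⟨σ, Subgroup.mem_zpowers σ⟩
    have hLE : Ln ≤ E := by
      conv_lhs => rw [hLn]
      refine sup_le hKnE ?_
      rw [IntermediateField.adjoin_le_iff]
      intro x hx
      apply hE x (hmem x hx)
      apply hσ
      apply hfix
      exact hKnE hx
    ext x
    exact congrArg Subtype.val (hfix x (hLE x.2))
  haveI := IsAlgClosure.isAlgClosed (R := ℚ_[p]) (K := Ω)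
  obtain ⟨lam, hlam⟩ := IsAlgClosed.exists_pow_nat_eq (-(p : Ω)) (Nat.pos_of_ne_zero hp1)
  have hlamL : lam ∈ Ln := by
    apply hmem
    obtain ⟨s, hs⟩ := hdiv
    rw [hs, pow_mul, hlam]
    exact pow_mem (neg_mem (natCast_mem _ p)) _
  obtain ⟨f⟩ := CC_main p ↥K ↥Ln t ht hgen ⟨lam, hlamL⟩ (Subtype.ext (by simpa using hlam)) d hd
  refine ⟨f.toAddEquiv, ?_⟩
  intro σ x
  have key : f (LF_cl p ↥Ln (Additive.ofMul (LF_ua σ x))) =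
      MonoidAlgebra.single σ (1 : ZMod p) • f (LF_cl p ↥Ln (Additive.ofMul x)) := by
    rw [← map_smul, LF_M_smul]
  have k1 : (f (LF_cl p ↥Ln (Additive.ofMul (LF_ua σ x)))).1 =
      MonoidAlgebra.single σ (1 : ZMod p) • (f (LF_cl p ↥Ln (Additive.ofMul x))).1 :=
    congrArg Prod.fst key
  have k2 : (f (LF_cl p ↥Ln (Additive.ofMul (LF_ua σ x)))).2.1 =
      MonoidAlgebra.single σ (1 : ZMod p) • (f (LF_cl p ↥Ln (Additive.ofMul x))).2.1 :=
    congrArg (fun q => q.2.1) key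
  have k3 : (f (LF_cl p ↥Ln (Additive.ofMul (LF_ua σ x)))).2.2 =
      MonoidAlgebra.single σ (1 : ZMod p) • (f (LF_cl p ↥Ln (Additive.ofMul x))).2.2 :=
    congrArg (fun q => q.2.2) key
  refine ⟨?_, fun i => ?_, ?_⟩
  · have k4 := k1.trans (LF_Mu_smul p (↥Ln ≃ₐ[↥K] ↥Ln) ↥Ln σ _)
    exact congrArg (fun q : Additive ↥(rootsOfUnity p ↥Ln) => ((q.toMul : ↥(rootsOfUnity p ↥Ln)) : (↥Ln)ˣ)) k4
  · exact congrFun k2 i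
  · exact k3.trans (LF_Z_smul p (↥Ln ≃ₐ[↥K] ↥Ln) σ _)
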